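/- arXiv:1109.3682 — 5 statements merged into one kernel-verified Lean document; each statement's English description precedes it below -/
import Mathlib

section
/- p-adic divisibility of moment sums over the affine base: for every m ≥ 1, the algebraic number N_m = Σ_{λ ∈ F_{q^m}^s} ((−1)^n T_m(λ))^k lies in ℤ[ζ_p], and letting 𝔭 be the unique maximal ideal of ℤ[ζ_p] lying over p and ord_q := v_𝔭/((p−1)·a) (so that ord_q(q) = 1, with the convention ord_q(0) = +∞), one has ord_q(N_m) ≥ m·w(Γ). -/
open scoped BigOperators Classical Pointwise

set_option maxHeartbeats 1000000
set_option synthInstance.maxHeartbeats 400000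

noncomputable section

namespace HS

/-- A fixed algebraic closure of the prime field `F_p`. -/
abbrev Omg (p : ℕ) [Fact p.Prime] : Type := AlgebraicClosure (ZMod p)

/-- The absolute trace `Tr_{F_{p^d}/F_p}(y) = ∑_{j<d} y^{p^j}`, read back in `ZMod p`
via the (injective) structure map `ZMod p → Omg p`. -/
def traceZmod (p : ℕ) [Fact p.Prime] (d : ℕ) (y : Omg p) : ZMod p :=
  Function.invFun (algebraMap (ZMod p) (Omg p)) (∑ j ∈ Finset.range d, y ^ p ^ j)

/-- Value of the Laurent monomial `x^μ`. -/
def mon {K : Type} [Field K] {n : ℕ} (x : Fin n → K) (μ : Fin n → ℤ) : K :=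
  ∏ i, x i ^ μ i

/-- Value of the Laurent polynomial `Ḡ(x,t) = f̄(x) + P̄(x,t)`, where `f̄` and `P̄` are given
by their (finitely supported) coefficient functions: for `P̄`, the index `(μ, γ)` records the
`x`-exponent `μ` and the `t`-exponent `γ`. -/
def Gval {K : Type} [Field K] {n s : ℕ} (f : (Fin n → ℤ) →₀ K)
    (P : ((Fin n → ℤ) × (Fin s → ℤ)) →₀ K) (x : Fin n → K) (t : Fin s → K) : K :=
  (f.sum fun μ c => c * mon x μ) + P.sum fun gm c => c * mon x gm.1 * mon t gm.2

/-- View an integral exponent vector as a real vector. -/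
def toR {n : ℕ} (u : Fin n → ℤ) : Fin n → ℝ := fun i => (u i : ℝ)

/-- The Newton polyhedron at infinity `Δ_∞(f̄)`: convex hull of the origin and the
exponent vectors of the monomials of `f̄`. -/
def NewtonPoly {K : Type} [Field K] {n : ℕ} (f : (Fin n → ℤ) →₀ K) : Set (Fin n → ℝ) :=
  convexHull ℝ (insert 0 (toR '' (f.support : Set (Fin n → ℤ))))

/-- The value at `x` of `x_i ∂f̄^σ/∂x_i`, where `f̄^σ` is the sum of the terms of `f̄`
whose exponent vector lies in the face `σ`. -/
def faceSum {K : Type} [Field K] {n : ℕ} (f : (Fin n → ℤ) →₀ K) (σ : Set (Fin n → ℝ))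
    (i : Fin n) (x : Fin n → K) : K :=
  ∑ μ ∈ f.support.filter (fun μ => toR μ ∈ σ), (μ i : K) * f μ * mon x μ

/-- Nondegeneracy of `f̄` with respect to its Newton polyhedron at infinity: for every
closed face (= exposed subset) not containing the origin, the logarithmic partials of
`f̄^σ` have no common zero with all coordinates nonzero. -/
def Nondeg {K : Type} [Field K] {n : ℕ} (f : (Fin n → ℤ) →₀ K) : Prop :=
  ∀ σ : Set (Fin n → ℝ), IsExposed ℝ (NewtonPoly f) σ → σ.Nonempty → (0 : Fin n → ℝ) ∉ σ →
    ¬ ∃ x : Fin n → K, (∀ i, x i ≠ 0) ∧ ∀ i, faceSum f σ i x = 0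

/-- The relative polytope `Γ`: convex hull of the origin and the points `(1/(1-w(μ)))•γ`
for `(μ,γ)` running over the exponents of `P̄`; here `w` is the gauge of `Δ_∞(f̄)`. -/
def relPoly {K : Type} [Field K] {n s : ℕ} (f : (Fin n → ℤ) →₀ K)
    (P : ((Fin n → ℤ) × (Fin s → ℤ)) →₀ K) : Set (Fin s → ℝ) :=
  convexHull ℝ (insert 0 ((fun gm : (Fin n → ℤ) × (Fin s → ℤ) =>
    (1 - gauge (NewtonPoly f) (toR gm.1))⁻¹ • toR gm.2) '' (P.support : Set _)))

/-- Dimension of the smallest linear subspace containing a set. -/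
def dimSpan {s : ℕ} (Γ : Set (Fin s → ℝ)) : ℕ :=
  Module.finrank ℝ (Submodule.span ℝ Γ)

/-- The lattice-normalized `d`-dimensional volume of a rational polytope `Γ`, defined
(Ehrhart-style) as `lim_{m→∞} #(mΓ ∩ ℤ^s)/m^d`.  When `d` is the dimension of the span of
`Γ`, this is the volume of `Γ` computed in that span with respect to the Haar measure
normalized so that a fundamental domain of the lattice has volume 1. -/
def latticeVol {s : ℕ} (Γ : Set (Fin s → ℝ)) (d : ℕ) : ℝ :=
  Filter.limUnder Filter.atTop fun m : ℕ =>
    (Nat.card {u : Fin s → ℤ // toR u ∈ (m : ℝ) • Γ} : ℝ) / (m : ℝ) ^ d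

/-- The cone over a set: union of the rays from the origin through its points. -/
def coneOf {s : ℕ} (Γ : Set (Fin s → ℝ)) : Set (Fin s → ℝ) :=
  {v | ∃ c : ℝ, 0 ≤ c ∧ ∃ γ ∈ Γ, v = c • γ}

/-- `w(Γ) = min { w_Γ(u) : u ∈ ℤ^s ∩ Cone(Γ), all coordinates of u ≥ 1 }`,
where `w_Γ` is the gauge of `Γ`. -/
def wMin {s : ℕ} (Γ : Set (Fin s → ℝ)) : ℝ :=
  sInf {r : ℝ | ∃ u : Fin s → ℤ, (∀ i, (1 : ℤ) ≤ u i) ∧ toR u ∈ coneOf Γ ∧ r = gauge Γ (toR u)}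

/-- The cyclotomic field `ℚ(ζ)` inside `ℂ`. -/
def cyclo (ζ : ℂ) : Subfield ℂ := Subfield.closure {ζ}

/-- The toric exponential sum `∑_{x ∈ (F_{p^d}^×)^n} Θ(Tr(Ḡ(x,t)))`. -/
def torSum (p : ℕ) [Fact p.Prime] {n s : ℕ} (Θ : AddChar (ZMod p) ℂ)
    (f : (Fin n → ℤ) →₀ Omg p) (P : ((Fin n → ℤ) × (Fin s → ℤ)) →₀ Omg p)
    (d : ℕ) (t : Fin s → Omg p) : ℂ :=
  ∑ᶠ (x : Fin n → Omg p) (_ : ∀ i, x i ^ p ^ d = x i ∧ x i ≠ 0),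
    Θ (traceZmod p d (Gval f P x t))

/-- `N_m` for the `k`-th tensor power family over the torus `G_m^s`. -/
def Ntor (p a : ℕ) [Fact p.Prime] {n s : ℕ} (Θ : AddChar (ZMod p) ℂ)
    (f : (Fin n → ℤ) →₀ Omg p) (P : ((Fin n → ℤ) × (Fin s → ℤ)) →₀ Omg p)
    (k m : ℕ) : ℂ :=
  ∑ᶠ (t : Fin s → Omg p) (_ : ∀ j, t j ^ p ^ (a * m) = t j ∧ t j ≠ 0),
    ((-1 : ℂ) ^ n * torSum p Θ f P (a * m) t) ^ k

/-- `N_m` for the `k`-th tensor power family over the affine base `A^s`. -/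
def Naff (p a : ℕ) [Fact p.Prime] {n s : ℕ} (Θ : AddChar (ZMod p) ℂ)
    (f : (Fin n → ℤ) →₀ Omg p) (P : ((Fin n → ℤ) × (Fin s → ℤ)) →₀ Omg p)
    (k m : ℕ) : ℂ :=
  ∑ᶠ (t : Fin s → Omg p) (_ : ∀ j, t j ^ p ^ (a * m) = t j),
    ((-1 : ℂ) ^ n * torSum p Θ f P (a * m) t) ^ k

/-- The `𝔭`-adic valuation of an algebraic number `x` lying in the ring of integers of a
subfield `F ⊆ ℂ`: the largest `t` with `x ∈ 𝔭^t`. -/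
def ordIn (F : Subfield ℂ) (Pid : Ideal (NumberField.RingOfIntegers F)) (x : ℂ) : ℕ :=
  sSup {t : ℕ | ∃ y : NumberField.RingOfIntegers F,
    ((algebraMap (NumberField.RingOfIntegers F) F y : F) : ℂ) = x ∧ y ∈ Pid ^ t}

/-- The `𝔭`-adic valuation on a subring of `ℂ`. -/
def ordSub (R0 : Subring ℂ) (Pid : Ideal R0) (x : ℂ) : ℕ :=
  sSup {t : ℕ | ∃ y : R0, (y : ℂ) = x ∧ y ∈ Pid ^ t}

/-- The degree `[F_q(λ):F_q]` of a point `λ ∈ F̄_q^s`, where `q = p^a`. -/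
def degOf (p a : ℕ) [Fact p.Prime] {s : ℕ} (lam : Fin s → Omg p) : ℕ :=
  sInf {d : ℕ | 0 < d ∧ ∀ j, lam j ^ p ^ (a * d) = lam j}

/-!
Over `F = 𝔽_{q^m}`, of cardinality `p ^ d` with `d = a * m`, expand the additive character `ψ` in
powers of a Teichmüller character `ω`. The coefficients are essentially Gauss sums, and by
Stickelberger that of `ω ^ r` is divisible by `π = ζ - 1` to the power the digit sum of `r`. The
`k`-th power of the exponential sum is a sum, over `k`-tuples of points of the torus, of values of
`ψ` at polynomials in `t` with the same `t`-exponents as `P̄`. Summing over `t` kills every term of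
the expansion except those where the exponent of each `t j` is divisible by `p ^ d - 1`. After
division by `p ^ d - 1` these exponents form a lattice point of a multiple of `Γ`; convexity of `Γ`,
averaged over the cyclic rotations of the base-`p` digits, bounds the total digit sum below by
`d * (p - 1) * w(Γ)`.

The Teichmüller character takes its values in a valuation ring of `ℂ` dominating `ℤ[ζ]` at `𝔭`. As
`𝔭` is generated by `ζ - 1`, divisibility by powers of `ζ - 1` descends from that ring to `ℤ[ζ]`.
-/

/-! ### Gauss sums and the Stickelberger bound -/

theorem sum_univ_eq_add_sum_units {K M : Type*} [Field K] [Fintype K] [AddCommMonoid M]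
    (g : K → M) : ∑ y, g y = g 0 + ∑ y : Kˣ, g y := by
  rw [Fintype.sum_eq_add_sum_subtype_ne g 0, ← unitsEquivNeZero.sum_comp]
  rfl

theorem addChar_sum_eq_prod {A M α : Type*} [AddCommMonoid A] [CommMonoid M] (ψ : AddChar A M)
    (S : Finset α) (g : α → A) : ψ (∑ i ∈ S, g i) = ∏ i ∈ S, ψ (g i) :=
  map_prod ψ.toMonoidHom (fun i => Multiplicative.ofAdd (g i)) S

theorem choose_prime_pow_modEq_div (p : ℕ) [Fact p.Prime] (r j : ℕ) :
    r.choose (p ^ j) ≡ r / p ^ j [MOD p] := by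
  induction j generalizing r with
  | zero => simpa using Nat.ModEq.refl r
  | succ j ih =>
    have h := Choose.choose_modEq_choose_mod_mul_choose_div_nat (n := r) (k := p ^ (j + 1)) (p := p)
    rw [pow_succ, Nat.mul_mod_left, Nat.choose_zero_right, one_mul,
      Nat.mul_div_cancel _ (Fact.out : p.Prime).pos] at h
    rw [pow_succ, mul_comm, ← Nat.div_div_eq_div_mul, mul_comm]
    exact h.trans (ih _)

section FiniteFieldSums

variable {F : Type*} [Field F] [Fintype F]

theorem sum_pow_eq_ite {i : ℕ} (hi : i ≠ 0) :
    ∑ x : F, x ^ i = if Fintype.card F - 1 ∣ i then -1 else 0 := by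
  rw [sum_univ_eq_add_sum_units, zero_pow hi, zero_add, FiniteField.sum_pow_units]

theorem sum_pow_mul_one_sub_pow {a b : ℕ} (ha : a < Fintype.card F - 1)
    (hab : b < Fintype.card F - 1 + a) :
    ∑ x : F, x ^ (Fintype.card F - 1 - a) * (1 - x) ^ b = (-1) ^ (a + 1) * (b.choose a : F) := by
  have expand (x : F) : x ^ (Fintype.card F - 1 - a) * (1 - x) ^ b =
      ∑ i ∈ Finset.range (b + 1),
        (-1) ^ i * (b.choose i : F) * x ^ (i + (Fintype.card F - 1 - a)) := by
    rw [sub_eq_neg_add, add_pow, Finset.mul_sum]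
    refine Finset.sum_congr rfl fun i _ => ?_
    rw [one_pow, neg_pow, pow_add]
    ring
  have dvd_iff {i : ℕ} (hi : i ∈ Finset.range (b + 1)) :
      Fintype.card F - 1 ∣ i + (Fintype.card F - 1 - a) ↔ i = a := by
    rw [Finset.mem_range] at hi
    refine ⟨fun h => ?_, fun h => by rw [h, Nat.add_sub_cancel' ha.le]⟩
    have := Nat.eq_of_dvd_of_lt_two_mul (by omega) h (by omega)
    omega
  simp_rw [expand]
  rw [Finset.sum_comm]
  simp_rw [← Finset.mul_sum,
    sum_pow_eq_ite (F := F) (Nat.add_pos_right _ (Nat.sub_pos_of_lt ha)).ne']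
  rw [Finset.sum_congr rfl fun i hi => by rw [if_congr (dvd_iff hi) rfl rfl]]
  simp only [mul_ite, mul_zero, Finset.sum_ite_eq', Finset.mem_range]
  split_ifs with h
  · ring
  · rw [Nat.choose_eq_zero_of_lt (by omega), Nat.cast_zero, mul_zero]

end FiniteFieldSums

/-- The sum of the `d` lowest base-`p` digits of `r`. -/
def digitSum (p d r : ℕ) : ℕ := ∑ j ∈ Finset.range d, r / p ^ j % p

theorem digitSum_le (p d r : ℕ) [NeZero p] : digitSum p d r ≤ d * (p - 1) := by
  simpa [digitSum] using Finset.sum_le_card_nsmul (Finset.range d) _ (p - 1)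
    fun j _ => Nat.le_sub_one_of_lt (Nat.mod_lt (r / p ^ j) (NeZero.pos p))

theorem dvd_gaussSum {F V : Type*} [Field F] [Fintype F] [CommRing V] [IsDomain V] {χ : MulChar F V}
    {ψ : AddChar F V} {π : V} (hχ : χ ≠ 1) (hψ : ∀ y, π ∣ ψ y - 1) :
    π ∣ gaussSum χ ψ := by
  have h : gaussSum χ ψ = ∑ y, χ y * (ψ y - 1) := by
    simp only [mul_sub, mul_one, Finset.sum_sub_distrib, MulChar.sum_eq_zero_of_ne_one hχ, sub_zero,
      gaussSum]
  rw [h]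
  exact Finset.dvd_sum fun y _ => (hψ y).mul_left _

section Teichmuller

open IsLocalRing

variable {F V : Type*} [Field F] [CommRing V] [IsLocalRing V]

/-- `ω` is a Teichmüller character for the embedding `ι` of the field `F` into the residue field
of the local ring `V`: its values lift those of `ι`. -/
def IsTeichmuller (ω : MulChar F V) (ι : F →+* ResidueField V) : Prop :=
  ∀ y, residue V (ω y) = ι y

/-- The coefficient of `ω ^ r` in the expansion of an additive character `ψ` in the powers
`ω ^ r`, `r < #F`. With `q = #F`, Fourier inversion on `Fˣ` determines it for `0 < r < q - 1`; the
values at `r = 0` and `r = q - 1` make the expansion valid at `0` as well, where `0 ^ 0 = 1`. -/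
def teichmullerCoeff [Fintype F] (ω : MulChar F V) (ψ : AddChar F V) (r : ℕ) : V :=
  if r = 0 then 1
  else Ring.inverse ((Fintype.card F : V) - 1) * gaussSum (ω⁻¹ ^ r) ψ -
    if r = Fintype.card F - 1 then 1 else 0

theorem isUnit_card_sub_one [Fintype F] (ι : F →+* ResidueField V) :
    IsUnit ((Fintype.card F : V) - 1) := by
  rw [← residue_ne_zero_iff_isUnit, map_sub, map_natCast, map_one, ← map_natCast ι,
    FiniteField.cast_card_eq_zero, map_zero, zero_sub]
  exact neg_ne_zero.2 one_ne_zero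

namespace IsTeichmuller

variable {ω : MulChar F V} {ι : F →+* ResidueField V}

theorem injective (hω : IsTeichmuller ω ι) : Function.Injective ω := fun x y h =>
  ι.injective <| by rw [← hω, ← hω, h]

variable [Fintype F]

theorem pow_ne_one (hω : IsTeichmuller ω ι) {r : ℕ} (hr : ¬ Fintype.card F - 1 ∣ r) :
    ω ^ r ≠ 1 := by
  refine fun h => hr <| (FiniteField.forall_pow_eq_one_iff F r).1 fun x =>
    Units.ext <| hω.injective ?_
  rw [Units.val_pow_eq_pow_val, map_pow, ← MulChar.pow_apply_coe, h, MulChar.one_apply_coe,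
    Units.val_one, map_one]

theorem inv_pow_ne_one (hω : IsTeichmuller ω ι) {r : ℕ} (hr0 : r ≠ 0)
    (hr : r < Fintype.card F - 1) : ω⁻¹ ^ r ≠ 1 := by
  rw [inv_pow, Ne, inv_eq_one]
  exact hω.pow_ne_one (Nat.not_dvd_of_pos_of_lt (Nat.pos_of_ne_zero hr0) hr)

theorem residue_inv_pow_apply (hω : IsTeichmuller ω ι) {a : ℕ}
    (ha : a < Fintype.card F - 1) (y : F) :
    residue V ((ω⁻¹ ^ a) y) = ι (y ^ (Fintype.card F - 1 - a)) := by
  rcases eq_or_ne y 0 with rfl | hy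
  · rw [MulChar.map_zero, map_zero, zero_pow (by omega), map_zero]
  · have hcancel : y ^ (Fintype.card F - 1 - a) * y ^ a = 1 := by
      rw [← pow_add, Nat.sub_add_cancel ha.le, FiniteField.pow_card_sub_one_eq_one y hy]
    have hpow : (ω⁻¹ ^ a) y = ω⁻¹ y ^ a := MulChar.pow_apply_coe _ a (Units.mk0 y hy)
    rw [hpow, MulChar.inv_apply', map_pow, hω, ← map_pow, inv_pow,
      eq_inv_of_mul_eq_one_left hcancel]

theorem residue_jacobiSum (hω : IsTeichmuller ω ι) {a b : ℕ} (ha : a < Fintype.card F - 1)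
    (hb : b < Fintype.card F - 1) (hab : a + b ≠ 0) :
    residue V (jacobiSum (ω⁻¹ ^ a) (ω⁻¹ ^ b)) =
      (-1) ^ (a + 1) * ((Fintype.card F - 1 - b).choose a : ResidueField V) := by
  simp_rw [jacobiSum, map_sum, map_mul, hω.residue_inv_pow_apply ha, hω.residue_inv_pow_apply hb,
    ← map_mul, ← map_sum]
  rw [sum_pow_mul_one_sub_pow ha (by omega)]
  simp only [map_mul, map_pow, map_neg, map_one, map_natCast]

theorem isUnit_jacobiSum (hω : IsTeichmuller ω ι) (p : ℕ) [Fact p.Prime] [CharP F p] {d : ℕ}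
    (hcard : Fintype.card F = p ^ d) {r j : ℕ} (hr : p ^ j + r < Fintype.card F - 1)
    (hdvd : ¬ p ∣ r / p ^ j + 1) : IsUnit (jacobiSum (ω⁻¹ ^ p ^ j) (ω⁻¹ ^ r)) := by
  have hp : p.Prime := Fact.out
  have : CharP (ResidueField V) p := charP_of_injective_ringHom ι.injective p
  have hj : j < d := (Nat.pow_lt_pow_iff_right hp.one_lt).1 (by omega)
  have hquot : (Fintype.card F - 1 - r) / p ^ j = p ^ (d - j) - (r / p ^ j + 1) := by
    have hsplit : Fintype.card F = p ^ j * p ^ (d - j) := by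
      rw [hcard, ← pow_add, Nat.add_sub_cancel' hj.le]
    rw [Nat.sub_sub, add_comm 1, hsplit, Nat.mul_sub_div _ _ _ (by omega)]
  have hpj : 0 < p ^ j := pow_pos hp.pos j
  rw [← residue_ne_zero_iff_isUnit, hω.residue_jacobiSum (by omega) (by omega) (by omega)]
  refine mul_ne_zero (pow_ne_zero _ (neg_ne_zero.2 one_ne_zero)) ?_
  rw [Ne, CharP.cast_eq_zero_iff _ p, (choose_prime_pow_modEq_div p _ j).dvd_iff dvd_rfl, hquot]
  refine fun h => hdvd ((Nat.dvd_sub_iff_right ?_ (dvd_pow_self p (by omega))).1 h)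
  have : r / p ^ j < p ^ (d - j) := by
    rw [Nat.div_lt_iff_lt_mul hpj, ← pow_add, Nat.sub_add_cancel hj.le]
    omega
  omega

variable [IsDomain V] {ψ : AddChar F V} {π : V}

theorem pow_succ_dvd_gaussSum (hω : IsTeichmuller ω ι) (hψ : ∀ y, π ∣ ψ y - 1) (p : ℕ)
    [Fact p.Prime] [CharP F p] {d : ℕ} (hcard : Fintype.card F = p ^ d) {r j n : ℕ}
    (hr : p ^ j + r < Fintype.card F - 1) (hdvd : ¬ p ∣ r / p ^ j + 1)
    (h : π ^ n ∣ gaussSum (ω⁻¹ ^ r) ψ) : π ^ (n + 1) ∣ gaussSum (ω⁻¹ ^ (p ^ j + r)) ψ := by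
  have hpj : p ^ j ≠ 0 := pow_ne_zero j (Fact.out : p.Prime).ne_zero
  have hprod := jacobiSum_mul_nontrivial (χ := ω⁻¹ ^ p ^ j) (φ := ω⁻¹ ^ r)
    (by rw [← pow_add]; exact hω.inv_pow_ne_one (by omega) hr) ψ
  rw [← (hω.isUnit_jacobiSum p hcard hr hdvd).dvd_mul_right, pow_add ω⁻¹, hprod, pow_succ']
  exact mul_dvd_mul (dvd_gaussSum (hω.inv_pow_ne_one hpj (by omega)) hψ) h

/-- One direction of Stickelberger's theorem: the digits of `r` are built up one unit at a time,
each unit costing a factor `π` because the Jacobi sum relating two consecutive Gauss sums is a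
unit. -/
theorem pow_digitSum_dvd_gaussSum (hω : IsTeichmuller ω ι) (hψ : ∀ y, π ∣ ψ y - 1) (p : ℕ)
    [Fact p.Prime] [CharP F p] {d : ℕ} (hcard : Fintype.card F = p ^ d) {r : ℕ}
    (hr : r < Fintype.card F - 1) : π ^ digitSum p d r ∣ gaussSum (ω⁻¹ ^ r) ψ := by
  have hp : 0 < p := (Fact.out : p.Prime).pos
  suffices ∀ i, π ^ digitSum p i r ∣ gaussSum (ω⁻¹ ^ (r % p ^ i)) ψ by
    simpa only [Nat.mod_eq_of_lt (show r < p ^ d by omega)] using this d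
  intro i
  induction i with
  | zero => simp [digitSum]
  | succ i ih =>
    have hpi : 0 < p ^ i := pow_pos hp i
    have hle : r % p ^ (i + 1) ≤ r := Nat.mod_le _ _
    have hlt : r / p ^ i % p < p := Nat.mod_lt _ hp
    rw [Nat.mod_pow_succ] at hle ⊢
    rw [digitSum, Finset.sum_range_succ, ← digitSum]
    generalize r / p ^ i % p = c at hle hlt
    induction c with
    | zero => simpa using ih
    | succ c ihc =>
      have hsucc : r % p ^ i + p ^ i * (c + 1) = p ^ i + (r % p ^ i + p ^ i * c) := by ring
      rw [hsucc] at hle ⊢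
      refine hω.pow_succ_dvd_gaussSum hψ p hcard (by omega) ?_ (ihc (by omega) (by omega))
      rw [Nat.add_mul_div_left _ _ hpi, Nat.div_eq_of_lt (Nat.mod_lt _ hpi), zero_add]
      exact Nat.not_dvd_of_pos_of_lt c.succ_pos hlt

theorem sum_inv_pow_mul_pow (hω : IsTeichmuller ω ι) {y : F} (hy : y ≠ 0) (z : F) :
    ∑ i ∈ Finset.range (Fintype.card F - 1), (ω⁻¹ ^ (i + 1)) z * ω y ^ (i + 1) =
      if z = y then (Fintype.card F : V) - 1 else 0 := by
  have hterm (i : ℕ) : (ω⁻¹ ^ (i + 1)) z * ω y ^ (i + 1) = ω (z⁻¹ * y) ^ (i + 1) := by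
    rw [MulChar.pow_apply' _ i.succ_ne_zero, MulChar.inv_apply', ← mul_pow, ← map_mul]
  simp_rw [hterm]
  split_ifs with hzy
  · simp [hzy, hy, Nat.cast_sub Fintype.card_pos]
  rcases eq_or_ne z 0 with rfl | hz
  · simp [MulChar.map_zero]
  have hne : ω (z⁻¹ * y) ≠ 1 := fun h => hzy <| (inv_mul_eq_one₀ hz).1 <|
    hω.injective (h.trans (map_one ω).symm)
  have hpow : ω (z⁻¹ * y) ^ (Fintype.card F - 1) = 1 := by
    rw [← map_pow, FiniteField.pow_card_sub_one_eq_one _ (mul_ne_zero (inv_ne_zero hz) hy), map_one]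
  have hgeom := geom_sum_mul (ω (z⁻¹ * y)) (Fintype.card F - 1)
  rw [hpow, sub_self, mul_eq_zero, or_iff_left (sub_ne_zero.2 hne)] at hgeom
  simp_rw [pow_succ, ← Finset.sum_mul, hgeom, zero_mul]

theorem sum_gaussSum_mul_pow (hω : IsTeichmuller ω ι) (ψ : AddChar F V) {y : F} (hy : y ≠ 0) :
    ∑ i ∈ Finset.range (Fintype.card F - 1), gaussSum (ω⁻¹ ^ (i + 1)) ψ * ω y ^ (i + 1) =
      ((Fintype.card F : V) - 1) * ψ y := by
  simp_rw [gaussSum, Finset.sum_mul]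
  rw [Finset.sum_comm]
  simp_rw [mul_right_comm _ (ψ _), ← Finset.sum_mul, hω.sum_inv_pow_mul_pow hy, ite_mul, zero_mul]
  simp

theorem sum_teichmullerCoeff_mul_pow (hω : IsTeichmuller ω ι) (ψ : AddChar F V) (y : F) :
    ∑ r ∈ Finset.range (Fintype.card F), teichmullerCoeff ω ψ r * ω y ^ r = ψ y := by
  have hcard : 1 < Fintype.card F := Fintype.one_lt_card
  rw [← Nat.sub_add_cancel hcard.le, Finset.sum_range_succ']
  rcases eq_or_ne y 0 with rfl | hy
  · simp [teichmullerCoeff, MulChar.map_zero]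
  have hpow : ω y ^ (Fintype.card F - 1) = 1 := by
    rw [← map_pow, FiniteField.pow_card_sub_one_eq_one y hy, map_one]
  have hlast : ∑ i ∈ Finset.range (Fintype.card F - 1),
      (if i + 1 = Fintype.card F - 1 then 1 else 0) * ω y ^ (i + 1) = 1 := by
    rw [Finset.sum_eq_single_of_mem (Fintype.card F - 2) (Finset.mem_range.2 (by omega))
      fun i _ hi => by rw [if_neg (by omega), zero_mul], if_pos (by omega), one_mul,
      show Fintype.card F - 2 + 1 = Fintype.card F - 1 by omega, hpow]
  simp only [teichmullerCoeff, Nat.succ_ne_zero, if_false, if_true,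
    sub_mul (Ring.inverse _ * _), Finset.sum_sub_distrib, hlast, pow_zero, mul_one, sub_add_cancel,
    mul_assoc, ← Finset.mul_sum, hω.sum_gaussSum_mul_pow ψ hy]
  rw [← mul_assoc, Ring.inverse_mul_cancel _ (isUnit_card_sub_one ι), one_mul]

theorem pow_digitSum_dvd_teichmullerCoeff (hω : IsTeichmuller ω ι) (hψ : ∀ y, π ∣ ψ y - 1) (p : ℕ)
    [Fact p.Prime] [CharP F p] (hπ : π ^ (p - 1) ∣ (p : V)) {d : ℕ}
    (hcard : Fintype.card F = p ^ d) {r : ℕ} (hr : r < Fintype.card F) :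
    π ^ digitSum p d r ∣ teichmullerCoeff ω ψ r := by
  rcases eq_or_ne r 0 with rfl | h0
  · simp [digitSum]
  rcases eq_or_ne r (Fintype.card F - 1) with rfl | hlast
  · have hdvd : π ^ digitSum p d (Fintype.card F - 1) ∣ (Fintype.card F : V) := by
      rw [hcard, Nat.cast_pow]
      refine (pow_dvd_pow π (digitSum_le p d _)).trans ?_
      rw [pow_mul']
      exact pow_dvd_pow_of_dvd hπ d
    have hinv := Ring.inverse_mul_cancel _ (isUnit_card_sub_one ι)
    have hone : ω⁻¹ ^ (Fintype.card F - 1) = 1 := by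
      rw [← Fintype.card_units, MulChar.pow_card_eq_one]
    rw [teichmullerCoeff, if_neg h0, if_pos rfl, hone]
    rcases eq_or_ne ψ 1 with rfl | hψ1
    · rw [gaussSum_one_one, Nat.card_eq_fintype_card, Fintype.card_units,
        Nat.cast_sub Fintype.card_pos, Nat.cast_one, hinv, sub_self]
      exact dvd_zero _
    · have hcoeff : Ring.inverse ((Fintype.card F : V) - 1) * -1 - 1 =
          -Ring.inverse ((Fintype.card F : V) - 1) * (Fintype.card F : V) := by
        linear_combination hinv
      rw [gaussSum_one_left hψ1, hcoeff]
      exact hdvd.mul_left _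
  · rw [teichmullerCoeff, if_neg h0, if_neg hlast, sub_zero]
    exact (hω.pow_digitSum_dvd_gaussSum hψ p hcard (by omega)).mul_left _

theorem sum_apply_pow_eq_zero (hω : IsTeichmuller ω ι) {e : ℕ} (he : ¬ Fintype.card F - 1 ∣ e) :
    ∑ y, ω y ^ e = 0 := by
  have he0 : e ≠ 0 := fun h => he (h ▸ dvd_zero _)
  simp_rw [← MulChar.pow_apply' ω he0]
  exact MulChar.sum_eq_zero_of_ne_one (hω.pow_ne_one he)

variable {σ κ : Type*} [Fintype σ] [Fintype κ]

theorem addChar_sum_mul_monomial_eq (hω : IsTeichmuller ω ι) (ψ : AddChar F V) (B : κ → σ → ℕ)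
    (b : κ → F) (t : σ → F) :
    ψ (∑ i, b i * ∏ j, t j ^ B i j) =
      ∑ r ∈ Fintype.piFinset fun _ : κ => Finset.range (Fintype.card F),
        (∏ i, teichmullerCoeff ω ψ (r i) * ω (b i) ^ r i) * ∏ j, ω (t j) ^ ∑ i, r i * B i j := by
  rw [addChar_sum_eq_prod]
  simp_rw [← hω.sum_teichmullerCoeff_mul_pow ψ, Finset.prod_univ_sum]
  refine Finset.sum_congr rfl fun r _ => ?_
  simp_rw [← Finset.prod_pow_eq_pow_sum, map_mul, map_prod, map_pow, mul_pow, ← mul_assoc,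
    ← Finset.prod_pow]
  rw [Finset.prod_mul_distrib, Finset.prod_comm (s := Finset.univ (α := σ))]
  simp_rw [← pow_mul, mul_comm (B _ _)]

/-- The terms of the expanded sum that survive the summation over `t` are those whose exponents
are all divisible by `q - 1`; a vanishing exponent contributes a factor `q`. -/
theorem pow_dvd_sum_addChar_sum_mul_monomial [DecidableEq σ] (hω : IsTeichmuller ω ι)
    (hψ : ∀ y, π ∣ ψ y - 1) (p : ℕ) [Fact p.Prime] [CharP F p] (hπ : π ^ (p - 1) ∣ (p : V)) {d : ℕ}
    (hcard : Fintype.card F = p ^ d) {B : κ → σ → ℕ} {T : ℕ}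
    (hT : ∀ r : κ → ℕ, (∀ i, r i < p ^ d) → (∀ j, p ^ d - 1 ∣ ∑ i, r i * B i j) →
      T ≤ ∑ i, digitSum p d (r i) + d * (p - 1) * Finset.card {j | ∑ i, r i * B i j = 0})
    (b : κ → F) : π ^ T ∣ ∑ t : σ → F, ψ (∑ i, b i * ∏ j, t j ^ B i j) := by
  simp_rw [hω.addChar_sum_mul_monomial_eq]
  rw [Finset.sum_comm]
  refine Finset.dvd_sum fun r hr => ?_
  replace hr (i : κ) : r i < Fintype.card F := Finset.mem_range.1 (Fintype.mem_piFinset.1 hr i)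
  rw [← Finset.mul_sum, ← Fintype.piFinset_univ,
    ← Finset.prod_univ_sum (fun _ => Finset.univ) fun j y => ω y ^ ∑ i, r i * B i j]
  by_cases hdvd : ∀ j, p ^ d - 1 ∣ ∑ i, r i * B i j
  · refine (pow_dvd_pow π (hT r (fun i => hcard ▸ hr i) hdvd)).trans ?_
    rw [pow_add, ← Finset.prod_pow_eq_pow_sum, pow_mul, ← Finset.prod_const, Finset.prod_filter]
    refine mul_dvd_mul (Finset.prod_dvd_prod_of_dvd _ _ fun i _ =>
      (hω.pow_digitSum_dvd_teichmullerCoeff hψ p hπ hcard (hr i)).mul_right _)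
      (Finset.prod_dvd_prod_of_dvd _ _ fun j _ => ?_)
    split_ifs with h0
    · simpa [h0, hcard, pow_mul'] using pow_dvd_pow_of_dvd hπ d
    · exact one_dvd _
  · obtain ⟨j, hj⟩ := not_forall.1 hdvd
    rw [Finset.prod_eq_zero (Finset.mem_univ j) (hω.sum_apply_pow_eq_zero (hcard ▸ hj)), mul_zero]
    exact dvd_zero _

end IsTeichmuller

end Teichmuller

theorem dvd_sum_pow_sum_addChar {A V X τ κ : Type*} [CommRing A] [CommRing V] [Fintype X]
    [Fintype τ] [Fintype κ] (ψ : AddChar A V) {c : V} (M : τ → κ → A)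
    (hM : ∀ b : κ → A, c ∣ ∑ t, ψ (∑ i, b i * M t i)) (h : X → A) (b : X → κ → A) (k : ℕ) :
    c ∣ ∑ t, (∑ x, ψ (h x + ∑ i, b x i * M t i)) ^ k := by
  have hprod (x : Fin k → X) (t : τ) :
      ∏ l, ψ (h (x l) + ∑ i, b (x l) i * M t i) =
        ψ (∑ l, h (x l)) * ψ (∑ i, (∑ l, b (x l) i) * M t i) := by
    rw [← addChar_sum_eq_prod, Finset.sum_add_distrib, Finset.sum_comm, AddChar.map_add_eq_mul]
    simp_rw [Finset.sum_mul]
  simp_rw [Fintype.sum_pow, hprod]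
  rw [Finset.sum_comm]
  simp_rw [← Finset.mul_sum]
  exact Finset.dvd_sum fun x _ => (hM _).mul_left _

/-! ### Digit rotations and the weight function -/

section DigitShift

variable (p : ℕ) {d : ℕ}

theorem sum_digit_mul_pow (d r : ℕ) :
    ∑ j ∈ Finset.range d, r / p ^ j % p * p ^ j = r % p ^ d := by
  induction d with
  | zero => simp [Nat.mod_one]
  | succ d ih => rw [Finset.sum_range_succ, ih, Nat.mod_pow_succ, mul_comm (p ^ d)]

/-- The number whose `d` base-`p` digits are the lowest `d` digits of `r`, rotated by `l` places. -/
def digitShift (l : Fin d) (r : ℕ) : ℕ :=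
  ∑ j : Fin d, r / p ^ (j : ℕ) % p * p ^ ((j + l : Fin d) : ℕ)

theorem sum_digitShift_mul [NeZero p] [NeZero d] (r : ℕ) :
    (∑ l : Fin d, digitShift p l r) * (p - 1) = digitSum p d r * (p ^ d - 1) := by
  have hrot (j : Fin d) : ∑ l : Fin d, p ^ ((j + l : Fin d) : ℕ) = ∑ i ∈ Finset.range d, p ^ i := by
    rw [Finset.sum_range]
    exact Equiv.sum_comp (Equiv.addLeft j) fun l : Fin d => p ^ (l : ℕ)
  simp_rw [digitShift]
  rw [Finset.sum_comm]
  simp_rw [← Finset.mul_sum, hrot, ← Finset.sum_mul, mul_assoc,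
    geom_sum_mul_of_one_le (NeZero.one_le (n := p))]
  rw [digitSum, Finset.sum_range]

theorem pow_mod_modEq [NeZero p] (e : ℕ) : p ^ (e % d) ≡ p ^ e [MOD p ^ d - 1] := by
  have hone : p ^ d ≡ 1 [MOD p ^ d - 1] :=
    ((Nat.modEq_iff_dvd' (Nat.one_le_pow d p (NeZero.pos p))).2 dvd_rfl).symm
  conv_rhs => rw [← Nat.mod_add_div e d, pow_add, pow_mul]
  simpa using ((hone.pow (e / d)).mul_left (p ^ (e % d))).symm

theorem digitShift_modEq [NeZero p] (l : Fin d) {r : ℕ} (hr : r < p ^ d) :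
    digitShift p l r ≡ p ^ (l : ℕ) * r [MOD p ^ d - 1] := by
  conv_rhs => rw [← Nat.mod_eq_of_lt hr, ← sum_digit_mul_pow, Finset.mul_sum, Finset.sum_range]
  refine Nat.ModEq.sum fun j _ => ?_
  rw [mul_left_comm, ← pow_add, add_comm (l : ℕ), Fin.val_add]
  exact (pow_mod_modEq p _).mul_left _

theorem eq_zero_of_digitShift_eq_zero [NeZero p] {l : Fin d} {r : ℕ} (hr : r < p ^ d)
    (h : digitShift p l r = 0) : r = 0 := by
  rw [← Nat.mod_eq_of_lt hr, ← sum_digit_mul_pow, Finset.sum_range]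
  refine Finset.sum_eq_zero fun j hj => ?_
  rw [(Nat.mul_eq_zero.1 (Finset.sum_eq_zero_iff.1 h j hj)).resolve_right
    (pow_ne_zero _ (NeZero.ne p)), zero_mul]

end DigitShift

section Weights

theorem sum_smul_mem_sum_smul {E κ : Type*} [AddCommGroup E] [Module ℝ E] {Γ : Set E}
    (hΓ : Convex ℝ Γ) (h0 : 0 ∈ Γ) (S : Finset κ) {c : κ → ℝ} (hc : ∀ i, 0 ≤ c i) {g : κ → E}
    (hg : ∀ i, g i ∈ Γ) : ∑ i ∈ S, c i • g i ∈ (∑ i ∈ S, c i) • Γ := by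
  induction S using Finset.induction_on with
  | empty => exact ⟨0, h0, by simp⟩
  | insert i S hi ih =>
    rw [Finset.sum_insert hi, Finset.sum_insert hi,
      hΓ.add_smul (hc i) (Finset.sum_nonneg fun i _ => hc i)]
    exact Set.add_mem_add (Set.smul_mem_smul_set (hg i)) ih

variable {s : ℕ} {Γ : Set (Fin s → ℝ)}

theorem wMin_le {c : ℝ} (hc : 0 ≤ c) {u : Fin s → ℤ} (hu : ∀ i, 1 ≤ u i) (h : toR u ∈ c • Γ) :
    wMin Γ ≤ c := by
  obtain ⟨g, hg, hgu⟩ := id h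
  calc wMin Γ ≤ gauge Γ (toR u) := by
        refine csInf_le ⟨0, ?_⟩ ⟨u, hu, ⟨c, hc, g, hg, hgu.symm⟩, rfl⟩
        rintro _ ⟨_, _, _, rfl⟩
        exact gauge_nonneg _
    _ ≤ c := gauge_le_of_mem hc h

variable {κ : Type*} [Fintype κ] {B : κ → Fin s → ℕ}

/-- The vector `(∑ i, r i * B i) / N` is completed to one with positive coordinates by adding one
exponent vector for each coordinate that vanishes. -/
theorem mul_wMin_le (hΓ : Convex ℝ Γ) (h0 : 0 ∈ Γ) (hB : ∀ i, (fun j => (B i j : ℝ)) ∈ Γ)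
    (hpos : ∀ j, ∃ i, 0 < B i j) {N : ℕ} (hN : 0 < N) {r : κ → ℕ}
    (hdvd : ∀ j, N ∣ ∑ i, r i * B i j) :
    N * wMin Γ ≤ ∑ i, r i + N * Finset.card {j | ∑ i, r i * B i j = 0} := by
  choose v hv using hdvd
  choose i₀ hi₀ using hpos
  set J : Finset (Fin s) := {j | ∑ i, r i * B i j = 0} with hJ
  let u (l : Fin s) : ℤ := (v l + ∑ j ∈ J, B (i₀ j) l : ℕ)
  have hu (l : Fin s) : 1 ≤ u l := by
    suffices 0 < v l + ∑ j ∈ J, B (i₀ j) l from Int.toNat_le.1 this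
    by_cases hl : l ∈ J
    · exact Nat.add_pos_right _ ((hi₀ l).trans_le
        (Finset.single_le_sum (f := fun j => B (i₀ j) l) (fun _ _ => Nat.zero_le _) hl))
    · rw [hJ, Finset.mem_filter_univ, hv, Nat.mul_eq_zero, not_or] at hl
      exact Nat.add_pos_left (Nat.pos_of_ne_zero hl.2) _
  have hN' : (N : ℝ) ≠ 0 := Nat.cast_ne_zero.2 hN.ne'
  have hsum : toR u = ∑ i, ((r i : ℝ) / N) • (fun j => (B i j : ℝ)) +
      ∑ j ∈ J, (1 : ℝ) • fun l => (B (i₀ j) l : ℝ) := by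
    ext l
    have hvl : (v l : ℝ) = (∑ i, (r i : ℝ) * B i l) / N := by
      rw [eq_div_iff hN', mul_comm]
      exact_mod_cast (hv l).symm
    simp [toR, u, hvl, Finset.sum_div, div_mul_eq_mul_div]
  have hmem : toR u ∈ (∑ i, (r i : ℝ) / N + ∑ j ∈ J, 1) • Γ := by
    rw [hsum, hΓ.add_smul (by positivity) (by positivity)]
    exact Set.add_mem_add
      (sum_smul_mem_sum_smul hΓ h0 _ (fun i => by positivity) hB)
      (sum_smul_mem_sum_smul hΓ h0 J (fun _ => zero_le_one) fun j => hB (i₀ j))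
  calc N * wMin Γ ≤ N * (∑ i, (r i : ℝ) / N + ∑ j ∈ J, 1) := by
        gcongr
        exact wMin_le (by positivity) hu hmem
    _ = ∑ i, r i + N * J.card := by
        rw [mul_add, ← Finset.sum_div, mul_div_cancel₀ _ hN', Finset.sum_const, nsmul_one,
          Nat.cast_sum]

theorem mul_wMin_le_sum_digitShift (hΓ : Convex ℝ Γ) (h0 : 0 ∈ Γ)
    (hB : ∀ i, (fun j => (B i j : ℝ)) ∈ Γ) (hpos : ∀ j, ∃ i, 0 < B i j) {p d : ℕ} (hp : 1 < p)
    {r : κ → ℕ} (hr : ∀ i, r i < p ^ d) (hdvd : ∀ j, p ^ d - 1 ∣ ∑ i, r i * B i j) (l : Fin d) :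
    (p ^ d - 1 : ℕ) * wMin Γ ≤ (∑ i, digitShift p l (r i) : ℕ) +
      (p ^ d - 1 : ℕ) * Finset.card {j | ∑ i, r i * B i j = 0} := by
  have : NeZero p := ⟨by omega⟩
  have hmod (j : Fin s) : ∑ i, digitShift p l (r i) * B i j ≡
      p ^ (l : ℕ) * ∑ i, r i * B i j [MOD p ^ d - 1] := by
    rw [Finset.mul_sum]
    refine Nat.ModEq.sum fun i _ => ?_
    rw [← mul_assoc]
    exact (digitShift_modEq p l (hr i)).mul_right _
  have hzero : Finset.univ.filter (fun j => ∑ i, digitShift p l (r i) * B i j = 0) ⊆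
      Finset.univ.filter fun j => ∑ i, r i * B i j = 0 := by
    refine Finset.monotone_filter_right _ fun j _ hj => Finset.sum_eq_zero fun i hi => ?_
    rcases Nat.mul_eq_zero.1 (Finset.sum_eq_zero_iff.1 hj i hi) with h | h
    · rw [eq_zero_of_digitShift_eq_zero p (hr i) h, zero_mul]
    · rw [h, mul_zero]
  refine (mul_wMin_le hΓ h0 hB hpos (Nat.sub_pos_of_lt (Nat.one_lt_pow l.pos.ne' hp)) fun j =>
    ((hmod j).dvd_iff dvd_rfl).2 ((hdvd j).mul_left _)).trans ?_
  exact add_le_add_right (mul_le_mul_of_nonneg_left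
    (Nat.cast_le.2 (Finset.card_le_card hzero)) (Nat.cast_nonneg _)) _

/-- Averaging over the cyclic rotations replaces `∑ i, r i` in `mul_wMin_le` by digit sums. -/
theorem mul_wMin_le_sum_digitSum (hΓ : Convex ℝ Γ) (h0 : 0 ∈ Γ)
    (hB : ∀ i, (fun j => (B i j : ℝ)) ∈ Γ) (hpos : ∀ j, ∃ i, 0 < B i j) {p d : ℕ} (hp : 1 < p)
    [NeZero d] {r : κ → ℕ} (hr : ∀ i, r i < p ^ d) (hdvd : ∀ j, p ^ d - 1 ∣ ∑ i, r i * B i j) :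
    (d * (p - 1) : ℕ) * wMin Γ ≤
      (∑ i, digitSum p d (r i) + d * (p - 1) * Finset.card {j | ∑ i, r i * B i j = 0} : ℕ) := by
  have : NeZero p := ⟨by omega⟩
  have hq : 0 < p ^ d - 1 := Nat.sub_pos_of_lt (Nat.one_lt_pow (NeZero.ne d) hp)
  set Z : Finset (Fin s) := {j | ∑ i, r i * B i j = 0}
  have htotal : (∑ l : Fin d, ∑ i, digitShift p l (r i)) * (p - 1) =
      (∑ i, digitSum p d (r i)) * (p ^ d - 1) := by
    rw [Finset.sum_comm, Finset.sum_mul, Finset.sum_mul]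
    exact Finset.sum_congr rfl fun i _ => sum_digitShift_mul p (r i)
  refine le_of_mul_le_mul_left ?_ (Nat.cast_pos (α := ℝ).2 hq)
  calc (p ^ d - 1 : ℕ) * ((d * (p - 1) : ℕ) * wMin Γ)
      = (∑ _l : Fin d, (p ^ d - 1 : ℕ) * wMin Γ) * (p - 1 : ℕ) := by
        rw [Finset.sum_const, Finset.card_univ, Fintype.card_fin, nsmul_eq_mul, Nat.cast_mul]
        ring
    _ ≤ (∑ l : Fin d, ((∑ i, digitShift p l (r i) : ℕ) + (p ^ d - 1 : ℕ) * (Z.card : ℝ))) *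
        (p - 1 : ℕ) := by
        gcongr with l
        exact mul_wMin_le_sum_digitShift hΓ h0 hB hpos hp hr hdvd l
    _ = ((∑ l : Fin d, ∑ i, digitShift p l (r i)) * (p - 1) +
        (p ^ d - 1) * (d * (p - 1) * Z.card) : ℕ) := by
        rw [Finset.sum_add_distrib, Finset.sum_const, Finset.card_univ, Fintype.card_fin,
          nsmul_eq_mul]
        push_cast
        ring
    _ = (p ^ d - 1 : ℕ) * (∑ i, digitSum p d (r i) + d * (p - 1) * Z.card : ℕ) := by
        rw [htotal]
        push_cast
        ring

end Weights

/-! ### Teichmüller characters of integrally closed rings -/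

section IntegrallyClosed

open IsLocalRing

theorem exists_isRoot_of_monic {V : Type*} (K : Type*) [CommRing V] [Field K] [IsAlgClosed K]
    [Algebra V K] [FaithfulSMul V K] [IsIntegrallyClosedIn V K] {f : Polynomial V} (hf : f.Monic)
    (hdeg : f.natDegree ≠ 0) : ∃ x, f.IsRoot x := by
  obtain ⟨z, hz⟩ := IsAlgClosed.exists_eval₂_eq_zero_of_injective (algebraMap V K)
    (FaithfulSMul.algebraMap_injective V K) f fun h =>
      hdeg (Polynomial.natDegree_eq_of_degree_eq_some h)
  obtain ⟨x, rfl⟩ := IsIntegrallyClosedIn.isIntegral_iff.1 (⟨f, hf, hz⟩ : IsIntegral V z)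
  rw [Polynomial.eval₂_at_apply] at hz
  exact ⟨x, (FaithfulSMul.algebraMap_eq_zero_iff V K).1 hz⟩

theorem isAlgClosed_of_surjective {V k : Type*} (K : Type*) [CommRing V] [Field K] [IsAlgClosed K]
    [Algebra V K] [FaithfulSMul V K] [IsIntegrallyClosedIn V K] [Field k] (φ : V →+* k)
    (hφ : Function.Surjective φ) : IsAlgClosed k := by
  refine IsAlgClosed.of_exists_root k fun g hg hirr => ?_
  obtain ⟨f, rfl, hdeg, hf⟩ := Polynomial.lifts_and_natDegree_eq_and_monic
    ((Polynomial.mem_lifts g).2 (Polynomial.map_surjective φ hφ g)) hg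
  obtain ⟨x, hx⟩ := exists_isRoot_of_monic K hf (hdeg ▸ hirr.natDegree_pos.ne')
  exact ⟨φ x, Polynomial.IsRoot.map hx⟩

theorem exists_isPrimitiveRoot_of_isIntegrallyClosedIn (V : Type*) {K : Type*} [CommRing V]
    [Field K] [Algebra V K] [FaithfulSMul V K] [IsIntegrallyClosedIn V K] {N : ℕ} [NeZero N]
    {z : K} (hz : IsPrimitiveRoot z N) : ∃ x : V, IsPrimitiveRoot x N := by
  obtain ⟨x, rfl⟩ := IsIntegrallyClosedIn.isIntegral_iff.1
    ((hz.isIntegral (NeZero.pos N)).tower_top : IsIntegral V z)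
  exact ⟨x, hz.of_map_of_injective (FaithfulSMul.algebraMap_injective V K)⟩

theorem exists_pow_eq_one_map_eq {V k : Type*} [CommRing V] [IsDomain V] [CommRing k] [IsDomain k]
    (φ : V →+* k) {N : ℕ} [NeZero N] {z : V} (hz : IsPrimitiveRoot z N) {x : k} (hx : x ^ N = 1) :
    ∃ ξ : V, ξ ^ N = 1 ∧ φ ξ = x := by
  have hmonic := Polynomial.monic_X_pow_sub_C (1 : V) (NeZero.ne N)
  have hroots : (Polynomial.nthRoots N 1).map φ = Polynomial.nthRoots N 1 := by
    simpa [Polynomial.nthRoots] using hmonic.roots_map_of_card_eq_natDegree (f := φ)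
      (hz.card_nthRoots_one.trans Polynomial.natDegree_X_pow_sub_C.symm)
  obtain ⟨ξ, hξ, hφξ⟩ := Multiset.mem_map.1 <|
    hroots ▸ (Polynomial.mem_nthRoots (NeZero.pos N)).2 hx
  exact ⟨ξ, (Polynomial.mem_nthRoots (NeZero.pos N)).1 hξ, hφξ⟩

theorem exists_isTeichmuller {F V : Type*} [Field F] [Fintype F] [CommRing V] [IsDomain V]
    [IsLocalRing V] (ι : F →+* ResidueField V) {z : V}
    (hz : IsPrimitiveRoot z (Fintype.card Fˣ)) : ∃ ω : MulChar F V, IsTeichmuller ω ι := by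
  obtain ⟨g, hg⟩ := IsCyclic.exists_generator (α := Fˣ)
  have hg1 : ι g ^ Fintype.card Fˣ = 1 := by
    rw [← map_pow, ← Units.val_pow_eq_pow_val, pow_card_eq_one, Units.val_one, map_one]
  obtain ⟨ξ, hξ, hξg⟩ := exists_pow_eq_one_map_eq (residue V) hz hg1
  refine ⟨MulChar.ofRootOfUnity (rootsOfUnity.mkOfPowEq ξ hξ).2 hg, fun y => ?_⟩
  rcases eq_or_ne y 0 with rfl | hy
  · rw [MulChar.map_zero, map_zero, map_zero]
  · obtain ⟨i, hi⟩ := mem_powers_iff_mem_zpowers.2 (hg (Units.mk0 y hy))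
    obtain rfl : (g : F) ^ i = y := by simpa using congrArg Units.val hi
    rw [map_pow, map_pow, map_pow, MulChar.ofRootOfUnity_spec, ← hξg,
      rootsOfUnity.val_mkOfPowEq_coe]

end IntegrallyClosed

section Moment

variable {F X κ σ V W : Type*} [CommRing F] [Fintype F] [Fintype X] [Fintype κ] [Fintype σ]
  [DecidableEq σ] [CommRing V] [CommRing W]

/-- The `k`-th moment, over `t ∈ F^σ`, of the family of exponential sums
`∑ₓ ψ (h(x) + ∑ᵢ bᵢ(x) t^{Bᵢ})`; the index set `X` of the inner sum stands for a torus. -/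
def moment (ψ : AddChar F V) (h : X → F) (b : X → κ → F) (B : κ → σ → ℕ) (k : ℕ) : V :=
  ∑ t : σ → F, (∑ x, ψ (h x + ∑ i, b x i * ∏ j, t j ^ B i j)) ^ k

theorem map_moment (φ : V →+* W) (ψ : AddChar F V) (h : X → F) (b : X → κ → F) (B : κ → σ → ℕ)
    (k : ℕ) : φ (moment ψ h b B k) = moment ((φ : V →* W).compAddChar ψ) h b B k := by
  simp [moment]

end Moment

section Divisibility

variable {F V : Type*} [CommRing V] [IsDomain V] {p : ℕ} [Fact p.Prime] {z : V}

theorem addChar_apply_eq_pow [Ring F] [CharP F p] (hz : IsPrimitiveRoot z p) (ψ : AddChar F V)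
    (y : F) : ∃ i : ℕ, ψ y = z ^ i := by
  have hpow : ψ y ^ p = 1 := by
    rw [← AddChar.map_nsmul_eq_pow, nsmul_eq_mul, CharP.cast_eq_zero, zero_mul,
      AddChar.map_zero_eq_one]
  obtain ⟨i, -, hi⟩ := hz.eq_pow_of_pow_eq_one hpow
  exact ⟨i, hi.symm⟩

theorem sub_one_dvd_addChar_sub_one [Ring F] [CharP F p] (hz : IsPrimitiveRoot z p)
    (ψ : AddChar F V) (y : F) : z - 1 ∣ ψ y - 1 := by
  obtain ⟨i, hi⟩ := addChar_apply_eq_pow hz ψ y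
  exact hi ▸ sub_one_dvd_pow_sub_one z i

theorem pow_ceil_dvd_moment (K : Type*) [Field K] [CharZero K] [IsAlgClosed K] [IsLocalRing V]
    [Algebra V K] [FaithfulSMul V K] [IsIntegrallyClosedIn V K]
    [CharP (IsLocalRing.ResidueField V) p] (hz : IsPrimitiveRoot z p) {X κ : Type*} [Fintype X]
    [Fintype κ] [Field F] [Fintype F] [CharP F p] {d : ℕ} [NeZero d]
    (hcard : Fintype.card F = p ^ d) {s : ℕ} {Γ : Set (Fin s → ℝ)} (hΓ : Convex ℝ Γ) (h0 : 0 ∈ Γ)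
    {B : κ → Fin s → ℕ} (hB : ∀ i, (fun j => (B i j : ℝ)) ∈ Γ) (hpos : ∀ j, ∃ i, 0 < B i j)
    (ψ : AddChar F V) (h : X → F) (b : X → κ → F) (k : ℕ) :
    (z - 1) ^ ⌈(d * (p - 1) : ℕ) * wMin Γ⌉₊ ∣ moment ψ h b B k := by
  have hp : p.Prime := Fact.out
  have : IsAlgClosed (IsLocalRing.ResidueField V) :=
    isAlgClosed_of_surjective K (IsLocalRing.residue V) IsLocalRing.residue_surjective
  let _ : Algebra (ZMod p) F := ZMod.algebra F p
  let _ : Algebra (ZMod p) (IsLocalRing.ResidueField V) := ZMod.algebra _ p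
  let ι : F →ₐ[ZMod p] IsLocalRing.ResidueField V := IsAlgClosed.lift
  obtain ⟨ξ, hξ⟩ := HasEnoughRootsOfUnity.exists_primitiveRoot K (Fintype.card Fˣ)
  obtain ⟨x, hx⟩ := exists_isPrimitiveRoot_of_isIntegrallyClosedIn V hξ
  obtain ⟨ω, hω⟩ := exists_isTeichmuller ι.toRingHom hx
  obtain ⟨u, -, hu⟩ := hz.self_sub_one_pow_dvd_order (Nat.sub_lt hp.pos one_pos)
  exact dvd_sum_pow_sum_addChar ψ _ (hω.pow_dvd_sum_addChar_sum_mul_monomial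
    (sub_one_dvd_addChar_sub_one hz ψ) p (Dvd.intro_left u hu.symm) hcard fun r hr hdvd =>
      Nat.ceil_le.2 (mul_wMin_le_sum_digitSum hΓ h0 hB hpos hp.one_lt hr hdvd)) h b k

end Divisibility

/-! ### The ideal over `p` in `ℤ[ζ_p]` -/

section CyclotomicRing

theorem subringClosure_preimage_eq_top {R : Type*} [Ring R] (s : Set R) :
    Subring.closure (((↑) : Subring.closure s → R) ⁻¹' s) = ⊤ := by
  refine eq_top_iff.2 ?_
  rintro ⟨x, hx⟩ -
  induction hx using Subring.closure_induction with
  | mem x hx => exact Subring.subset_closure hx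
  | zero => exact zero_mem _
  | one => exact one_mem _
  | add x y _ _ ihx ihy => exact add_mem ihx ihy
  | neg x _ ihx => exact neg_mem ihx
  | mul x y _ _ ihx ihy => exact mul_mem ihx ihy

theorem exists_int_sub_one_dvd_sub {R : Type*} [CommRing R] {z : R}
    (hz : Subring.closure {z} = ⊤) (x : R) : ∃ c : ℤ, z - 1 ∣ x - c := by
  let mk := Ideal.Quotient.mk (Ideal.span {z - 1})
  have hmem : x ∈ (Int.castRingHom (R ⧸ Ideal.span {z - 1})).range.comap mk := by
    suffices h : Subring.closure {z} ≤ (Int.castRingHom _).range.comap mk from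
      h (hz ▸ Subring.mem_top x)
    rw [Subring.closure_le, Set.singleton_subset_iff]
    refine ⟨1, ?_⟩
    rw [map_one, ← map_one mk, eq_comm, Ideal.Quotient.mk_eq_mk_iff_sub_mem]
    exact Ideal.mem_span_singleton_self _
  obtain ⟨c, hc⟩ := hmem
  refine ⟨c, Ideal.mem_span_singleton.1 ((Ideal.Quotient.mk_eq_mk_iff_sub_mem x c).1 ?_)⟩
  rw [← hc, map_intCast, eq_intCast]

/-- `p` is totally ramified in `ℤ[ζ_p]`. -/
theorem eq_span_sub_one_of_mem {R : Type*} [CommRing R] [IsDomain R] {z : R} {p : ℕ}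
    [Fact p.Prime] (hz : IsPrimitiveRoot z p) (hgen : Subring.closure {z} = ⊤) {P : Ideal R}
    [P.IsPrime] (hp : (p : R) ∈ P) : P = Ideal.span {z - 1} := by
  have hpp : p.Prime := Fact.out
  have hchar : CharP (R ⧸ P) p := (CharP.charP_iff_prime_eq_zero hpp).2 <| by
    rwa [← map_natCast (Ideal.Quotient.mk P), Ideal.Quotient.eq_zero_iff_mem]
  have hzP : z - 1 ∈ P := by
    rw [← Ideal.Quotient.eq_zero_iff_mem, ← pow_eq_zero_iff hpp.ne_zero, map_sub, map_one,
      sub_pow_char, one_pow, ← map_pow, hz.pow_eq_one, map_one, sub_self]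
  refine le_antisymm (fun x hx => ?_) ((Ideal.span_singleton_le_iff_mem P).2 hzP)
  obtain ⟨c, hc⟩ := exists_int_sub_one_dvd_sub hgen x
  have hcP : (c : R) ∈ P := by simpa using P.sub_mem hx (P.mem_of_dvd hc hzP)
  have hpc : (p : ℤ) ∣ c := by
    rwa [← CharP.intCast_eq_zero_iff (R ⧸ P), ← map_intCast (Ideal.Quotient.mk P),
      Ideal.Quotient.eq_zero_iff_mem]
  have hzp : z - 1 ∣ (p : R) := by
    obtain ⟨u, -, hu⟩ := hz.self_sub_one_pow_dvd_order hpp.one_lt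
    exact Dvd.intro_left u (by rw [hu, pow_one])
  rw [Ideal.mem_span_singleton, ← sub_add_cancel x c]
  exact dvd_add hc (hzp.trans (by exact_mod_cast Int.cast_dvd_cast (α := R) _ _ hpc))

theorem pow_dvd_of_map_pow_dvd {R V : Type*} [CommRing R] [CommRing V] [IsDomain V]
    [IsLocalRing V] (φ : R →+* V) {π : R} (hmax : (Ideal.span {π}).IsMaximal) (hπ0 : φ π ≠ 0)
    (hπ : ¬ IsUnit (φ π)) {T : ℕ} {x : R} (h : φ π ^ T ∣ φ x) : π ^ T ∣ x := by
  have hcomap : Ideal.span {π} = (IsLocalRing.maximalIdeal V).comap φ :=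
    hmax.eq_of_le (Ideal.IsPrime.comap φ).ne_top <|
      (Ideal.span_singleton_le_iff_mem _).2 hπ
  induction T generalizing x with
  | zero => rw [pow_zero]; exact one_dvd x
  | succ T ih =>
    have hx : x ∈ Ideal.span {π} := by
      rw [hcomap, Ideal.mem_comap]
      exact Ideal.mem_of_dvd _ ((dvd_pow_self _ T.succ_ne_zero).trans h) hπ
    obtain ⟨y, rfl⟩ := Ideal.mem_span_singleton.1 hx
    rw [pow_succ', map_mul, mul_dvd_mul_iff_left hπ0] at h
    rw [pow_succ']
    exact mul_dvd_mul_left π (ih h)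

theorem le_ordSub {R₀ : Subring ℂ} [IsNoetherianRing R₀] {P : Ideal R₀} (hP : P ≠ ⊤) {x : R₀}
    (hx : x ≠ 0) {T : ℕ} (h : x ∈ P ^ T) : T ≤ ordSub R₀ P x := by
  obtain ⟨t₀, ht₀⟩ : ∃ t, x ∉ P ^ t := by
    by_contra! hall
    have hinf : x ∈ ⨅ t : ℕ, P ^ t := Ideal.mem_iInf.2 hall
    rw [Ideal.iInf_pow_eq_bot_of_isDomain P hP] at hinf
    exact hx hinf
  refine le_csSup ⟨t₀, ?_⟩ ⟨x, rfl, h⟩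
  rintro t ⟨y, hy, hyt⟩
  rw [Subtype.ext hy] at hyt
  exact le_of_not_ge fun ht => ht₀ (Ideal.pow_le_pow_right ht hyt)

variable {K : Type*} [Field K] {p : ℕ} [Fact p.Prime] {ζ : K}

theorem moment_mem_pow_ceil [IsAlgClosed K] [CharZero K] (hζ : IsPrimitiveRoot ζ p)
    (P : Ideal (Subring.closure {ζ})) [hP : P.IsMaximal] (hpP : (p : Subring.closure {ζ}) ∈ P)
    {F X κ : Type*} [Field F] [Fintype F] [Fintype X] [Fintype κ] [CharP F p] {d : ℕ} [NeZero d]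
    (hcard : Fintype.card F = p ^ d) {s : ℕ} {Γ : Set (Fin s → ℝ)} (hΓ : Convex ℝ Γ) (h0 : 0 ∈ Γ)
    {B : κ → Fin s → ℕ} (hB : ∀ i, (fun j => (B i j : ℝ)) ∈ Γ) (hpos : ∀ j, ∃ i, 0 < B i j)
    (ψ : AddChar F (Subring.closure {ζ})) (h : X → F) (b : X → κ → F) (k : ℕ) :
    moment ψ h b B k ∈ P ^ ⌈(d * (p - 1) : ℕ) * wMin Γ⌉₊ := by
  let z : Subring.closure {ζ} := ⟨ζ, Subring.subset_closure rfl⟩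
  have hz : IsPrimitiveRoot z p := IsPrimitiveRoot.coe_submonoidClass_iff.1 hζ
  have hgen : Subring.closure {z} = ⊤ := by
    rw [← subringClosure_preimage_eq_top {ζ}]
    congr 1
    ext x
    exact Subtype.ext_iff
  obtain rfl := eq_span_sub_one_of_mem hz hgen hpP
  obtain ⟨V, hV, hPV⟩ := Ideal.image_subset_nonunits_valuationSubring _ hP.ne_top
  let φ : Subring.closure {ζ} →+* V := Subring.inclusion hV
  have hφ : Function.Injective φ := Subring.inclusion_injective hV
  have hnonunit {x} (hx : x ∈ Ideal.span {z - 1}) : ¬ IsUnit (φ x) :=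
    (ValuationSubring.coe_mem_nonunits_iff (a := φ x)).1 (hPV ⟨x, hx, rfl⟩)
  have : CharP (IsLocalRing.ResidueField V) p := by
    refine (CharP.charP_iff_prime_eq_zero Fact.out).2 ?_
    rw [← map_natCast (IsLocalRing.residue V), IsLocalRing.residue_eq_zero_iff, ← map_natCast φ]
    exact hnonunit hpP
  rw [Ideal.span_singleton_pow, Ideal.mem_span_singleton]
  have hφ0 : φ (z - 1) ≠ 0 := (map_ne_zero_iff φ hφ).2 <|
    sub_ne_zero.2 (hz.ne_one (Fact.out : p.Prime).one_lt)
  refine pow_dvd_of_map_pow_dvd φ hP hφ0 (hnonunit (Ideal.mem_span_singleton_self _)) ?_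
  rw [map_moment, map_sub, map_one]
  exact pow_ceil_dvd_moment K (hz.map_of_injective hφ) hcard hΓ h0 hB hpos _ h b k

end CyclotomicRing

/-! ### Finite subfields of an algebraic closure -/

section Transfer

open Polynomial in
theorem mem_range_iff_pow_card_eq_self {F L : Type*} [Field F] [Fintype F] [Field L] (e : F →+* L)
    {x : L} : x ∈ e.range ↔ x ^ Fintype.card F = x := by
  refine ⟨?_, fun hx => ?_⟩
  · rintro ⟨y, rfl⟩
    rw [← map_pow, FiniteField.pow_card]
  · have hsplits : (X ^ Fintype.card F - X : F[X]).Splits := by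
      rw [splits_iff_card_roots, FiniteField.roots_X_pow_card_sub_X,
        FiniteField.X_pow_card_sub_X_natDegree_eq F Fintype.one_lt_card]
      rfl
    exact hsplits.mem_range_of_isRoot (FiniteField.X_pow_card_sub_X_ne_zero F Fintype.one_lt_card)
      (by simp [hx])

theorem finsum_pow_card_eq_self {F L ι A : Type*} [Field F] [Fintype F] [Field L] [Fintype ι]
    [DecidableEq ι] [AddCommMonoid A] (e : F →+* L) (g : (ι → L) → A) :
    ∑ᶠ (x : ι → L) (_ : ∀ i, x i ^ Fintype.card F = x i), g x = ∑ x : ι → F, g (e ∘ x) := by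
  have hrange : {x : ι → L | ∀ i, x i ^ Fintype.card F = x i} =
      Set.range fun x : ι → F => e ∘ x := by
    ext x
    simp only [Set.mem_ofPred_eq, ← mem_range_iff_pow_card_eq_self e, RingHom.mem_range,
      Set.mem_range, funext_iff, Function.comp_apply, Classical.skolem]
  rw [← finsum_eq_sum_of_fintype, ← finsum_mem_range e.injective.comp_left, ← hrange]
  rfl

theorem finsum_pow_card_eq_self_and_ne_zero {F L ι A : Type*} [Field F] [Fintype F] [Field L]
    [Fintype ι] [DecidableEq ι] [AddCommMonoid A] (e : F →+* L) (g : (ι → L) → A) :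
    ∑ᶠ (x : ι → L) (_ : ∀ i, x i ^ Fintype.card F = x i ∧ x i ≠ 0), g x =
      ∑ x : ι → Fˣ, g fun i => e (x i) := by
  have hmem (y : L) : y ^ Fintype.card F = y ∧ y ≠ 0 ↔ ∃ u : Fˣ, e u = y := by
    rw [← mem_range_iff_pow_card_eq_self e]
    constructor
    · rintro ⟨⟨u, rfl⟩, hu⟩
      exact ⟨Units.mk0 u ((map_ne_zero e).1 hu), rfl⟩
    · rintro ⟨u, rfl⟩
      exact ⟨⟨u, rfl⟩, (map_ne_zero e).2 u.ne_zero⟩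
  have hrange : {x : ι → L | ∀ i, x i ^ Fintype.card F = x i ∧ x i ≠ 0} =
      Set.range fun (x : ι → Fˣ) i => e (x i) := by
    ext x
    simp only [Set.mem_ofPred_eq, hmem, Set.mem_range, funext_iff, Classical.skolem]
  have hinj : Function.Injective fun (x : ι → Fˣ) i => e (x i) :=
    (e.injective.comp Units.val_injective).comp_left
  rw [← finsum_eq_sum_of_fintype, ← finsum_mem_range hinj, ← hrange]
  rfl

theorem mon_map {K L : Type} [Field K] [Field L] (e : K →+* L) {n : ℕ} (x : Fin n → K)
    (μ : Fin n → ℤ) : mon (fun i => e (x i)) μ = e (mon x μ) := by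
  simp only [mon, map_prod, map_zpow₀]

theorem mon_eq_prod_pow_toNat {K : Type} [Field K] {s : ℕ} {γ : Fin s → ℤ} (hγ : ∀ j, 0 ≤ γ j)
    (t : Fin s → K) : mon t γ = ∏ j, t j ^ (γ j).toNat := by
  refine Finset.prod_congr rfl fun j _ => ?_
  rw [← zpow_natCast, Int.toNat_of_nonneg (hγ j)]

theorem Gval_eq_add_sum_pow_toNat {K : Type} [Field K] {n s : ℕ} (f : (Fin n → ℤ) →₀ K)
    {P : ((Fin n → ℤ) × (Fin s → ℤ)) →₀ K} (hP : ∀ gm ∈ P.support, ∀ j, 0 ≤ gm.2 j)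
    (x : Fin n → K) (t : Fin s → K) :
    Gval f P x t = (f.sum fun μ c => c * mon x μ) +
      ∑ i : P.support, P i * mon x i.1.1 * ∏ j, t j ^ (i.1.2 j).toNat := by
  rw [Gval, Finsupp.sum.eq_def P, ← Finset.sum_coe_sort]
  congr 1
  exact Finset.sum_congr rfl fun i _ => by rw [mon_eq_prod_pow_toNat (hP i.1 i.2)]

theorem Gval_mapRange {K L : Type} [Field K] [Field L] (e : K →+* L) {n s : ℕ}
    (f : (Fin n → ℤ) →₀ K) (P : ((Fin n → ℤ) × (Fin s → ℤ)) →₀ K) (x : Fin n → K)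
    (t : Fin s → K) :
    Gval (f.mapRange e (map_zero e)) (P.mapRange e (map_zero e)) (fun i => e (x i))
      (fun j => e (t j)) = e (Gval f P x t) := by
  rw [Gval, Finsupp.sum_mapRange_index (by simp), Finsupp.sum_mapRange_index (by simp)]
  simp only [Gval, mon_map, map_add, map_mul, map_finsuppSum]

variable {p : ℕ} [Fact p.Prime] {F : Type} [Field F] [Fintype F] [Algebra (ZMod p) F] {d : ℕ}

theorem traceZmod_map (hcard : Fintype.card F = p ^ d) (e : F →ₐ[ZMod p] Omg p) (y : F) :
    traceZmod p d (e y) = Algebra.trace (ZMod p) F y := by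
  have hrank : Module.finrank (ZMod p) F = d := by
    refine Nat.pow_right_injective (Fact.out : p.Prime).two_le ?_
    simpa [hcard] using (Module.card_eq_pow_finrank (K := ZMod p) (V := F)).symm
  have hsum : ∑ j ∈ Finset.range d, e y ^ p ^ j =
      algebraMap (ZMod p) (Omg p) (Algebra.trace (ZMod p) F y) := by
    rw [← e.commutes, FiniteField.algebraMap_trace_eq_sum_pow, hrank, Nat.card_zmod, map_sum]
    simp only [map_pow]
  rw [traceZmod, hsum]
  exact Function.leftInverse_invFun (FaithfulSMul.algebraMap_injective _ _) _

variable {n s : ℕ} (Θ : AddChar (ZMod p) ℂ) (f : (Fin n → ℤ) →₀ F)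
  (P : ((Fin n → ℤ) × (Fin s → ℤ)) →₀ F)

theorem torSum_mapRange (hcard : Fintype.card F = p ^ d) (e : F →ₐ[ZMod p] Omg p)
    (t : Fin s → F) :
    torSum p Θ (f.mapRange e (map_zero e)) (P.mapRange e (map_zero e)) d (e ∘ t) =
      ∑ x : Fin n → Fˣ, Θ (Algebra.trace (ZMod p) F (Gval f P (fun i => x i) t)) := by
  rw [torSum, ← hcard]
  refine (finsum_pow_card_eq_self_and_ne_zero (e : F →+* Omg p) _).trans ?_
  refine Finset.sum_congr rfl fun x _ => ?_
  rw [← traceZmod_map hcard e]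
  exact congrArg (fun y => Θ (traceZmod p d y))
    (Gval_mapRange (e : F →+* Omg p) f P (fun i => (x i : F)) t)

theorem Naff_mapRange {a m : ℕ} (hcard : Fintype.card F = p ^ (a * m))
    (e : F →ₐ[ZMod p] Omg p) (hP : ∀ gm ∈ P.support, ∀ j, 0 ≤ gm.2 j) (k : ℕ) :
    Naff p a Θ (f.mapRange e (map_zero e)) (P.mapRange e (map_zero e)) k m =
      ((-1) ^ n) ^ k * moment (Θ.compAddMonoidHom (Algebra.trace (ZMod p) F).toAddMonoidHom)
        (fun x : Fin n → Fˣ => f.sum fun μ c => c * mon (fun i => (x i : F)) μ)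
        (fun x (i : P.support) => P i * mon (fun i => (x i : F)) i.1.1)
        (fun i j => (i.1.2 j).toNat) k := by
  rw [Naff, ← hcard]
  refine (finsum_pow_card_eq_self (e : F →+* Omg p) _).trans ?_
  rw [moment, Finset.mul_sum]
  refine Finset.sum_congr rfl fun t _ => ?_
  rw [← mul_pow]
  congr 2
  refine (torSum_mapRange Θ f P hcard e t).trans (Finset.sum_congr rfl fun x _ => ?_)
  rw [Gval_eq_add_sum_pow_toNat f hP]
  rfl

end Transfer

theorem exists_compAddChar_subtype_eq {A R : Type*} [Ring A] [CommRing R] [IsDomain R] {p : ℕ}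
    [Fact p.Prime] [CharP A p] {ζ : R} (hζ : IsPrimitiveRoot ζ p) (ψ : AddChar A R) :
    ∃ ψ' : AddChar A (Subring.closure {ζ}),
      ((Subring.closure {ζ}).subtype : Subring.closure {ζ} →* R).compAddChar ψ' = ψ := by
  have hmem (y : A) : ψ y ∈ Subring.closure {ζ} := by
    obtain ⟨i, hi⟩ := addChar_apply_eq_pow hζ ψ y
    rw [hi]
    exact pow_mem (Subring.subset_closure (Set.mem_singleton ζ)) i
  exact ⟨⟨fun y => ⟨ψ y, hmem y⟩, Subtype.ext ψ.map_zero_eq_one,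
    fun x y => Subtype.ext (ψ.map_add_eq_mul x y)⟩, rfl⟩

theorem exists_mapRange_eq {α F L : Type*} [Field F] [Fintype F] [Field L] (e : F →+* L)
    {q m : ℕ} (hcard : Fintype.card F = q ^ m) {f : α →₀ L} (hf : ∀ i, f i ^ q = f i) :
    ∃ g : α →₀ F, g.mapRange e (map_zero e) = f := by
  rw [← Set.mem_range, Finsupp.range_mapRange]
  refine fun i => (mem_range_iff_pow_card_eq_self e).2 ?_
  rw [hcard]
  exact congrFun (pow_iterate q m) (f i) ▸ Function.iterate_fixed (hf i) m

/-! ### Moments over the affine base -/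

section AffineMoment

variable {p a n s m : ℕ} [Fact p.Prime] {ζ : ℂ} {f : (Fin n → ℤ) →₀ Omg p}
  {P : ((Fin n → ℤ) × (Fin s → ℤ)) →₀ Omg p} {Γ : Set (Fin s → ℝ)}

theorem exists_coe_eq_Naff_and_mem_pow_ceil (ha : 1 ≤ a) (hm : 1 ≤ m) (hζ : IsPrimitiveRoot ζ p)
    (Θ : AddChar (ZMod p) ℂ) (hf : ∀ μ, f μ ^ p ^ a = f μ) (hP : ∀ gm, P gm ^ p ^ a = P gm)
    (hPnn : ∀ gm ∈ P.support, ∀ j, 0 ≤ gm.2 j) (hΓ : Convex ℝ Γ) (hΓ0 : 0 ∈ Γ)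
    (hPΓ : ∀ gm ∈ P.support, toR gm.2 ∈ Γ) (hPpos : ∀ j, ∃ gm ∈ P.support, 0 < gm.2 j) (k : ℕ) :
    ∃ N : Subring.closure {ζ}, (N : ℂ) = Naff p a Θ f P k m ∧
      ∀ Pid : Ideal (Subring.closure {ζ}), Pid.IsMaximal → (p : Subring.closure {ζ}) ∈ Pid →
        N ∈ Pid ^ ⌈(a * m * (p - 1) : ℕ) * wMin Γ⌉₊ := by
  have : NeZero (a * m) := ⟨Nat.mul_ne_zero (by omega) (by omega)⟩
  let F := GaloisField p (a * m)
  let _ : Fintype F := Fintype.ofFinite F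
  have hcard : Fintype.card F = p ^ (a * m) := by
    rw [← Nat.card_eq_fintype_card, GaloisField.card p (a * m) (NeZero.ne _)]
  let e : F →ₐ[ZMod p] Omg p := IsAlgClosed.lift
  obtain ⟨f, rfl⟩ := exists_mapRange_eq (e : F →+* Omg p) (hcard.trans (pow_mul p a m)) hf
  obtain ⟨P, rfl⟩ := exists_mapRange_eq (e : F →+* Omg p) (hcard.trans (pow_mul p a m)) hP
  rw [Finsupp.support_mapRange_of_injective _ _ (e : F →+* Omg p).injective] at hPnn hPΓ hPpos
  obtain ⟨ψ, hψ⟩ := exists_compAddChar_subtype_eq hζ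
    (Θ.compAddMonoidHom (Algebra.trace (ZMod p) F).toAddMonoidHom)
  have hNaff := Naff_mapRange Θ f P hcard e hPnn k
  rw [← hψ, ← map_moment] at hNaff
  refine ⟨((-1) ^ n) ^ k * moment ψ _ _ _ k, Eq.trans (by push_cast; rfl) hNaff.symm,
    fun Pid hmax hpP => Ideal.mul_mem_left _ _ ?_⟩
  refine moment_mem_pow_ceil hζ Pid hpP hcard hΓ hΓ0 (fun i => ?_) (fun j => ?_) ψ _ _ k
  · convert! hPΓ i i.2 using 2 with j
    simp only [toR, ← Int.cast_natCast (R := ℝ), Int.toNat_of_nonneg (hPnn i i.2 j)]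
  · obtain ⟨gm, hgm, hpos⟩ := hPpos j
    exact ⟨⟨gm, hgm⟩, by simpa using hpos⟩

theorem tensor_power_affine_moment_divisibility_general (ha : 1 ≤ a) (hζ : IsPrimitiveRoot ζ p)
    (Θ : AddChar (ZMod p) ℂ) (hf : ∀ μ, f μ ^ p ^ a = f μ) (hP : ∀ gm, P gm ^ p ^ a = P gm)
    (hPnn : ∀ gm ∈ P.support, ∀ j, 0 ≤ gm.2 j) (hΓ : Convex ℝ Γ) (hΓ0 : 0 ∈ Γ)
    (hPΓ : ∀ gm ∈ P.support, toR gm.2 ∈ Γ) (hPpos : ∀ j, ∃ gm ∈ P.support, 0 < gm.2 j)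
    (k : ℕ) (hm : 1 ≤ m) :
    Naff p a Θ f P k m ∈ Subring.closure {ζ} ∧
      ∀ Pid : Ideal (Subring.closure {ζ}), Pid.IsMaximal → (p : Subring.closure {ζ}) ∈ Pid →
        (Naff p a Θ f P k m = 0 ∨
          m * wMin Γ ≤ ordSub (Subring.closure {ζ}) Pid (Naff p a Θ f P k m) / ((p - 1) * a)) := by
  obtain ⟨N, hN, hmem⟩ :=
    exists_coe_eq_Naff_and_mem_pow_ceil ha hm hζ Θ hf hP hPnn hΓ hΓ0 hPΓ hPpos k
  rw [← hN]
  refine ⟨N.2, fun Pid hmax hpP => or_iff_not_imp_left.2 fun hN0 => ?_⟩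
  have : IsNoetherianRing (Subring.closure {ζ}) :=
    is_noetherian_subring_closure {ζ} (Set.finite_singleton ζ)
  have hord : ((a * m * (p - 1) : ℕ) : ℝ) * wMin Γ ≤ ordSub (Subring.closure {ζ}) Pid N :=
    Nat.ceil_le.1 (le_ordSub hmax.ne_top (fun h => hN0 (by simp [h])) (hmem Pid hmax hpP))
  have hp1 : (1 : ℝ) < p := by exact_mod_cast (Fact.out : p.Prime).one_lt
  rw [le_div_iff₀ (mul_pos (sub_pos.2 hp1) (by exact_mod_cast ha))]
  push_cast [Nat.cast_sub (Fact.out : p.Prime).one_le] at hord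
  linarith

end AffineMoment

section RelativePolytope

variable {K : Type} [Field K] {n s : ℕ} (f : (Fin n → ℤ) →₀ K)
  (P : ((Fin n → ℤ) × (Fin s → ℤ)) →₀ K)

theorem zero_mem_relPoly : 0 ∈ relPoly f P :=
  subset_convexHull ℝ _ (Set.mem_insert _ _)

variable {f P}

theorem toR_mem_relPoly {gm : (Fin n → ℤ) × (Fin s → ℤ)} (hgm : gm ∈ P.support)
    (hwt : gauge (NewtonPoly f) (toR gm.1) < 1) : toR gm.2 ∈ relPoly f P := by
  have hsmul := (convex_convexHull ℝ _).smul_mem_of_zero_mem (zero_mem_relPoly f P)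
    (subset_convexHull ℝ _ (Set.mem_insert_of_mem _ (Set.mem_image_of_mem _ hgm)))
    (t := 1 - gauge (NewtonPoly f) (toR gm.1))
    ⟨sub_nonneg.2 hwt.le, sub_le_self 1 (gauge_nonneg _)⟩
  rwa [smul_inv_smul₀ (sub_pos.2 hwt).ne'] at hsmul

theorem apply_eq_zero_of_mem_coneOf_relPoly {j : Fin s} (hj : ∀ gm ∈ P.support, gm.2 j = 0)
    {v : Fin s → ℝ} (hv : v ∈ coneOf (relPoly f P)) : v j = 0 := by
  obtain ⟨c, -, γ, hγ, rfl⟩ := hv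
  have hsub : relPoly f P ⊆ LinearMap.ker (LinearMap.proj j : (Fin s → ℝ) →ₗ[ℝ] ℝ) := by
    refine convexHull_min (Set.insert_subset (zero_mem _) ?_) (Submodule.convex _)
    rintro _ ⟨gm, hgm, rfl⟩
    simp [toR, hj gm hgm]
  have hγj : γ j = 0 := hsub hγ
  simp [hγj]

theorem exists_mem_support_pos (hPnn : ∀ gm ∈ P.support, ∀ j, (0 : ℤ) ≤ gm.2 j)
    (hwne : ∃ u : Fin s → ℤ, (∀ i, (1 : ℤ) ≤ u i) ∧ toR u ∈ coneOf (relPoly f P)) (j : Fin s) :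
    ∃ gm ∈ P.support, 0 < gm.2 j := by
  by_contra! hle
  obtain ⟨u, hu, hcone⟩ := hwne
  have huj : (u j : ℝ) = 0 := apply_eq_zero_of_mem_coneOf_relPoly
    (fun gm hgm => (hle gm hgm).antisymm (hPnn gm hgm j)) hcone
  exact (zero_lt_one.trans_le (hu j)).ne' (Int.cast_eq_zero.1 huj)

end RelativePolytope

/-- `p`-adic divisibility of the moment sums over the affine base:
`N_m ∈ ℤ[ζ_p]` and `ord_q(N_m) ≥ m·w(Γ)` for the maximal ideal `𝔭` of `ℤ[ζ_p]` over `p`,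
where `ord_q = v_𝔭/((p-1)·a)` (with `ord_q 0 = +∞`, rendered as a disjunction). -/
theorem tensor_power_affine_moment_divisibility
    (p a n s k : ℕ) [Fact p.Prime] (ha : 1 ≤ a) (hn : 1 ≤ n) (hs : 1 ≤ s) (hk : 1 ≤ k)
    (ζ : ℂ) (hζ : IsPrimitiveRoot ζ p)
    (Θ : AddChar (ZMod p) ℂ) (hΘ : Θ ≠ 1) (hΘval : ∀ z, Θ z ∈ cyclo ζ)
    (f : (Fin n → ℤ) →₀ Omg p) (hf : ∀ μ, f μ ^ p ^ a = f μ)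
    (P : ((Fin n → ℤ) × (Fin s → ℤ)) →₀ Omg p) (hP : ∀ gm, P gm ^ p ^ a = P gm)
    (hPnn : ∀ gm ∈ P.support, ∀ j, (0 : ℤ) ≤ gm.2 j)
    (hdim : Submodule.span ℝ (NewtonPoly f) = ⊤)
    (hnd : Nondeg f)
    (hwt : ∀ gm ∈ P.support, gauge (NewtonPoly f) (toR gm.1) < 1)
    (hΓ : relPoly f P ≠ {0})
    (hwne : ∃ u : Fin s → ℤ, (∀ i, (1 : ℤ) ≤ u i) ∧ toR u ∈ coneOf (relPoly f P))
    (m : ℕ) (hm : 1 ≤ m) :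
    Naff p a Θ f P k m ∈ Subring.closure ({ζ} : Set ℂ) ∧
    ∀ Pid : Ideal (Subring.closure ({ζ} : Set ℂ)), Pid.IsMaximal →
      (p : Subring.closure ({ζ} : Set ℂ)) ∈ Pid →
      (Naff p a Θ f P k m = 0 ∨
        (m : ℝ) * wMin (relPoly f P) ≤
          (ordSub (Subring.closure ({ζ} : Set ℂ)) Pid (Naff p a Θ f P k m) : ℝ) /
            (((p : ℝ) - 1) * (a : ℝ))) := by
  exact tensor_power_affine_moment_divisibility_general ha hζ Θ hf hP hPnn
    (convex_convexHull ℝ _) (zero_mem_relPoly f P)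
    (fun gm hgm => toR_mem_relPoly hgm (hwt gm hgm)) (exists_mem_support_pos hPnn hwne) k hm

end HS
end
end

section
/- Bombieri-type lemma, part 1 (Lemma 2.1(1)): under the stated hypotheses, if the power series D(T) is entire then R ≥ S. -/
open scoped BigOperators Classical

noncomputable section

namespace HS

/-- `c(m) = binom(m+s-1, s-1)`. -/
def cbin (s m : ℕ) : ℕ := Nat.choose (m + s - 1) (s - 1)

/-- The partial product `∏_{m=0}^{M} (1 - q^m γ T)^{c(m)}` as a power series. -/
def Hpartial {K : Type} [Field K] (s : ℕ) (qK γ : K) (M : ℕ) : PowerSeries K :=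
  ∏ m ∈ Finset.range (M + 1),
    (1 - PowerSeries.C (qK ^ m * γ) * PowerSeries.X) ^ cbin s m

/-- Coefficientwise convergence of the partial products `∏_{m=0}^M (1-q^mγT)^{c(m)}`
to a power series `H`, with respect to the absolute value `v`. -/
def ConvergesTo {K : Type} [Field K] (v : AbsoluteValue K ℝ) (s : ℕ) (qK γ : K)
    (H : PowerSeries K) : Prop :=
  ∀ n : ℕ, ∀ ε : ℝ, 0 < ε → ∃ M0 : ℕ, ∀ M : ℕ, M0 ≤ M →
    v (PowerSeries.coeff n (Hpartial s qK γ M) - PowerSeries.coeff n H) < ε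

/-- Completeness of `K` with respect to `v`: every `v`-Cauchy sequence converges. -/
def IsCompleteWrt {K : Type} [Field K] (v : AbsoluteValue K ℝ) : Prop :=
  ∀ g : ℕ → K, (∀ ε : ℝ, 0 < ε → ∃ N, ∀ m₁, N ≤ m₁ → ∀ m₂, N ≤ m₂ → v (g m₁ - g m₂) < ε) →
    ∃ l : K, ∀ ε : ℝ, 0 < ε → ∃ N, ∀ m₁, N ≤ m₁ → v (g m₁ - l) < ε

/-- `D = ∑ c_n T^n` is entire: `|c_n|·M^n → 0` for every real `M > 0`. -/
def IsEntireWrt {K : Type} [Field K] (v : AbsoluteValue K ℝ) (D : PowerSeries K) : Prop :=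
  ∀ M : ℝ, 0 < M → Filter.Tendsto (fun n : ℕ => v (PowerSeries.coeff n D) * M ^ n)
    Filter.atTop (nhds 0)

/-!
Compare the Gauss norms at radius `r` of the two sides of `D * ∏ j, H(β_j) = ∏ i, H(α_i)`. On
partial products the Gauss norm is multiplicative, and that of `∏_m (1 - q^m γ T)^{c(m)}` is
`∏_m max(1, |q|^m |γ| r)^{c(m)}`. With `u = 1/|q|` and `|γ| r = u^N` the exponent of `u` is
`∑_{m < N} (N - m) c(m) = binom(N + s, s + 1)`.

Since `D` is entire with constant term `1`, it only increases the left-hand side, and its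
coefficients are bounded at a radius larger than `r`, which lets the lower bound pass from the
partial products to the limit. At `r = u^(k + L)`, where `u^(-k) ≤ |β_j|` and `|α_i| ≤ u^k`, this
gives `S * binom(L + s, s + 1) ≤ R * binom(L + 2 * k + s, s + 1)`. As `L → ∞` the quotient of the
two binomials tends to `1`, hence `S ≤ R`.
-/

open Filter Topology Polynomial PowerSeries

section CoeffTendsto

variable {A : Type*} [CommRing A] {v : AbsoluteValue A ℝ}

/-- Coefficientwise convergence, with respect to `v`, of a sequence of polynomials to a power
series. -/
def CoeffTendsto (v : AbsoluteValue A ℝ) (P : ℕ → A[X]) (f : A⟦X⟧) : Prop :=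
  ∀ n, Tendsto (fun M => v ((P M).coeff n - PowerSeries.coeff n f)) atTop (𝓝 0)

namespace CoeffTendsto

variable {P Q : ℕ → A[X]} {f g : A⟦X⟧}

theorem iff_tendsto_coeff :
    letI := v.toNormedRing
    CoeffTendsto v P f ↔
      ∀ n, Tendsto (fun M => (P M).coeff n) atTop (𝓝 (PowerSeries.coeff n f)) := by
  let := v.toNormedRing
  exact forall_congr' fun _ => (tendsto_iff_norm_sub_tendsto_zero (E := A)).symm

theorem of_eventually_coeff_eq
    (h : ∀ n, ∀ᶠ M in atTop, (P M).coeff n = PowerSeries.coeff n f) : CoeffTendsto v P f := by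
  let := v.toNormedRing
  exact iff_tendsto_coeff.2 fun n => tendsto_nhds_of_eventually_eq (h n)

theorem trunc (f : A⟦X⟧) : CoeffTendsto v (fun M => PowerSeries.trunc M f) f :=
  of_eventually_coeff_eq fun n => (eventually_gt_atTop n).mono fun M hM => by
    rw [PowerSeries.coeff_trunc, if_pos hM]

theorem mul (hP : CoeffTendsto v P f) (hQ : CoeffTendsto v Q g) :
    CoeffTendsto v (fun M => P M * Q M) (f * g) := by
  let := v.toNormedRing
  rw [iff_tendsto_coeff] at hP hQ ⊢
  intro n
  simp only [Polynomial.coeff_mul, PowerSeries.coeff_mul]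
  exact tendsto_finsetSum _ fun ij _ => (hP ij.1).mul (hQ ij.2)

theorem prod {ι : Type*} {P : ι → ℕ → A[X]} {f : ι → A⟦X⟧} (t : Finset ι)
    (h : ∀ i ∈ t, CoeffTendsto v (P i) (f i)) :
    CoeffTendsto v (fun M => ∏ i ∈ t, P i M) (∏ i ∈ t, f i) := by
  induction t using Finset.cons_induction with
  | empty =>
    refine of_eventually_coeff_eq fun n => Eventually.of_forall fun _ => ?_
    simp only [Finset.prod_empty, Polynomial.coeff_one, PowerSeries.coeff_one]
  | cons a t ha ih =>
    simp only [Finset.prod_cons]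
    exact (h a (Finset.mem_cons_self a t)).mul
      (ih fun i hi => h i (Finset.mem_cons_of_mem hi))

theorem tendsto_abv_coeff (h : CoeffTendsto v P f) (n : ℕ) :
    Tendsto (fun M => v ((P M).coeff n)) atTop (𝓝 (v (PowerSeries.coeff n f))) := by
  let := v.toNormedRing
  exact (iff_tendsto_coeff.1 h n).norm

theorem coeff_eq_of_forall {n : ℕ} {a : A} (h : CoeffTendsto v P f)
    (hP : ∀ M, (P M).coeff n = a) : PowerSeries.coeff n f = a := by
  let := v.toNormedRing
  exact tendsto_nhds_unique (iff_tendsto_coeff.1 h n) (by simp only [hP, tendsto_const_nhds])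

theorem abv_coeff_mul_pow_le {r B : ℝ} (h : CoeffTendsto v P f) (hr : 0 ≤ r)
    (hP : ∀ M, (P M).gaussNorm v r ≤ B) (n : ℕ) : v (PowerSeries.coeff n f) * r ^ n ≤ B :=
  le_of_tendsto' ((h.tendsto_abv_coeff n).mul_const (r ^ n)) fun M =>
    ((P M).le_gaussNorm v hr n).trans (hP M)

-- The bound at the larger radius `r'` makes the tails uniformly small at radius `r`, so that the
-- Gauss norms at `r` are attained among finitely many coefficients.
theorem exists_le_abv_coeff_mul_pow {r r' B c : ℝ} (h : CoeffTendsto v P f) (hr : 0 < r)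
    (hrr' : r < r') (hB : ∀ M, (P M).gaussNorm v r' ≤ B) (hc : 0 < c)
    (hcP : ∀ᶠ M in atTop, c ≤ (P M).gaussNorm v r) :
    ∃ n, c ≤ v (PowerSeries.coeff n f) * r ^ n := by
  by_contra! hlt
  have hr' : 0 < r' := hr.trans hrr'
  have htail : Tendsto (fun n : ℕ => B * (r / r') ^ n) atTop (𝓝 0) := by
    simpa only [mul_zero] using (tendsto_pow_atTop_nhds_zero_of_lt_one (by positivity)
      ((div_lt_one hr').2 hrr')).const_mul B
  obtain ⟨n₀, hn₀⟩ := eventually_atTop.1 (htail.eventually_lt_const hc)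
  have hhead : ∀ᶠ M in atTop, ∀ n ∈ Finset.range n₀, v ((P M).coeff n) * r ^ n < c :=
    (eventually_all_finset _).2 fun n _ =>
      ((h.tendsto_abv_coeff n).mul_const (r ^ n)).eventually_lt_const (hlt n)
  obtain ⟨M, hM, hcM⟩ := (hhead.and hcP).exists
  obtain ⟨n, hn⟩ := (P M).exists_eq_gaussNorm v r
  rw [hn] at hcM
  rcases lt_or_ge n n₀ with hlow | hhigh
  · exact hcM.not_gt (hM n (Finset.mem_range.2 hlow))
  · have hbound : v ((P M).coeff n) * r ^ n ≤ B * (r / r') ^ n := by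
      calc v ((P M).coeff n) * r ^ n = v ((P M).coeff n) * r' ^ n * (r / r') ^ n := by
            rw [mul_assoc, ← mul_pow, mul_div_cancel₀ r hr'.ne']
        _ ≤ B * (r / r') ^ n := by
            gcongr
            exact ((P M).le_gaussNorm v hr'.le n).trans (hB M)
    exact (hcM.trans hbound).not_gt (hn₀ n hhigh)

end CoeffTendsto

end CoeffTendsto

section GaussNorm

variable {A : Type*} [CommRing A] {v : AbsoluteValue A ℝ} {r : ℝ}

theorem gaussNorm_le_of_abv_coeff_mul_pow_le {P : A[X]} {B : ℝ}
    (h : ∀ n, v (P.coeff n) * r ^ n ≤ B) : P.gaussNorm v r ≤ B := by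
  obtain ⟨n, hn⟩ := P.exists_eq_gaussNorm v r
  exact hn.trans_le (h n)

theorem gaussNorm_trunc_le {f : A⟦X⟧} {B : ℝ} (h : ∀ n, v (PowerSeries.coeff n f) * r ^ n ≤ B)
    (hB : 0 ≤ B) (M : ℕ) : (PowerSeries.trunc M f).gaussNorm v r ≤ B := by
  refine gaussNorm_le_of_abv_coeff_mul_pow_le fun n => ?_
  rw [PowerSeries.coeff_trunc]
  split_ifs
  · exact h n
  · simpa only [map_zero, zero_mul] using hB

variable [Nontrivial A]

theorem one_le_gaussNorm {P : A[X]} (hP : P.coeff 0 = 1) (hr : 0 ≤ r) :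
    1 ≤ P.gaussNorm v r := by
  simpa only [hP, map_one, pow_zero, mul_one] using P.le_gaussNorm v hr 0

theorem gaussNorm_one_sub_C_mul_X (hr : 0 ≤ r) (a : A) :
    (1 - Polynomial.C a * Polynomial.X).gaussNorm v r = max 1 (v a * r) := by
  have hcoeff : ∀ n, (1 - Polynomial.C a * Polynomial.X).coeff (n + 2) = 0 := fun n => by
    simp [Polynomial.coeff_one]
  have hcoeff_one : (1 - Polynomial.C a * Polynomial.X).coeff 1 = -a := by
    simp [Polynomial.coeff_one]
  refine le_antisymm (gaussNorm_le_of_abv_coeff_mul_pow_le fun n => ?_)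
    (max_le (one_le_gaussNorm (by simp) hr) ?_)
  · match n with
    | 0 => simp
    | 1 => simp [hcoeff_one]
    | n + 2 => simp [hcoeff]
  · calc v a * r = v ((1 - Polynomial.C a * Polynomial.X).coeff 1) * r ^ 1 := by
          rw [hcoeff_one, v.map_neg, pow_one]
      _ ≤ _ := Polynomial.le_gaussNorm v _ hr 1

theorem gaussNorm_prod (hna : IsNonarchimedean v) (hr : 0 < r) {ι : Type*} (t : Finset ι)
    (P : ι → A[X]) : (∏ i ∈ t, P i).gaussNorm v r = ∏ i ∈ t, (P i).gaussNorm v r := by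
  have := Polynomial.gaussNorm_isAbsoluteValue hna hr
  exact map_prod (IsAbsoluteValue.toAbsoluteValue (Polynomial.gaussNorm v r)) P t

theorem gaussNorm_pow (hna : IsNonarchimedean v) (hr : 0 < r) (P : A[X]) (k : ℕ) :
    (P ^ k).gaussNorm v r = P.gaussNorm v r ^ k := by
  have := Polynomial.gaussNorm_isAbsoluteValue hna hr
  exact map_pow (IsAbsoluteValue.toAbsoluteValue (Polynomial.gaussNorm v r)) P k

end GaussNorm

section Binomial

theorem cbin_succ (k m : ℕ) : cbin (k + 1) m = (m + k).choose k := rfl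

theorem sum_range_sub_mul_cbin {s : ℕ} (hs : 1 ≤ s) (N : ℕ) :
    ∑ m ∈ Finset.range N, (N - m) * cbin s m = (N + s).choose (s + 1) := by
  obtain ⟨k, rfl⟩ := Nat.exists_eq_add_of_le' hs
  simp only [cbin_succ]
  induction N with
  | zero => simp
  | succ N ih =>
    calc ∑ m ∈ Finset.range (N + 1), (N + 1 - m) * (m + k).choose k
        = ∑ m ∈ Finset.range (N + 1), ((m + k).choose k + (N - m) * (m + k).choose k) :=
          Finset.sum_congr rfl fun m hm => by
            rw [Nat.succ_sub (Finset.mem_range_succ_iff.1 hm), Nat.succ_mul, add_comm]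
      _ = (N + k + 1).choose (k + 1) + (N + (k + 1)).choose (k + 1 + 1) := by
          rw [Finset.sum_add_distrib, Nat.sum_range_add_choose, Finset.sum_range_succ, ih]
          simp
      _ = (N + 1 + (k + 1)).choose (k + 1 + 1) := by
          rw [add_right_comm N 1, Nat.choose_succ_succ' (N + (k + 1)), add_assoc N k]

theorem tendsto_choose_add_div_choose (t d : ℕ) :
    Tendsto (fun n : ℕ => ((n + d).choose t : ℝ) / n.choose t) atTop (𝓝 1) := by
  have hshift : Asymptotics.IsEquivalent atTop (fun n : ℕ => ((n + d : ℕ) : ℝ))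
      (fun n : ℕ => (n : ℝ)) := by
    refine (Asymptotics.isEquivalent_of_tendsto_one ?_).symm
    simpa only [Pi.div_def, Nat.cast_add] using tendsto_natCast_div_add_atTop (d : ℝ)
  have hchoose : Asymptotics.IsEquivalent atTop (fun n : ℕ => ((n + d).choose t : ℝ))
      (fun n : ℕ => (n.choose t : ℝ)) :=
    ((isEquivalent_choose t).comp_tendsto (tendsto_add_atTop_nat d)).trans
      (((hshift.pow t).div Asymptotics.IsEquivalent.refl).trans (isEquivalent_choose t).symm)
  refine (Asymptotics.isEquivalent_iff_tendsto_one ?_).1 hchoose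
  filter_upwards [eventually_ge_atTop t] with n hn
  exact Nat.cast_ne_zero.2 (Nat.choose_pos hn).ne'

theorem le_of_eventually_mul_choose_le {a b t d : ℕ}
    (h : ∀ᶠ n in atTop, a * n.choose t ≤ b * (n + d).choose t) : a ≤ b := by
  have hlim : Tendsto (fun n : ℕ => (b : ℝ) * (((n + d).choose t : ℝ) / n.choose t)) atTop
      (𝓝 b) := by
    simpa only [mul_one] using (tendsto_choose_add_div_choose t d).const_mul (b : ℝ)
  refine Nat.cast_le.1 (ge_of_tendsto hlim ?_)
  filter_upwards [h, eventually_ge_atTop t] with n hn htn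
  rw [← mul_div_assoc, le_div_iff₀ (Nat.cast_pos.2 (Nat.choose_pos htn))]
  exact_mod_cast hn

end Binomial

section PartialProducts

theorem max_one_inv_pow_mul_pow {u : ℝ} (hu : 1 ≤ u) (m N : ℕ) :
    max 1 (u⁻¹ ^ m * u ^ N) = u ^ (N - m) := by
  have hu₀ : 0 < u := one_pos.trans_le hu
  rw [inv_pow, inv_mul_eq_div]
  rcases le_total m N with h | h
  · rw [div_eq_of_eq_mul (pow_pos hu₀ m).ne' (pow_sub_mul_pow u h).symm,
      max_eq_right (one_le_pow₀ hu)]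
  · rw [Nat.sub_eq_zero_of_le h, pow_zero,
      max_eq_left (div_le_one_of_le₀ (pow_le_pow_right₀ hu h) (by positivity))]

variable {A : Type*} [CommRing A]

/-- The polynomial underlying the power series `Hpartial s q γ M`. -/
def HpartialPoly (s : ℕ) (q γ : A) (M : ℕ) : A[X] :=
  ∏ m ∈ Finset.range (M + 1), (1 - Polynomial.C (q ^ m * γ) * Polynomial.X) ^ cbin s m

theorem coe_HpartialPoly {K : Type} [Field K] (s : ℕ) (q γ : K) (M : ℕ) :
    (HpartialPoly s q γ M : K⟦X⟧) = Hpartial s q γ M := by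
  simp only [HpartialPoly, Hpartial, ← Polynomial.coeToPowerSeries.ringHom_apply, map_prod,
    map_pow, map_sub, map_one, map_mul]
  simp only [Polynomial.coeToPowerSeries.ringHom_apply, Polynomial.coe_C, Polynomial.coe_X]

theorem ConvergesTo.coeffTendsto {K : Type} [Field K] {v : AbsoluteValue K ℝ} {s : ℕ} {q γ : K}
    {H : K⟦X⟧} (h : ConvergesTo v s q γ H) : CoeffTendsto v (HpartialPoly s q γ) H := by
  refine fun n => Metric.tendsto_atTop.2 fun ε hε => (h n ε hε).imp fun M₀ hM₀ M hM => ?_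
  rw [dist_zero_right, Real.norm_of_nonneg (v.nonneg _), ← Polynomial.coeff_coe, coe_HpartialPoly]
  exact hM₀ M hM

theorem coeff_zero_HpartialPoly (s : ℕ) (q γ : A) (M : ℕ) :
    (HpartialPoly s q γ M).coeff 0 = 1 := by
  simp [HpartialPoly, Polynomial.coeff_zero_eq_eval_zero, Polynomial.eval_prod]

variable {v : AbsoluteValue A ℝ} {s : ℕ} {q γ : A} {r u : ℝ}

theorem coeff_zero_prod_eq_one {ι : Type*} [Fintype ι] {γ : ι → A}
    {H : ι → A⟦X⟧}
    (hH : ∀ i, CoeffTendsto v (HpartialPoly s q (γ i)) (H i)) :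
    PowerSeries.coeff 0 (∏ i, H i) = 1 := by
  rw [PowerSeries.coeff_zero_eq_constantCoeff_apply, map_prod]
  refine Finset.prod_eq_one fun i _ => ?_
  rw [← PowerSeries.coeff_zero_eq_constantCoeff_apply]
  exact (hH i).coeff_eq_of_forall (coeff_zero_HpartialPoly s q (γ i))

variable [Nontrivial A]

theorem gaussNorm_HpartialPoly (hna : IsNonarchimedean v) (hr : 0 < r) (s : ℕ) (q γ : A) (M : ℕ) :
    (HpartialPoly s q γ M).gaussNorm v r =
      ∏ m ∈ Finset.range (M + 1), max 1 (v q ^ m * (v γ * r)) ^ cbin s m := by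
  simp only [HpartialPoly, gaussNorm_prod hna hr, gaussNorm_pow hna hr,
    gaussNorm_one_sub_C_mul_X hr.le]
  simp only [map_mul, map_pow, mul_assoc]

theorem gaussNorm_HpartialPoly_le (hna : IsNonarchimedean v) (hs : 1 ≤ s) (hr : 0 < r)
    (hu : 1 ≤ u) (hq : v q = u⁻¹) {N : ℕ} (hγ : v γ * r ≤ u ^ N) (M : ℕ) :
    (HpartialPoly s q γ M).gaussNorm v r ≤ u ^ (N + s).choose (s + 1) := by
  calc (HpartialPoly s q γ M).gaussNorm v r
      ≤ ∏ m ∈ Finset.range (M + 1), max 1 (u⁻¹ ^ m * u ^ N) ^ cbin s m := by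
        rw [gaussNorm_HpartialPoly hna hr, hq]
        gcongr
    _ = u ^ ∑ m ∈ Finset.range (M + 1), (N - m) * cbin s m := by
        simp only [max_one_inv_pow_mul_pow hu, ← pow_mul, Finset.prod_pow_eq_pow_sum]
    _ ≤ u ^ (N + s).choose (s + 1) := by
        rw [← sum_range_sub_mul_cbin hs]
        refine pow_le_pow_right₀ hu (Finset.sum_le_sum_of_ne_zero fun m _ hm => ?_)
        exact Finset.mem_range.2 (Nat.lt_of_sub_ne_zero (left_ne_zero_of_mul hm))

theorem le_gaussNorm_HpartialPoly (hna : IsNonarchimedean v) (hs : 1 ≤ s) (hr : 0 < r)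
    (hu : 1 ≤ u) (hq : v q = u⁻¹) {N : ℕ} (hγ : u ^ N ≤ v γ * r) {M : ℕ} (hNM : N ≤ M) :
    u ^ (N + s).choose (s + 1) ≤ (HpartialPoly s q γ M).gaussNorm v r := by
  calc u ^ (N + s).choose (s + 1)
      ≤ u ^ ∑ m ∈ Finset.range (M + 1), (N - m) * cbin s m := by
        rw [← sum_range_sub_mul_cbin hs]
        gcongr
        omega
    _ = ∏ m ∈ Finset.range (M + 1), max 1 (u⁻¹ ^ m * u ^ N) ^ cbin s m := by
        simp only [max_one_inv_pow_mul_pow hu, ← pow_mul, Finset.prod_pow_eq_pow_sum]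
    _ ≤ (HpartialPoly s q γ M).gaussNorm v r := by
        rw [gaussNorm_HpartialPoly hna hr, hq]
        gcongr

theorem exists_gaussNorm_HpartialPoly_le (hna : IsNonarchimedean v) (hs : 1 ≤ s) (hr : 0 < r)
    (hu : 1 < u) (hq : v q = u⁻¹) (γ : A) :
    ∃ B, ∀ M, (HpartialPoly s q γ M).gaussNorm v r ≤ B := by
  obtain ⟨N, hN⟩ := pow_unbounded_of_one_lt (v γ * r) hu
  exact ⟨_, gaussNorm_HpartialPoly_le hna hs hr hu.le hq hN.le⟩

end PartialProducts

section GrowthComparison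

variable {A : Type*} [CommRing A] [Nontrivial A] {v : AbsoluteValue A ℝ} {s : ℕ} {q : A} {r u : ℝ}
  {ι κ : Type*} [Fintype ι] [Fintype κ] {α : ι → A} {β : κ → A} {Hα : ι → A⟦X⟧} {Hβ : κ → A⟦X⟧}
  {D : A⟦X⟧}

theorem abv_coeff_prod_mul_pow_le (hna : IsNonarchimedean v) (hs : 1 ≤ s) (hr : 0 < r)
    (hu : 1 ≤ u) (hq : v q = u⁻¹) (hHα : ∀ i, CoeffTendsto v (HpartialPoly s q (α i)) (Hα i))
    {N : ℕ} (hα : ∀ i, v (α i) * r ≤ u ^ N) (n : ℕ) :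
    v (PowerSeries.coeff n (∏ i, Hα i)) * r ^ n ≤
      (u ^ (N + s).choose (s + 1)) ^ Fintype.card ι := by
  refine (CoeffTendsto.prod Finset.univ fun i _ => hHα i).abv_coeff_mul_pow_le hr.le
    (fun M => ?_) n
  rw [gaussNorm_prod hna hr, ← Finset.card_univ, ← Finset.prod_const]
  exact Finset.prod_le_prod (fun i _ => Polynomial.gaussNorm_nonneg v _ hr.le) fun i _ =>
    gaussNorm_HpartialPoly_le hna hs hr hu hq (hα i) M

theorem exists_le_abv_coeff_mul_prod_mul_pow (hna : IsNonarchimedean v) (hs : 1 ≤ s) (hr : 0 < r)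
    (hu : 1 < u) (hq : v q = u⁻¹) (hHβ : ∀ j, CoeffTendsto v (HpartialPoly s q (β j)) (Hβ j))
    {N : ℕ} (hβ : ∀ j, u ^ N ≤ v (β j) * r) (hD₀ : PowerSeries.coeff 0 D = 1) {r' B : ℝ}
    (hrr' : r < r') (hD : ∀ n, v (PowerSeries.coeff n D) * r' ^ n ≤ B) :
    ∃ n, (u ^ (N + s).choose (s + 1)) ^ Fintype.card κ ≤
      v (PowerSeries.coeff n (D * ∏ j, Hβ j)) * r ^ n := by
  have hr' : 0 < r' := hr.trans hrr'
  have hB : 0 ≤ B := le_trans (by positivity) (hD 0)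
  choose C hC using fun j => exists_gaussNorm_HpartialPoly_le hna hs hr' hu hq (β j)
  refine ((CoeffTendsto.trunc D).mul (CoeffTendsto.prod Finset.univ fun j _ =>
    hHβ j)).exists_le_abv_coeff_mul_pow (B := B * ∏ j, C j) hr hrr' (fun M => ?_)
    (by positivity) ?_
  · rw [Polynomial.gaussNorm_mul hna hr', gaussNorm_prod hna hr']
    have hnonneg (P : A[X]) : 0 ≤ P.gaussNorm v r' := P.gaussNorm_nonneg v hr'.le
    gcongr with j
    · exact Finset.prod_nonneg fun j _ => hnonneg _
    · exact gaussNorm_trunc_le hD hB M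
    · exact fun j _ => hnonneg _
    · exact hC j M
  · filter_upwards [eventually_ge_atTop N, eventually_gt_atTop 0] with M hNM hM
    rw [Polynomial.gaussNorm_mul hna hr, gaussNorm_prod hna hr, ← Finset.card_univ,
      ← Finset.prod_const]
    have htrunc : 1 ≤ (PowerSeries.trunc M D).gaussNorm v r :=
      one_le_gaussNorm (by rw [PowerSeries.coeff_trunc, if_pos hM, hD₀]) hr.le
    have hprod : ∏ _j : κ, u ^ (N + s).choose (s + 1) ≤
        ∏ j, (HpartialPoly s q (β j) M).gaussNorm v r :=
      Finset.prod_le_prod (fun _ _ => by positivity) fun j _ =>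
        le_gaussNorm_HpartialPoly hna hs hr hu.le hq (hβ j) hNM
    exact hprod.trans (le_mul_of_one_le_left (le_trans (by positivity) hprod) htrunc)

theorem card_mul_choose_le_card_mul_choose (hna : IsNonarchimedean v) (hs : 1 ≤ s) (hr : 0 < r)
    (hu : 1 < u) (hq : v q = u⁻¹) (hHα : ∀ i, CoeffTendsto v (HpartialPoly s q (α i)) (Hα i))
    (hHβ : ∀ j, CoeffTendsto v (HpartialPoly s q (β j)) (Hβ j))
    (hD : D * ∏ j, Hβ j = ∏ i, Hα i) {r' B : ℝ} (hrr' : r < r')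
    (hDB : ∀ n, v (PowerSeries.coeff n D) * r' ^ n ≤ B) {L N : ℕ}
    (hβ : ∀ j, u ^ L ≤ v (β j) * r) (hα : ∀ i, v (α i) * r ≤ u ^ N) :
    Fintype.card κ * (L + s).choose (s + 1) ≤ Fintype.card ι * (N + s).choose (s + 1) := by
  have hD₀ : PowerSeries.coeff 0 D = 1 := by
    rw [← coeff_zero_prod_eq_one hHα, ← hD, PowerSeries.coeff_mul,
      Finset.Nat.antidiagonal_zero, Finset.sum_singleton, coeff_zero_prod_eq_one hHβ, mul_one]
  obtain ⟨n, hn⟩ := exists_le_abv_coeff_mul_prod_mul_pow hna hs hr hu hq hHβ hβ hD₀ hrr' hDB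
  rw [hD] at hn
  have hpow := hn.trans (abv_coeff_prod_mul_pow_le hna hs hr hu.le hq hHα hα n)
  rwa [← pow_mul, ← pow_mul, pow_le_pow_iff_right₀ hu, mul_comm, mul_comm _ (Fintype.card ι)]
    at hpow

end GrowthComparison

theorem bombieri_lemma_part1_general {K : Type} [Field K] {v : AbsoluteValue K ℝ}
    (hna : IsNonarchimedean v) {s : ℕ} (hs : 1 ≤ s) {q : K} (hq₀ : q ≠ 0) (hq₁ : v q < 1)
    {ι κ : Type*} [Fintype ι] [Fintype κ] {α : ι → K} {β : κ → K} (hβ₀ : ∀ j, β j ≠ 0)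
    {Hα : ι → K⟦X⟧} {Hβ : κ → K⟦X⟧} (hHα : ∀ i, ConvergesTo v s q (α i) (Hα i))
    (hHβ : ∀ j, ConvergesTo v s q (β j) (Hβ j)) {D : K⟦X⟧} (hD : D * ∏ j, Hβ j = ∏ i, Hα i)
    (hent : IsEntireWrt v D) : Fintype.card κ ≤ Fintype.card ι := by
  set u : ℝ := (v q)⁻¹
  have hu : 1 < u := (one_lt_inv₀ (v.pos hq₀)).2 hq₁
  have hpow : Tendsto (fun k : ℕ => u ^ k) atTop atTop := tendsto_pow_atTop_atTop_of_one_lt hu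
  obtain ⟨k, hα, hβ⟩ : ∃ k : ℕ, (∀ i, v (α i) ≤ u ^ k) ∧ ∀ j, 1 ≤ v (β j) * u ^ k :=
    ((eventually_all.2 fun i => hpow.eventually_ge_atTop (v (α i))).and (eventually_all.2 fun j =>
      (hpow.const_mul_atTop (v.pos (hβ₀ j))).eventually_ge_atTop 1)).exists
  refine le_of_eventually_mul_choose_le (t := s + 1) (d := 2 * k) ?_
  filter_upwards [eventually_ge_atTop s] with n hn
  obtain ⟨L, rfl⟩ := Nat.exists_eq_add_of_le' hn
  have hr : 0 < u ^ (k + L) := by positivity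
  obtain ⟨B, hB⟩ := (hent (2 * u ^ (k + L)) (by positivity)).bddAbove_range
  have hDB : ∀ n, v (PowerSeries.coeff n D) * (2 * u ^ (k + L)) ^ n ≤ B := by
    simpa only [mem_upperBounds, Set.forall_mem_range] using hB
  rw [add_right_comm]
  refine card_mul_choose_le_card_mul_choose hna hs hr hu (inv_inv _).symm
    (fun i => (hHα i).coeffTendsto) (fun j => (hHβ j).coeffTendsto) hD
    (lt_two_mul_self hr) hDB (fun j => ?_) (fun i => ?_)
  · rw [pow_add, ← mul_assoc]
    exact le_mul_of_one_le_left (by positivity) (hβ j)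
  · calc v (α i) * u ^ (k + L) ≤ u ^ k * u ^ (k + L) := by gcongr; exact hα i
      _ = u ^ (L + 2 * k) := by ring

/-- Bombieri-type lemma, part 1: if all the `α_i, β_j` are pairwise `q`-related,
`α_i ≠ β_j`, and `D(T) = ∏_i H(α_i) / ∏_j H(β_j)` is entire, then `R ≥ S`. -/
theorem bombieri_lemma_part1
    (p a s : ℕ) (hp : p.Prime) (ha : 1 ≤ a) (hs : 1 ≤ s)
    (K : Type) [Field K] (v : AbsoluteValue K ℝ)
    (hna : ∀ x y : K, v (x + y) ≤ max (v x) (v y))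
    (hres : ∀ r : ℚ, v ((r : K)) = (padicNorm p r : ℝ))
    (hcompl : IsCompleteWrt v)
    (R S : ℕ) (hR : 1 ≤ R) (α : Fin R → K) (β : Fin S → K)
    (hα0 : ∀ i, α i ≠ 0) (hβ0 : ∀ j, β j ≠ 0)
    (hrel : ∀ x ∈ Set.range α ∪ Set.range β, ∀ y ∈ Set.range α ∪ Set.range β,
      ∃ τ : ℤ, x = ((p : K) ^ a) ^ τ * y)
    (hne : ∀ i j, α i ≠ β j)
    (Hα : Fin R → PowerSeries K) (Hβ : Fin S → PowerSeries K)
    (hHα : ∀ i, ConvergesTo v s ((p : K) ^ a) (α i) (Hα i))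
    (hHβ : ∀ j, ConvergesTo v s ((p : K) ^ a) (β j) (Hβ j))
    (D : PowerSeries K)
    (hD : D * ∏ j, Hβ j = ∏ i, Hα i)
    (hent : IsEntireWrt v D) :
    S ≤ R := by
  have hp_abv : v (p : K) = (p : ℝ)⁻¹ := by
    have := Fact.mk hp
    simpa using hres p
  have hp_lt : v (p : K) < 1 := hp_abv ▸ inv_lt_one_of_one_lt₀ (mod_cast hp.one_lt)
  have hp_ne : (p : K) ≠ 0 := v.pos_iff.1 (hp_abv ▸ inv_pos.2 (mod_cast hp.pos))
  have hq_lt : v ((p : K) ^ a) < 1 :=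
    v.map_pow p a ▸ pow_lt_one₀ (v.nonneg _) hp_lt (Nat.one_le_iff_ne_zero.1 ha)
  simpa only [Fintype.card_fin] using bombieri_lemma_part1_general hna hs (pow_ne_zero a hp_ne)
    hq_lt hβ0 hHα hHβ hD hent

end HS
end
end

section
/- Bombieri-type lemma, part 2 (Lemma 2.1(2)): under the stated hypotheses, if the power series D(T) is entire then there exist an index i_0 ∈ {1,...,R}, nonnegative integers m_1,...,m_R and strictly positive integers n_1,...,n_S such that, setting γ := α_{i_0}, one has α_i = q^{m_i}·γ for all i = 1,...,R and β_j = q^{n_j}·γ for all j = 1,...,S. -/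
open scoped BigOperators Classical

noncomputable section

namespace HS

/-!
Suppose `D` is entire and that some `β j` has absolute value larger than every `α i`; choose it
with `|β j|` maximal and rescale `T` so that `β j = 1`. The series `H(α i)` and `H(β j)` then have
coefficients in the valuation ring, and since `q` reduces to `0`, their reductions are
`(1 - ᾱ T)^{c 0} = 1` and `(1 - β̄ T)^{c 0}`. As `∏ H(β j)` has unit constant term, `D` is integral
too, and because its coefficients tend to `0` its reduction is a polynomial. Hence `1 - T` divides
`1` in `k[T]`, which is absurd. So an `α i₀` of maximal absolute value dominates all `α i` and
`β j`; the powers of `q` linking them to `α i₀` have nonnegative exponents, and `α i₀ ≠ β j`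
excludes the exponent `0` for `β j`.
-/

open Filter (Tendsto atTop eventually_atTop)
open IsLocalRing (residue ResidueField)
open scoped Topology PowerSeries.WithPiTopology

section PartialProduct

open PowerSeries

variable {R : Type*} [CommRing R]

/-- The partial product `∏_{m ≤ M} (1 - q^m γ X)^{c m}` with arbitrary exponents `c m` in place of
the binomial coefficients of `Hpartial`, over any commutative ring so that it can be mapped to a
residue field. -/
def partialProd (c : ℕ → ℕ) (q γ : R) (M : ℕ) : R⟦X⟧ :=
  ∏ m ∈ Finset.range (M + 1), (1 - C (q ^ m * γ) * X) ^ c m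

theorem map_partialProd {S : Type*} [CommRing S] (f : R →+* S) (c : ℕ → ℕ) (q γ : R) (M : ℕ) :
    map f (partialProd c q γ M) = partialProd c (f q) (f γ) M := by
  simp [partialProd]

theorem partialProd_zero_left (c : ℕ → ℕ) (γ : R) (M : ℕ) :
    partialProd c 0 γ M = (1 - C γ * X) ^ c 0 := by
  simp [partialProd, Finset.prod_range_succ']

theorem rescale_C (x a : R) : rescale x (C a) = C a := by
  ext n
  rcases eq_or_ne n 0 with rfl | hn <;> simp [coeff_C, *]

theorem rescale_partialProd (x : R) (c : ℕ → ℕ) (q γ : R) (M : ℕ) :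
    rescale x (partialProd c q γ M) = partialProd c q (γ * x) M := by
  simp [partialProd, rescale_X, rescale_C, mul_assoc]

theorem tendsto_partialProd_rescale [TopologicalSpace R] [ContinuousMul R] {c : ℕ → ℕ} {q γ : R}
    {H : R⟦X⟧} (hH : Tendsto (partialProd c q γ) atTop (𝓝 H)) (x : R) :
    Tendsto (partialProd c q (γ * x)) atTop (𝓝 (rescale x H)) := by
  simp only [WithPiTopology.tendsto_iff_coeff_tendsto, ← rescale_partialProd,
    coeff_rescale] at hH ⊢
  exact fun n ↦ (hH n).const_mul _

theorem eq_zero_of_isUnit_one_sub_C_mul_X [IsReduced R] {b : R}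
    (h : IsUnit (1 - Polynomial.C b * Polynomial.X)) : b = 0 := by
  have h1 := ((Polynomial.isUnit_iff_coeff_isUnit_isNilpotent.1 h).2 1 one_ne_zero).eq_zero
  simpa [Polynomial.coeff_one] using h1

theorem eq_zero_of_mul_prod_one_sub_C_mul_X_pow_eq_one [IsReduced R] {κ : Type*} [Fintype κ]
    {P : Polynomial R} {b : κ → R} {e : ℕ} (he : e ≠ 0)
    (h : (P : R⟦X⟧) * ∏ j, (1 - C (b j) * X) ^ e = 1) (j : κ) : b j = 0 := by
  have polynomial_identity :
      P * ∏ j, (1 - Polynomial.C (b j) * Polynomial.X) ^ e = 1 := by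
    apply Polynomial.coe_injective
    rw [← Polynomial.coeToPowerSeries.ringHom_apply, map_mul, map_prod]
    simpa using h
  refine eq_zero_of_isUnit_one_sub_C_mul_X (isUnit_of_dvd_one ?_)
  calc 1 - Polynomial.C (b j) * Polynomial.X
      ∣ (1 - Polynomial.C (b j) * Polynomial.X) ^ e := dvd_pow_self _ he
    _ ∣ ∏ j, (1 - Polynomial.C (b j) * Polynomial.X) ^ e :=
      Finset.dvd_prod_of_mem (fun j ↦ (1 - Polynomial.C (b j) * Polynomial.X) ^ e)
        (Finset.mem_univ j)
    _ ∣ 1 := Dvd.intro_left P polynomial_identity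

end PartialProduct

section Reduction

open PowerSeries

variable {K : Type*} [NormedField K] [IsUltrametricDist K]

variable (K) in
/-- The valuation ring `{x | ‖x‖ ≤ 1}` of an ultrametric field, over which power series are reduced
to the residue field. Unlike `𝒪[K]` it does not require the norm to be nontrivial. -/
abbrev integerRing : ValuationSubring K := (NormedField.valuation (K := K)).valuationSubring

local notation "𝒪" => integerRing K

theorem mem_integerRing {x : K} : x ∈ 𝒪 ↔ ‖x‖ ≤ 1 := Iff.rfl

theorem residue_eq_zero_iff_norm_lt_one {x : 𝒪} : residue 𝒪 x = 0 ↔ ‖(x : K)‖ < 1 :=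
  (IsLocalRing.residue_eq_zero_iff x).trans NormedField.valuation.mem_maximalIdeal_iff

theorem exists_lift_of_tendsto {F : ℕ → (𝒪)⟦X⟧} {H : K⟦X⟧} {G : (ResidueField 𝒪)⟦X⟧}
    (hlim : Tendsto (fun M ↦ map (𝒪).subtype (F M)) atTop (𝓝 H))
    (hF : ∀ M, map (residue 𝒪) (F M) = G) :
    ∃ E : (𝒪)⟦X⟧, map (𝒪).subtype E = H ∧ map (residue 𝒪) E = G := by
  have approx (n : ℕ) : ∃ M, ‖coeff n H - (coeff n (F M) : 𝒪)‖ < 1 := by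
    have hn := (WithPiTopology.tendsto_iff_coeff_tendsto K _ _ _).1 hlim n
    obtain ⟨M, hM⟩ := (hn.eventually (Metric.ball_mem_nhds _ one_pos)).exists
    exact ⟨M, by simpa [dist_eq_norm, norm_sub_rev] using hM⟩
  choose M hM using approx
  have integral (n : ℕ) : coeff n H ∈ 𝒪 := by
    simpa using add_mem (mem_integerRing.2 (hM n).le) (coeff n (F (M n))).2
  refine ⟨H.toSubring (𝒪).toSubring integral, H.map_toSubring _ integral, ?_⟩
  ext n
  rw [← hF (M n), coeff_map, coeff_map, ← sub_eq_zero, ← map_sub, residue_eq_zero_iff_norm_lt_one,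
    AddSubgroupClass.coe_sub, coeff_toSubring]
  exact hM n

theorem exists_lift_of_tendsto_partialProd {c : ℕ → ℕ} {q γ : K} (hq : ‖q‖ < 1) (hγ : ‖γ‖ ≤ 1)
    {H : K⟦X⟧} (hH : Tendsto (partialProd c q γ) atTop (𝓝 H)) :
    ∃ E : (𝒪)⟦X⟧, map (𝒪).subtype E = H ∧
      map (residue 𝒪) E = (1 - C (residue 𝒪 ⟨γ, hγ⟩) * X) ^ c 0 := by
  refine exists_lift_of_tendsto (F := partialProd c (⟨q, hq.le⟩ : 𝒪) ⟨γ, hγ⟩) ?_ fun M ↦ ?_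
  · simp only [map_partialProd]
    exact hH
  · rw [map_partialProd, residue_eq_zero_iff_norm_lt_one.2 hq, partialProd_zero_left]

theorem exists_polynomial_eq_map_residue {F : (𝒪)⟦X⟧}
    (hF : Tendsto (fun n ↦ ‖((coeff n F : 𝒪) : K)‖) atTop (𝓝 0)) :
    ∃ P : Polynomial (ResidueField 𝒪), map (residue 𝒪) F = P := by
  obtain ⟨N, hN⟩ := eventually_atTop.1 (hF.eventually (gt_mem_nhds one_pos))
  refine ⟨trunc N (map (residue 𝒪) F), ?_⟩
  ext n
  rw [Polynomial.coeff_coe, coeff_trunc]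
  split_ifs with h
  · rfl
  · exact residue_eq_zero_iff_norm_lt_one.2 (hN n (not_lt.1 h))

variable {ι κ : Type*} [Fintype ι] [Fintype κ] {q : K} {c : ℕ → ℕ} {α : ι → K} {β : κ → K}
  {Hα : ι → K⟦X⟧} {Hβ : κ → K⟦X⟧} {D : K⟦X⟧}

theorem norm_lt_one_of_mul_prod_eq_prod (hq : ‖q‖ < 1) (hc : c 0 ≠ 0)
    (hα : ∀ i, ‖α i‖ < 1) (hβ : ∀ j, ‖β j‖ ≤ 1)
    (hHα : ∀ i, Tendsto (partialProd c q (α i)) atTop (𝓝 (Hα i)))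
    (hHβ : ∀ j, Tendsto (partialProd c q (β j)) atTop (𝓝 (Hβ j)))
    (hD : D * ∏ j, Hβ j = ∏ i, Hα i)
    (hlim : Tendsto (fun n ↦ ‖coeff n D‖) atTop (𝓝 0)) (j : κ) : ‖β j‖ < 1 := by
  choose A hA hAred using fun i ↦ exists_lift_of_tendsto_partialProd hq (hα i).le (hHα i)
  choose B hB hBred using fun j ↦ exists_lift_of_tendsto_partialProd hq (hβ j) (hHβ j)
  have isUnit_prod_B : IsUnit (∏ j, B j) := by
    rw [← isUnit_map_iff (map (residue 𝒪)), isUnit_iff_constantCoeff]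
    simp [hBred]
  obtain ⟨E, hE⟩ : ∏ j, B j ∣ ∏ i, A i := isUnit_prod_B.dvd
  obtain rfl : map (𝒪).subtype E = D := by
    have isUnit_prod_Hβ : IsUnit (∏ j, Hβ j) := by
      simpa only [map_prod, hB] using isUnit_prod_B.map (map (𝒪).subtype)
    have lifted := congrArg (map (𝒪).subtype) hE
    simp only [map_mul, map_prod, hA, hB, ← hD] at lifted
    exact isUnit_prod_Hβ.mul_left_injective ((mul_comm _ _).trans lifted.symm)
  obtain ⟨P, hP⟩ := exists_polynomial_eq_map_residue (by simpa using hlim)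
  have residual_identity : (P : (ResidueField 𝒪)⟦X⟧) *
      ∏ j, (1 - C (residue 𝒪 ⟨β j, hβ j⟩) * X) ^ c 0 = 1 := by
    have residue_α (i : ι) : residue 𝒪 ⟨α i, (hα i).le⟩ = 0 :=
      residue_eq_zero_iff_norm_lt_one.2 (hα i)
    have reduced := congrArg (map (residue 𝒪)) hE
    simp only [map_prod, map_mul, hAred, hBred, hP, residue_α] at reduced
    rw [mul_comm, ← reduced]
    simp
  exact residue_eq_zero_iff_norm_lt_one.1
    (eq_zero_of_mul_prod_one_sub_C_mul_X_pow_eq_one hc residual_identity j)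

theorem exists_norm_le_norm_of_entire (hq : ‖q‖ < 1) (hc : c 0 ≠ 0)
    (hHα : ∀ i, Tendsto (partialProd c q (α i)) atTop (𝓝 (Hα i)))
    (hHβ : ∀ j, Tendsto (partialProd c q (β j)) atTop (𝓝 (Hβ j)))
    (hD : D * ∏ j, Hβ j = ∏ i, Hα i)
    (hent : ∀ M : ℝ, 0 < M → Tendsto (fun n ↦ ‖coeff n D‖ * M ^ n) atTop (𝓝 0))
    {j : κ} (hβj : β j ≠ 0) : ∃ i, ‖β j‖ ≤ ‖α i‖ := by
  by_contra! hlt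
  have : Nonempty κ := ⟨j⟩
  obtain ⟨j₀, hmax⟩ := Finite.exists_max fun j ↦ ‖β j‖
  have hpos : 0 < ‖β j₀‖ := (norm_pos_iff.2 hβj).trans_le (hmax j)
  let x := (β j₀)⁻¹
  have norm_mul_x (y : K) : ‖y * x‖ = ‖y‖ / ‖β j₀‖ := by
    rw [norm_mul, norm_inv, div_eq_mul_inv]
  have hlim : Tendsto (fun n ↦ ‖coeff n (rescale x D)‖) atTop (𝓝 0) := by
    simpa [mul_comm] using hent ‖x‖ (norm_pos_iff.2 (inv_ne_zero (norm_pos_iff.1 hpos)))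
  have hDx : rescale x D * ∏ j, rescale x (Hβ j) = ∏ i, rescale x (Hα i) := by
    simp only [← map_prod, ← map_mul, hD]
  have norm_lt_one : ‖β j₀ * x‖ < 1 :=
    norm_lt_one_of_mul_prod_eq_prod hq hc
      (fun i ↦ by rw [norm_mul_x, div_lt_one hpos]; exact (hlt i).trans_le (hmax j))
      (fun j ↦ by rw [norm_mul_x, div_le_one hpos]; exact hmax j)
      (fun i ↦ tendsto_partialProd_rescale (hHα i) x)
      (fun j ↦ tendsto_partialProd_rescale (hHβ j) x) hDx hlim j₀
  rw [norm_mul_x, div_self hpos.ne'] at norm_lt_one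
  exact lt_irrefl _ norm_lt_one

end Reduction

theorem exists_pow_mul_eq_of_norm_le {K : Type*} [NormedField K] {q x y : K} {τ : ℤ} (hq0 : q ≠ 0)
    (hq : ‖q‖ < 1) (hy : y ≠ 0) (hle : ‖x‖ ≤ ‖y‖) (h : x = q ^ τ * y) :
    ∃ n : ℕ, x = q ^ n * y := by
  have norm_zpow_le_one : ‖q‖ ^ τ ≤ 1 := by
    rwa [h, norm_mul, norm_zpow, mul_le_iff_le_one_left (norm_pos_iff.2 hy)] at hle
  have τ_nonneg : 0 ≤ τ := by
    contrapose! norm_zpow_le_one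
    exact one_lt_zpow_of_neg₀ (norm_pos_iff.2 hq0) hq norm_zpow_le_one
  obtain ⟨n, rfl⟩ := Int.eq_ofNat_of_zero_le τ_nonneg
  exact ⟨n, by simpa using h⟩

theorem bombieri_lemma_part2_general {K ι κ : Type*} [NormedField K] [IsUltrametricDist K]
    [Fintype ι] [Fintype κ] [Nonempty ι] {q : K} (hq0 : q ≠ 0) (hq : ‖q‖ < 1) {c : ℕ → ℕ}
    (hc : c 0 ≠ 0) {α : ι → K} {β : κ → K} (hα0 : ∀ i, α i ≠ 0) (hβ0 : ∀ j, β j ≠ 0)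
    (hrel : ∀ x ∈ Set.range α ∪ Set.range β, ∀ y ∈ Set.range α ∪ Set.range β,
      ∃ τ : ℤ, x = q ^ τ * y)
    (hne : ∀ i j, α i ≠ β j) {Hα : ι → PowerSeries K} {Hβ : κ → PowerSeries K}
    (hHα : ∀ i, Tendsto (partialProd c q (α i)) atTop (𝓝 (Hα i)))
    (hHβ : ∀ j, Tendsto (partialProd c q (β j)) atTop (𝓝 (Hβ j)))
    {D : PowerSeries K} (hD : D * ∏ j, Hβ j = ∏ i, Hα i)
    (hent : ∀ M : ℝ, 0 < M →
      Tendsto (fun n ↦ ‖PowerSeries.coeff n D‖ * M ^ n) atTop (𝓝 0)) :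
    ∃ i₀ : ι, ∃ mm : ι → ℕ, ∃ nn : κ → ℕ, (∀ j, 0 < nn j) ∧
      (∀ i, α i = q ^ mm i * α i₀) ∧ (∀ j, β j = q ^ nn j * α i₀) := by
  obtain ⟨i₀, hmax⟩ := Finite.exists_max fun i ↦ ‖α i‖
  have norm_β_le (j : κ) : ‖β j‖ ≤ ‖α i₀‖ :=
    let ⟨i, hi⟩ := exists_norm_le_norm_of_entire hq hc hHα hHβ hD hent (hβ0 j)
    hi.trans (hmax i)
  have exists_pow {x : K} (hx : x ∈ Set.range α ∪ Set.range β) (hle : ‖x‖ ≤ ‖α i₀‖) :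
      ∃ n : ℕ, x = q ^ n * α i₀ :=
    let ⟨_, hτ⟩ := hrel x hx (α i₀) (.inl ⟨i₀, rfl⟩)
    exists_pow_mul_eq_of_norm_le hq0 hq (hα0 i₀) hle hτ
  choose mm hmm using fun i ↦ exists_pow (.inl ⟨i, rfl⟩) (hmax i)
  choose nn hnn using fun j ↦ exists_pow (.inr ⟨j, rfl⟩) (norm_β_le j)
  refine ⟨i₀, mm, nn, fun j ↦ Nat.pos_of_ne_zero fun hj ↦ hne i₀ j ?_, hmm, hnn⟩
  rw [hnn j, hj, pow_zero, one_mul]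

theorem ConvergesTo.tendsto_partialProd {K : Type} [NormedField K] {v : AbsoluteValue K ℝ}
    (hv : ∀ x, v x = ‖x‖) {s : ℕ} {q γ : K} {H : PowerSeries K} (h : ConvergesTo v s q γ H) :
    Tendsto (partialProd (cbin s) q γ) atTop (𝓝 H) := by
  rw [PowerSeries.WithPiTopology.tendsto_iff_coeff_tendsto]
  refine fun n ↦ Metric.tendsto_atTop.2 fun ε hε ↦ (h n ε hε).imp fun M₀ hM₀ M hM ↦ ?_
  rw [dist_eq_norm, ← hv]
  exact hM₀ M hM

theorem absoluteValue_natCast_eq_inv {K : Type*} [DivisionRing K] {p : ℕ} (hp : 1 < p)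
    {v : AbsoluteValue K ℝ} (hv : ∀ r : ℚ, v r = (padicNorm p r : ℝ)) :
    v p = (p : ℝ)⁻¹ := by
  simpa [padicNorm.padicNorm_p hp] using hv p

theorem absoluteValue_natCast_mem_Ioo {K : Type*} [DivisionRing K] {p : ℕ} (hp : 1 < p)
    {v : AbsoluteValue K ℝ} (hv : ∀ r : ℚ, v r = (padicNorm p r : ℝ)) :
    v p ∈ Set.Ioo 0 1 := by
  rw [absoluteValue_natCast_eq_inv hp hv]
  exact ⟨inv_pos.2 (mod_cast zero_lt_one.trans hp), inv_lt_one_of_one_lt₀ (mod_cast hp)⟩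

/-- Bombieri-type lemma, part 2: if `D(T)` is entire, then there is a choice
`γ = α_{i₀}` such that `α_i = q^{m_i}·γ` with `m_i ≥ 0` and `β_j = q^{n_j}·γ` with `n_j ≥ 1`. -/
theorem bombieri_lemma_part2
    (p a s : ℕ) (hp : p.Prime) (ha : 1 ≤ a) (hs : 1 ≤ s)
    (K : Type) [Field K] (v : AbsoluteValue K ℝ)
    (hna : ∀ x y : K, v (x + y) ≤ max (v x) (v y))
    (hres : ∀ r : ℚ, v ((r : K)) = (padicNorm p r : ℝ))
    (hcompl : IsCompleteWrt v)
    (R S : ℕ) (hR : 1 ≤ R) (α : Fin R → K) (β : Fin S → K)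
    (hα0 : ∀ i, α i ≠ 0) (hβ0 : ∀ j, β j ≠ 0)
    (hrel : ∀ x ∈ Set.range α ∪ Set.range β, ∀ y ∈ Set.range α ∪ Set.range β,
      ∃ τ : ℤ, x = ((p : K) ^ a) ^ τ * y)
    (hne : ∀ i j, α i ≠ β j)
    (Hα : Fin R → PowerSeries K) (Hβ : Fin S → PowerSeries K)
    (hHα : ∀ i, ConvergesTo v s ((p : K) ^ a) (α i) (Hα i))
    (hHβ : ∀ j, ConvergesTo v s ((p : K) ^ a) (β j) (Hβ j))
    (D : PowerSeries K)
    (hD : D * ∏ j, Hβ j = ∏ i, Hα i)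
    (hent : IsEntireWrt v D) :
    ∃ i₀ : Fin R, ∃ mm : Fin R → ℕ, ∃ nn : Fin S → ℕ,
      (∀ j, 0 < nn j) ∧
      (∀ i, α i = ((p : K) ^ a) ^ mm i * α i₀) ∧
      (∀ j, β j = ((p : K) ^ a) ^ nn j * α i₀) := by
  let : NormedField K := v.toNormedField
  have : IsUltrametricDist K := .isUltrametricDist_of_forall_norm_add_le_max_norm hna
  have : Nonempty (Fin R) := ⟨⟨0, hR⟩⟩
  obtain ⟨p_pos, p_lt_one⟩ := absoluteValue_natCast_mem_Ioo hp.one_lt hres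
  have q_lt_one : v ((p : K) ^ a) < 1 := by
    rw [map_pow]
    exact pow_lt_one₀ p_pos.le p_lt_one (Nat.one_le_iff_ne_zero.1 ha)
  exact bombieri_lemma_part2_general (pow_ne_zero a (v.pos_iff.1 p_pos)) q_lt_one
    (c := cbin s) (by simp [cbin]) hα0 hβ0 hrel hne
    (fun i ↦ (hHα i).tendsto_partialProd fun _ ↦ rfl)
    (fun j ↦ (hHβ j).tendsto_partialProd fun _ ↦ rfl) hD hent

end HS
end
end

section
/- Lifting acyclicity through reduction (Theorem 3.3(1), Theorem A'): for any i with 0 ≤ i ≤ n, if H^i(C̄^•) = 0 then H^i(C^•) = 0. -/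
open scoped BigOperators

noncomputable section

namespace HS

/-- Transport an element of a ℤ-indexed family along an equality of indices. -/
def castC {C : ℤ → Type} {i j : ℤ} (h : i = j) (x : C i) : C j := h ▸ x

/-!
Let `Z` be the module of `i`-cocycles. Since `C^{i+1}` has no `ϖ`-torsion, a cocycle divisible
by `ϖ` is `ϖ` times a cocycle, so exactness of the reduction makes the coboundary map
`C^{i-1} → Z` surjective modulo `ϖ`. As `C^{i-1}` is `ϖ`-adically precomplete and `Z ⊆ C^i` is
`ϖ`-adically separated, successive approximation makes it surjective.
-/

section Adic

variable {R M N : Type*} [CommRing R] [AddCommGroup M] [Module R M] [AddCommGroup N] [Module R N]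

theorem isHausdorff_of_injective {I : Ideal R} [IsHausdorff I N] {f : M →ₗ[R] N}
    (hf : Function.Injective f) : IsHausdorff I M := by
  refine ⟨fun x hx ↦ hf ?_⟩
  rw [IsHausdorff.eq_iff_smodEq (I := I)]
  intro n
  refine ((hx n).map f).mono ?_
  rw [Submodule.map_smul'']
  exact smul_mono_right _ le_top

theorem range_eq_of_le_range_sup_smul {I : Ideal R} [IsPrecomplete I M] {f : M →ₗ[R] N}
    {P : Submodule R N} [IsHausdorff I P] (hf : f.range ≤ P) (hP : P ≤ f.range ⊔ I • P) :
    f.range = P := by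
  let f' : M →ₗ[R] P := f.codRestrict P fun x ↦ hf ⟨x, rfl⟩
  have hmod : Function.Surjective ((I • ⊤ : Submodule R P).mkQ ∘ₗ f') := by
    intro q
    obtain ⟨p, rfl⟩ := Submodule.mkQ_surjective _ q
    obtain ⟨_, ⟨x, rfl⟩, z, hz, hxz⟩ := Submodule.mem_sup.1 (hP p.2)
    refine ⟨x, ((Submodule.Quotient.eq _).2 ?_).symm⟩
    rw [Submodule.mem_smul_top_iff]
    simpa [f', ← hxz] using hz
  refine hf.antisymm fun p hp ↦ ?_
  obtain ⟨x, hx⟩ := surjective_of_mkQ_comp_surjective hmod ⟨p, hp⟩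
  exact ⟨x, congrArg Subtype.val hx⟩

variable {r : R}

theorem smodEq_span_singleton_pow_smul_top {n : ℕ} {x y : M} :
    x ≡ y [SMOD (Ideal.span {r} ^ n • ⊤ : Submodule R M)] ↔ ∃ z, x - y = r ^ n • z := by
  simp [SModEq.sub_mem, Ideal.span_singleton_pow, Submodule.ideal_span_singleton_smul,
    Submodule.mem_smul_pointwise_iff_exists, eq_comm]

theorem isHausdorff_span_singleton_iff :
    IsHausdorff (Ideal.span {r}) M ↔ ∀ x : M, (∀ k : ℕ, ∃ y, x = r ^ k • y) → x = 0 := by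
  simp only [isHausdorff_iff, smodEq_span_singleton_pow_smul_top, sub_zero]

theorem isPrecomplete_span_singleton_iff :
    IsPrecomplete (Ideal.span {r}) M ↔
      ∀ g : ℕ → M, (∀ k, ∃ y, g (k + 1) - g k = r ^ k • y) →
        ∃ x, ∀ k, ∃ y, x - g k = r ^ k • y := by
  simp only [← smodEq_span_singleton_pow_smul_top]
  refine isPrecomplete_iff.trans (forall_congr' fun g ↦ imp_congr ?_ ?_)
  · exact (AdicCompletion.isAdicCauchy_iff _ _ g).trans (forall_congr' fun _ ↦ SModEq.comm)
  · exact exists_congr fun _ ↦ forall_congr' fun _ ↦ SModEq.comm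

end Adic

section Reduction

open scoped Pointwise

variable {R A B E : Type*} [CommRing R] [AddCommGroup A] [AddCommGroup B] [AddCommGroup E]
  [Module R A] [Module R B] [Module R E] {r : R} {f : A →ₗ[R] B} {g : B →ₗ[R] E}

theorem smul_top_inf_ker_le_smul_ker (hr : IsSMulRegular E r) : r • ⊤ ⊓ g.ker ≤ r • g.ker :=
  smul_top_inf_eq_smul_of_isSMulRegular_on_quot <|
    hr.of_injective (g.ker.liftQ g le_rfl) <|
      LinearMap.ker_eq_bot.1 (g.ker.ker_liftQ_eq_bot g le_rfl le_rfl)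

theorem quotSMulTop_mk_eq_mk_iff {x y : B} :
    (Submodule.Quotient.mk x : QuotSMulTop r B) = Submodule.Quotient.mk y ↔
      ∃ z, x = y + r • z := by
  simp [Submodule.Quotient.eq, Submodule.mem_smul_pointwise_iff_exists, eq_sub_iff_add_eq',
    eq_comm]

theorem exact_quotSMulTop_map_iff (hgf : g ∘ₗ f = 0) :
    Function.Exact (QuotSMulTop.map r f) (QuotSMulTop.map r g) ↔
      ∀ x, (∃ z, g x = r • z) → ∃ y z, x = f y + r • z := by
  have hrange (x : B) : (Submodule.Quotient.mk x : QuotSMulTop r B) ∈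
      Set.range (QuotSMulTop.map r f) ↔ ∃ y z, x = f y + r • z := by
    simp only [Set.mem_range, (Submodule.Quotient.mk_surjective _).exists,
      QuotSMulTop.map_apply_mk, eq_comm (b := Submodule.Quotient.mk x), quotSMulTop_mk_eq_mk_iff]
  have hker (x : B) : QuotSMulTop.map r g (Submodule.Quotient.mk x) = 0 ↔ ∃ z, g x = r • z := by
    rw [QuotSMulTop.map_apply_mk, ← Submodule.Quotient.mk_zero]
    simp only [quotSMulTop_mk_eq_mk_iff, zero_add]
  simp only [Function.Exact, (Submodule.Quotient.mk_surjective _).forall, hker, hrange]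
  refine ⟨fun h x ↦ (h x).1, fun h x ↦ ⟨h x, ?_⟩⟩
  rintro ⟨y, z, rfl⟩
  have hgfy : g (f y) = 0 := LinearMap.congr_fun hgf y
  exact ⟨g z, by rw [map_add, map_smul, hgfy, zero_add]⟩

theorem acyclicity_lifts_general [IsPrecomplete (Ideal.span {r}) A]
    [IsHausdorff (Ideal.span {r}) B] (hr : IsSMulRegular E r) (hgf : g ∘ₗ f = 0)
    (hred : Function.Exact (QuotSMulTop.map r f) (QuotSMulTop.map r g)) :
    Function.Exact f g := by
  have hfg : f.range ≤ g.ker := LinearMap.range_le_ker_iff.2 hgf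
  have hmod : g.ker ≤ f.range ⊔ r • ⊤ := by
    intro x hx
    obtain ⟨y, z, rfl⟩ := (exact_quotSMulTop_map_iff hgf).1 hred x ⟨0, by simpa using hx⟩
    exact Submodule.add_mem_sup ⟨y, rfl⟩ (Submodule.smul_mem_pointwise_smul z r ⊤ trivial)
  have hker : g.ker ≤ f.range ⊔ Ideal.span {r} • g.ker := calc
    g.ker ≤ (f.range ⊔ r • ⊤) ⊓ g.ker := le_inf hmod le_rfl
    _ = f.range ⊔ r • ⊤ ⊓ g.ker := sup_inf_assoc_of_le _ hfg
    _ ≤ f.range ⊔ r • g.ker := sup_le_sup_left (smul_top_inf_ker_le_smul_ker hr) _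
    _ = f.range ⊔ Ideal.span {r} • g.ker := by rw [Submodule.ideal_span_singleton_smul]
  have : IsHausdorff (Ideal.span {r}) g.ker := isHausdorff_of_injective g.ker.injective_subtype
  exact LinearMap.exact_iff.2 (range_eq_of_le_range_sup_smul hfg hker).symm

end Reduction

section Cast

variable {O : Type*} [CommRing O] {C : ℤ → Type} [∀ j, AddCommGroup (C j)] [∀ j, Module O (C j)]

/-- `castC` as a linear map, used to view the differential out of `C (i - 1)` as a map into
`C i`. -/
def castLinearMap {i j : ℤ} (h : i = j) : C i →ₗ[O] C j where
  toFun := castC h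
  map_add' := by subst h; exact fun _ _ ↦ rfl
  map_smul' := by subst h; exact fun _ _ ↦ rfl

theorem comp_castLinearMap_comp_eq_zero {d : ∀ j : ℤ, C j →ₗ[O] C (j + 1)}
    (hd : ∀ (j : ℤ) (x : C j), d (j + 1) (d j x) = 0) {i j : ℤ} (h : i + 1 = j) :
    d j ∘ₗ castLinearMap h ∘ₗ d i = 0 := by
  subst h
  exact LinearMap.ext (hd i)

end Cast

/-- lifting acyclicity through reduction (Theorem A′, part 1).
`𝒪` is a ring with a nonzerodivisor `ϖ`, `ϖ`-adically separated and complete; `C^•` is a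
cochain complex (indexed by `ℤ`, trivial outside `0..n`) of flat, `ϖ`-adically separated
and complete `𝒪`-modules.  If the reduction `C̄^• = C^•/ϖC^•` is exact at `i`
(`H^i(C̄^•) = 0`), then `C^•` is exact at `i` (`H^i(C^•) = 0`). -/
theorem acyclicity_lifts
    (O : Type) [CommRing O] (ϖ : O)
    (hnzd : ∀ x : O, ϖ * x = 0 → x = 0)
    (hsep : ∀ x : O, (∀ k : ℕ, ∃ y, x = ϖ ^ k * y) → x = 0)
    (hcompl : ∀ g : ℕ → O, (∀ k, ∃ y, g (k + 1) - g k = ϖ ^ k * y) →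
      ∃ x, ∀ k, ∃ y, x - g k = ϖ ^ k * y)
    (n : ℕ) (C : ℤ → Type) [∀ j, AddCommGroup (C j)] [∀ j, Module O (C j)]
    (d : ∀ j : ℤ, C j →ₗ[O] C (j + 1))
    (hcx : ∀ (j : ℤ) (x : C j), d (j + 1) (d j x) = 0)
    (hbd : ∀ j : ℤ, j < 0 ∨ (n : ℤ) < j → Subsingleton (C j))
    (hflat : ∀ j, Module.Flat O (C j))
    (hCsep : ∀ (j : ℤ) (x : C j), (∀ k : ℕ, ∃ y, x = ϖ ^ k • y) → x = 0)
    (hCcompl : ∀ (j : ℤ) (g : ℕ → C j), (∀ k, ∃ y, g (k + 1) - g k = ϖ ^ k • y) →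
      ∃ x, ∀ k, ∃ y, x - g k = ϖ ^ k • y)
    (i : ℤ) (hi0 : 0 ≤ i) (hin : i ≤ (n : ℤ))
    (hred : ∀ x : C i, (∃ z, d i x = ϖ • z) →
      ∃ (y : C (i - 1)) (z : C i),
        x = castC (C := C) (show i - 1 + 1 = i by omega) (d (i - 1) y) + ϖ • z) :
    ∀ x : C i, d i x = 0 →
      ∃ y : C (i - 1), x = castC (C := C) (show i - 1 + 1 = i by omega) (d (i - 1) y) := by
  have hϖ : ϖ ∈ nonZeroDivisors O := mem_nonZeroDivisors_iff_left.2 hnzd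
  have := isPrecomplete_span_singleton_iff.2 (hCcompl (i - 1))
  have := isHausdorff_span_singleton_iff.2 (hCsep i)
  have hr : IsSMulRegular (C (i + 1)) ϖ := Module.Flat.isSMulRegular_of_nonZeroDivisors hϖ
  have hdd := comp_castLinearMap_comp_eq_zero hcx (sub_add_cancel i 1)
  have hexact := acyclicity_lifts_general hr hdd ((exact_quotSMulTop_map_iff hdd).2 hred)
  exact fun x hx ↦ ((hexact x).1 hx).imp fun _ ↦ Eq.symm

end HS
end
end

section
/- Weighted lattice-point asymptotics (equation (2.6) in the proof of Theorem 2.2(b)): as x → +∞, Σ_{(u,i) ∈ M(Γ)×I with b'·w(u)+c_i ≤ x} (x − b'·w(u) − c_i) = (|I| · vol(Γ) / ((s̃+1) · (b')^{s̃})) · x^{s̃+1} + O(x^{s̃}); that is, the difference between the left-hand side and the leading term is bounded in absolute value by a constant times x^{s̃} for all sufficiently large x. -/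
open scoped BigOperators Classical Pointwise

noncomputable section

namespace HS

/-!
Let `K` be the polytope, viewed as a convex body in its linear span `V`, and `D` a fundamental
domain of the lattice in `V`. Some dilate of `K` contains a ball large enough to absorb `D` and
`-D`, so by convexity the translates of `D` by the lattice points of `t • K` cover a translate of
`(t - a) • K` and lie in a translate of `(t + a) • K`. Comparing volumes bounds the number of
lattice points of `t • K` between `v * (t - a) ^ d` and `v * (t + a) ^ d`. The weighted sum is the
integral of the counting function of the values `b * w u + c i`. This function is a sum over `i` of
`t ↦ N ((t - c i) / b)`, where `N t` counts the lattice points of `t • K`, and bounds of the above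
shape survive the affine substitutions, the sum over `i` and the integration.
-/

open MeasureTheory Filter Asymptotics Topology

/-- The two-sided bound `v * (t - a) ^ d ≤ f t ≤ v * (t + a) ^ d` for all `t ≥ a`. Unlike the
estimate `f t = v * t ^ d + O(t ^ (d - 1))` it also carries the exact information needed when
`d = 0`, and it is stable under integration and affine substitution. -/
structure ShiftedPowBounds (f : ℝ → ℝ) (v a : ℝ) (d : ℕ) : Prop where
  coeff_nonneg : 0 ≤ v
  shift_pos : 0 < a
  lower : ∀ t, a ≤ t → v * (t - a) ^ d ≤ f t
  upper : ∀ t, a ≤ t → f t ≤ v * (t + a) ^ d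

namespace ShiftedPowBounds

variable {f g : ℝ → ℝ} {v a : ℝ} {d : ℕ}

lemma congr (hf : ShiftedPowBounds f v a d) (h : ∀ t, a ≤ t → f t = g t) :
    ShiftedPowBounds g v a d where
  coeff_nonneg := hf.coeff_nonneg
  shift_pos := hf.shift_pos
  lower t ht := h t ht ▸ hf.lower t ht
  upper t ht := h t ht ▸ hf.upper t ht

lemma tendsto_div_pow (hf : ShiftedPowBounds f v a d) :
    Tendsto (fun t => f t / t ^ d) atTop (𝓝 v) := by
  have hlim : Tendsto (fun t : ℝ => a / t) atTop (𝓝 0) := tendsto_const_nhds.div_atTop tendsto_id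
  have hlower : Tendsto (fun t => v * (1 - a / t) ^ d) atTop (𝓝 v) := by
    simpa using ((hlim.const_sub 1).pow d).const_mul v
  have hupper : Tendsto (fun t => v * (1 + a / t) ^ d) atTop (𝓝 v) := by
    simpa using ((hlim.const_add 1).pow d).const_mul v
  refine tendsto_of_tendsto_of_tendsto_of_le_of_le' hlower hupper ?_ ?_ <;>
    filter_upwards [eventually_ge_atTop a] with t ht <;>
    have ht₀ : 0 < t := hf.shift_pos.trans_le ht
  · rw [le_div_iff₀ (by positivity), mul_assoc, ← mul_pow, sub_mul, div_mul_cancel₀ _ ht₀.ne',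
      one_mul]
    exact hf.lower t ht
  · rw [div_le_iff₀ (by positivity), mul_assoc, ← mul_pow, add_mul, div_mul_cancel₀ _ ht₀.ne',
      one_mul]
    exact hf.upper t ht

lemma abs_sub_le (hf : ShiftedPowBounds f v a (d + 1)) {t : ℝ} (ht : a ≤ t) :
    |f t - v * t ^ (d + 1)| ≤ v * (a * (d + 1) * 2 ^ d) * t ^ d := by
  have ha := hf.shift_pos
  have ht₀ : 0 < t := ha.trans_le ht
  have abs_pow_sub_le {s : ℝ} (hs₀ : 0 ≤ s) (hs : s ≤ 2 * t) (hst : |s - t| = a) :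
      |s ^ (d + 1) - t ^ (d + 1)| ≤ a * (d + 1) * 2 ^ d * t ^ d := by
    have hmax : max |s| |t| ≤ 2 * t := by
      rw [abs_of_nonneg hs₀, abs_of_pos ht₀]
      exact max_le hs (by linarith)
    calc |s ^ (d + 1) - t ^ (d + 1)| ≤ a * (d + 1) * max |s| |t| ^ d := by
          simpa [hst] using abs_pow_sub_pow_le s t (d + 1)
      _ ≤ a * (d + 1) * (2 * t) ^ d := by gcongr
      _ = a * (d + 1) * 2 ^ d * t ^ d := by rw [mul_pow]; ring
  have hplus := abs_pow_sub_le (s := t + a) (by positivity) (by linarith) (by simp [ha.le])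
  have hminus := abs_pow_sub_le (s := t - a) (by linarith) (by linarith) (by simp [ha.le])
  rw [abs_le]
  constructor
  · nlinarith [hf.lower t ht, mul_le_mul_of_nonneg_left (abs_le.1 hminus).1 hf.coeff_nonneg]
  · nlinarith [hf.upper t ht, mul_le_mul_of_nonneg_left (abs_le.1 hplus).2 hf.coeff_nonneg]

lemma isBigO (hf : ShiftedPowBounds f v a (d + 1)) :
    (fun t => f t - v * t ^ (d + 1)) =O[atTop] fun t : ℝ => t ^ d := by
  refine IsBigO.of_bound (v * (a * (d + 1) * 2 ^ d)) ?_
  filter_upwards [eventually_ge_atTop a] with t ht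
  have ht₀ : 0 ≤ t := hf.shift_pos.le.trans ht
  rw [Real.norm_eq_abs, Real.norm_of_nonneg (by positivity)]
  exact hf.abs_sub_le ht

lemma integral (hf : ShiftedPowBounds f v a d)
    (hint : ∀ x, IntervalIntegrable f volume a x) :
    ShiftedPowBounds (fun x => ∫ t in a..x, f t) (v / (d + 1)) a (d + 1) where
  coeff_nonneg := div_nonneg hf.coeff_nonneg (by positivity)
  shift_pos := hf.shift_pos
  lower x hx := by
    calc v / (d + 1) * (x - a) ^ (d + 1) = ∫ t in a..x, v * (t - a) ^ d := by
          rw [intervalIntegral.integral_const_mul,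
            intervalIntegral.integral_comp_sub_right (fun t => t ^ d), integral_pow]
          simp
          ring
      _ ≤ ∫ t in a..x, f t :=
          intervalIntegral.integral_mono_on hx
            (Continuous.intervalIntegrable (by fun_prop) _ _) (hint x) fun t ht => hf.lower t ht.1
  upper x hx := by
    have ha := hf.shift_pos
    have hv := hf.coeff_nonneg
    calc ∫ t in a..x, f t ≤ ∫ t in a..x, v * (t + a) ^ d :=
          intervalIntegral.integral_mono_on hx (hint x)
            (Continuous.intervalIntegrable (by fun_prop) _ _) fun t ht => hf.upper t ht.1
      _ = v / (d + 1) * ((x + a) ^ (d + 1) - (a + a) ^ (d + 1)) := by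
          rw [intervalIntegral.integral_const_mul,
            intervalIntegral.integral_comp_add_right (fun t => t ^ d), integral_pow]
          ring
      _ ≤ v / (d + 1) * (x + a) ^ (d + 1) := by
          gcongr
          exact sub_le_self _ (by positivity)

lemma comp_sub_div (hf : ShiftedPowBounds f v a d) {b c C : ℝ} (hb : 0 < b) (hc : |c| ≤ C) :
    ShiftedPowBounds (fun x => f ((x - c) / b)) (v / b ^ d) (b * a + C) d := by
  have hv := hf.coeff_nonneg
  have ha := hf.shift_pos
  have hC : 0 ≤ C := (abs_nonneg c).trans hc
  obtain ⟨hc₁, hc₂⟩ := abs_le.1 hc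
  have le_arg {x : ℝ} (hx : b * a + C ≤ x) : a ≤ (x - c) / b := by
    rw [le_div_iff₀ hb]
    linarith
  refine ⟨by positivity, by positivity, fun x hx => ?_, fun x hx => ?_⟩
  · refine le_trans ?_ (hf.lower _ (le_arg hx))
    rw [div_mul_eq_mul_div, mul_div_assoc, ← div_pow]
    have harg : (x - (b * a + C)) / b ≤ (x - c) / b - a := by
      rw [div_sub' hb.ne']
      exact div_le_div_of_nonneg_right (by linarith) hb.le
    have : 0 ≤ (x - (b * a + C)) / b := div_nonneg (by linarith) hb.le
    gcongr
  · refine (hf.upper _ (le_arg hx)).trans ?_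
    rw [div_mul_eq_mul_div, mul_div_assoc, ← div_pow]
    gcongr
    · linarith [le_arg hx]
    · rw [div_add' _ _ _ hb.ne']
      exact div_le_div_of_nonneg_right (by linarith) hb.le

lemma sum {I : Type*} {s : Finset I} {f : I → ℝ → ℝ} {v : I → ℝ} (ha : 0 < a)
    (hf : ∀ i ∈ s, ShiftedPowBounds (f i) (v i) a d) :
    ShiftedPowBounds (fun t => ∑ i ∈ s, f i t) (∑ i ∈ s, v i) a d where
  coeff_nonneg := Finset.sum_nonneg fun i hi => (hf i hi).coeff_nonneg
  shift_pos := ha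
  lower t ht := by
    rw [Finset.sum_mul]
    exact Finset.sum_le_sum fun i hi => (hf i hi).lower t ht
  upper t ht := by
    rw [Finset.sum_mul]
    exact Finset.sum_le_sum fun i hi => (hf i hi).upper t ht

end ShiftedPowBounds

section WeightedCount

variable {α : Type*} {A : Set α} {w : α → ℝ}

/-- The points of `A` of weight at most `t`. -/
def sublevel (A : Set α) (w : α → ℝ) (t : ℝ) : Set α :=
  {p | p ∈ A ∧ w p ≤ t}

/-- The number of points of `A` of weight at most `t` (`0` if there are infinitely many). -/
def weightCount (A : Set α) (w : α → ℝ) (t : ℝ) : ℝ :=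
  ((sublevel A w t).ncard : ℝ)

/-- The sum of the excesses `x - w p` over the points `p` of `A` of weight at most `x`
(`0` if infinitely many terms are nonzero). -/
def weightSum (A : Set α) (w : α → ℝ) (x : ℝ) : ℝ :=
  ∑ᶠ (p : α) (_ : p ∈ sublevel A w x), (x - w p)

lemma weightCount_mono (hfin : ∀ t, (sublevel A w t).Finite) : Monotone (weightCount A w) := by
  intro s t hst
  have hsub : sublevel A w s ⊆ sublevel A w t := fun _ hp => ⟨hp.1, hp.2.trans hst⟩
  exact Nat.cast_le.2 (Set.ncard_le_ncard hsub (hfin t))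

lemma sublevel_eq_coe_filter {F : Finset α} {t x : ℝ} (hF : (F : Set α) = sublevel A w x)
    (ht : t ≤ x) : sublevel A w t = ↑(F.filter fun p => w p ≤ t) := by
  ext p
  have hp : p ∈ F ↔ p ∈ A ∧ w p ≤ x := by rw [← Finset.mem_coe, hF]; rfl
  rw [Finset.mem_coe, Finset.mem_filter, hp]
  exact ⟨fun h => ⟨⟨h.1, h.2.trans ht⟩, h.2⟩, fun h => ⟨h.1.1, h.2⟩⟩

lemma weightCount_eq_sum_indicator (hfin : ∀ t, (sublevel A w t).Finite) {t x : ℝ} (ht : t ≤ x) :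
    weightCount A w t = ∑ p ∈ (hfin x).toFinset, (Set.Ici (w p)).indicator 1 t := by
  rw [weightCount, sublevel_eq_coe_filter (hfin x).coe_toFinset ht, Set.ncard_coe_finset]
  simp [Set.indicator_apply, Finset.sum_boole]

lemma weightSum_eq_sum_max (hfin : ∀ t, (sublevel A w t).Finite) {t x : ℝ} (ht : t ≤ x) :
    weightSum A w t = ∑ p ∈ (hfin x).toFinset, max (t - w p) 0 := by
  rw [weightSum, sublevel_eq_coe_filter (hfin x).coe_toFinset ht, finsum_mem_coe_finset,
    Finset.sum_filter]
  refine Finset.sum_congr rfl fun p _ => ?_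
  split_ifs with h
  · exact (max_eq_left (sub_nonneg.2 h)).symm
  · exact (max_eq_right (sub_nonpos.2 (not_le.1 h).le)).symm

lemma integral_indicator_Ici_one {a x : ℝ} (h : a ≤ x) (r : ℝ) :
    ∫ t in a..x, (Set.Ici r).indicator 1 t = max (x - r) 0 - max (a - r) 0 := by
  have hIoi : (Set.Ici r).indicator (1 : ℝ → ℝ) =ᵐ[volume.restrict (Set.Ioc a x)]
      (Set.Ioi r).indicator 1 :=
    ae_restrict_of_ae (indicator_ae_eq_of_ae_eq_set Ioi_ae_eq_Ici.symm)
  calc ∫ t in a..x, (Set.Ici r).indicator 1 t = max (x - max a r) 0 := by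
        rw [intervalIntegral.integral_of_le h, integral_congr_ae hIoi,
          setIntegral_indicator measurableSet_Ioi, Set.Ioc_inter_Ioi]
        simp [Real.volume_real_Ioc]
    _ = max (x - r) 0 - max (a - r) 0 := by grind

/-- Each point `p` is counted by `weightCount` during the time `x - w p` (or `x - a` if it is
already counted at time `a`). -/
lemma integral_weightCount (hfin : ∀ t, (sublevel A w t).Finite) {a x : ℝ} (h : a ≤ x) :
    ∫ t in a..x, weightCount A w t = weightSum A w x - weightSum A w a := by
  calc ∫ t in a..x, weightCount A w t
      = ∫ t in a..x, ∑ p ∈ (hfin x).toFinset, (Set.Ici (w p)).indicator 1 t := by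
        refine intervalIntegral.integral_congr fun t ht => ?_
        rw [Set.uIcc_of_le h] at ht
        exact weightCount_eq_sum_indicator hfin ht.2
    _ = ∑ p ∈ (hfin x).toFinset, ∫ t in a..x, (Set.Ici (w p)).indicator 1 t := by
        refine intervalIntegral.integral_finsetSum fun p _ => ?_
        rw [intervalIntegrable_iff]
        exact (integrableOn_const (by simp)).indicator measurableSet_Ici
    _ = weightSum A w x - weightSum A w a := by
        rw [weightSum_eq_sum_max hfin (le_refl x), weightSum_eq_sum_max hfin h,
          ← Finset.sum_sub_distrib]
        simp only [integral_indicator_Ici_one h]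

theorem weightSum_isBigO (hfin : ∀ t, (sublevel A w t).Finite) {v a : ℝ} {d : ℕ}
    (hcount : ShiftedPowBounds (weightCount A w) v a d) :
    (fun x => weightSum A w x - v / (d + 1) * x ^ (d + 1)) =O[atTop] fun x : ℝ => x ^ d := by
  have hincrement : ShiftedPowBounds (fun x => weightSum A w x - weightSum A w a)
      (v / (d + 1)) a (d + 1) :=
    (hcount.integral fun _ => (weightCount_mono hfin).intervalIntegrable).congr
      fun _ hx => integral_weightCount hfin hx
  have hconst : (fun _ : ℝ => weightSum A w a) =O[atTop] fun x : ℝ => x ^ d := by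
    refine IsBigO.of_bound |weightSum A w a| ?_
    filter_upwards [eventually_ge_atTop 1] with x hx
    have : 1 ≤ ‖x ^ d‖ := (one_le_pow₀ hx).trans (le_abs_self _)
    simpa using le_mul_of_one_le_right (abs_nonneg _) this
  exact (hincrement.isBigO.add hconst).congr_left fun x => by ring

variable {I : Type*} {b : ℝ}

/-- The sublevel set of `(p, i) ↦ b * w p + c i` consists of one rescaled sublevel set of `w` for
each `i`. -/
def sublevelProdEquiv (A : Set α) (w : α → ℝ) (hb : 0 < b) (c : I → ℝ) (x : ℝ) :
    sublevel {q : α × I | q.1 ∈ A} (fun q => b * w q.1 + c q.2) x ≃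
      Σ i, sublevel A w ((x - c i) / b) :=
  have hle (p : α) (i : I) : b * w p + c i ≤ x ↔ w p ≤ (x - c i) / b := by
    rw [le_div_iff₀' hb, le_sub_iff_add_le]
  { toFun q := ⟨q.1.2, q.1.1, q.2.1, (hle _ _).1 q.2.2⟩
    invFun r := ⟨(r.2.1, r.1), r.2.2.1, (hle _ _).2 r.2.2.2⟩ }

lemma finite_sublevel_prod [Finite I] (hb : 0 < b) (c : I → ℝ)
    (hfin : ∀ t, (sublevel A w t).Finite) (x : ℝ) :
    (sublevel {q : α × I | q.1 ∈ A} (fun q => b * w q.1 + c q.2) x).Finite :=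
  have (t : ℝ) : Finite (sublevel A w t) := hfin t
  Finite.of_equiv _ (sublevelProdEquiv A w hb c x).symm

lemma weightCount_prod [Fintype I] (hb : 0 < b) (c : I → ℝ)
    (hfin : ∀ t, (sublevel A w t).Finite) (x : ℝ) :
    weightCount {q : α × I | q.1 ∈ A} (fun q => b * w q.1 + c q.2) x =
      ∑ i, weightCount A w ((x - c i) / b) := by
  have (t : ℝ) : Finite (sublevel A w t) := hfin t
  simp only [weightCount, ← Nat.card_coe_set_eq]
  rw [Nat.card_congr (sublevelProdEquiv A w hb c x), Nat.card_sigma, Nat.cast_sum]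

lemma exists_shiftedPowBounds_weightCount_prod [Fintype I] (hb : 0 < b) (c : I → ℝ)
    (hfin : ∀ t, (sublevel A w t).Finite) {v a : ℝ} {d : ℕ}
    (hcount : ShiftedPowBounds (weightCount A w) v a d) :
    ∃ a', ShiftedPowBounds (weightCount {q : α × I | q.1 ∈ A} fun q => b * w q.1 + c q.2)
      (Fintype.card I * v / b ^ d) a' d := by
  have ha := hcount.shift_pos
  have hc (i : I) : |c i| ≤ ∑ j, |c j| :=
    Finset.single_le_sum (f := fun j => |c j|) (fun j _ => abs_nonneg _) (Finset.mem_univ i)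
  refine ⟨b * a + ∑ j, |c j|, ?_⟩
  have hsum := ShiftedPowBounds.sum (s := Finset.univ) (by positivity)
    fun i _ => hcount.comp_sub_div hb (hc i)
  simpa [← weightCount_prod hb c hfin, mul_div_assoc] using hsum

end WeightedCount

section FundamentalDomain

variable {G α : Type*} [AddGroup G] [Countable G] [AddAction G α] [MeasurableSpace α]
  [MeasurableConstVAdd G α] {μ : Measure α} [VAddInvariantMeasure G α μ] {D A : Set α} {Z : Set G}

lemma measure_le_encard_mul (hD : IsAddFundamentalDomain G D μ)
    (hZ : ∀ g : G, (A ∩ (g +ᵥ D)).Nonempty → g ∈ Z) : μ A ≤ Z.encard * μ D := by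
  calc μ A = ∑' g : G, μ (A ∩ (g +ᵥ D)) := hD.measure_eq_tsum' A
    _ ≤ ∑' g : G, Z.indicator (fun _ => μ D) g := by
        refine ENNReal.tsum_le_tsum fun g => ?_
        by_cases hg : g ∈ Z
        · rw [Set.indicator_of_mem hg, ← measure_vadd μ g D]
          exact measure_mono Set.inter_subset_right
        · rw [Set.not_nonempty_iff_eq_empty.1 (mt (hZ g) hg), measure_empty]
          exact zero_le
    _ = Z.encard * μ D := by rw [← tsum_subtype, ENNReal.tsum_set_const]

lemma encard_mul_le_measure (hD : IsAddFundamentalDomain G D μ) (hZ : ∀ g ∈ Z, g +ᵥ D ⊆ A) :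
    Z.encard * μ D ≤ μ A := by
  calc Z.encard * μ D = ∑' g : G, Z.indicator (fun _ => μ D) g := by
        rw [← tsum_subtype, ENNReal.tsum_set_const]
    _ ≤ ∑' g : G, μ (A ∩ (g +ᵥ D)) := by
        refine ENNReal.tsum_le_tsum (Set.indicator_le fun g hg => ?_)
        rw [Set.inter_eq_right.2 (hZ g hg), measure_vadd]
    _ = μ A := (hD.measure_eq_tsum' A).symm

end FundamentalDomain

section LatticePointsInDilates

variable {E : Type*} [NormedAddCommGroup E] [NormedSpace ℝ E]

lemma exists_closedBall_subset_smul {K : Set E} (hK : (interior K).Nonempty) {R : ℝ} (hR : 0 < R) :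
    ∃ a : ℝ, 0 < a ∧ ∃ q, Metric.closedBall q R ⊆ a • K := by
  obtain ⟨p, hp⟩ := hK
  obtain ⟨ρ, hρ, hball⟩ :=
    Metric.nhds_basis_closedBall.mem_iff.1 (mem_interior_iff_mem_nhds.1 hp)
  have ha : 0 < R / ρ := div_pos hR hρ
  refine ⟨R / ρ, ha, (R / ρ) • p, ?_⟩
  calc Metric.closedBall ((R / ρ) • p) R = (R / ρ) • Metric.closedBall p ρ := by
        rw [smul_closedBall _ _ hρ.le, Real.norm_of_nonneg ha.le, div_mul_cancel₀ _ hρ.ne']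
    _ ⊆ (R / ρ) • K := Set.smul_set_mono hball

section Translates

variable [MeasurableSpace E] [MeasurableAdd E] {μ : Measure E} [μ.IsAddLeftInvariant]
  {L : AddSubgroup E} [Countable L] {K D : Set E} {q : E} {R a t : ℝ}

lemma measure_smul_le_encard_mul (hK : Convex ℝ K) (hD : IsAddFundamentalDomain L D μ)
    (hDR : ∀ x ∈ D, ‖x‖ ≤ R) (hq : Metric.closedBall q R ⊆ a • K) (ha : 0 ≤ a) (hat : a ≤ t) :
    μ ((t - a) • K) ≤ (t • K ∩ L).encard * μ D := by
  have hmem (g : L) (hg : ((q +ᵥ (t - a) • K) ∩ (g +ᵥ D)).Nonempty) :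
      g ∈ ((↑) : L → E) ⁻¹' (t • K ∩ L) := by
    obtain ⟨x, ⟨y, hy, hyx⟩, z, hz, hzx⟩ := hg
    have hqz : q - z ∈ a • K := hq (by simpa [dist_eq_norm] using hDR z hz)
    have hsum : (g : E) = y + (q - z) := by
      have : q + y = g + z := hyx.trans hzx.symm
      rw [← add_sub_assoc, eq_sub_iff_add_eq, ← this, add_comm]
    refine ⟨?_, g.2⟩
    rw [hsum, ← sub_add_cancel t a, hK.add_smul (sub_nonneg.2 hat) ha]
    exact Set.add_mem_add hy hqz
  calc μ ((t - a) • K) = μ (q +ᵥ (t - a) • K) := (measure_vadd μ q _).symm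
    _ ≤ (((↑) : L → E) ⁻¹' (t • K ∩ L)).encard * μ D := measure_le_encard_mul hD hmem
    _ = (t • K ∩ L).encard * μ D := by
        rw [Set.encard_preimage_of_injective_subset_range Subtype.val_injective (by simp)]

lemma encard_mul_le_measure_smul (hK : Convex ℝ K) (hD : IsAddFundamentalDomain L D μ)
    (hDR : ∀ x ∈ D, ‖x‖ ≤ R) (hq : Metric.closedBall q R ⊆ a • K) (ha : 0 ≤ a) (ht : 0 ≤ t) :
    (t • K ∩ L).encard * μ D ≤ μ ((t + a) • K) := by
  have hsub (g : L) (hg : g ∈ ((↑) : L → E) ⁻¹' (t • K ∩ L)) : g +ᵥ D ⊆ -q +ᵥ (t + a) • K := by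
    rintro _ ⟨z, hz, rfl⟩
    have hqz : q + z ∈ a • K := hq (by simpa [dist_eq_norm] using hDR z hz)
    rw [hK.add_smul ht ha]
    refine ⟨g + (q + z), Set.add_mem_add hg.1 hqz, ?_⟩
    change -q + (g + (q + z)) = g + z
    abel
  calc (t • K ∩ L).encard * μ D
      = (((↑) : L → E) ⁻¹' (t • K ∩ L)).encard * μ D := by
        rw [Set.encard_preimage_of_injective_subset_range Subtype.val_injective (by simp)]
    _ ≤ μ (-q +ᵥ (t + a) • K) := encard_mul_le_measure hD hsub
    _ = μ ((t + a) • K) := measure_vadd μ (-q) _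

end Translates

theorem exists_shiftedPowBounds_ncard_smul [FiniteDimensional ℝ E] [MeasurableSpace E]
    [BorelSpace E] {K : Set E} (hK : Convex ℝ K) (hbdd : Bornology.IsBounded K)
    (hint : (interior K).Nonempty) (L : Submodule ℤ E) [DiscreteTopology L] [IsZLattice ℝ L]
    (μ : Measure E) [μ.IsAddHaarMeasure] :
    ∃ a, ShiftedPowBounds (fun t => ((t • K ∩ L).ncard : ℝ)) (μ.real K / ZLattice.covolume L μ) a
      (Module.finrank ℝ E) := by
  set basis := Module.Free.chooseBasis ℤ L
  set D := ZSpan.fundamentalDomain (basis.ofZLatticeBasis ℝ L)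
  have hD : IsAddFundamentalDomain L D μ := ZLattice.isAddFundamentalDomain basis μ
  obtain ⟨R, hR, hDR⟩ :=
    (ZSpan.fundamentalDomain_isBounded (basis.ofZLatticeBasis ℝ L)).exists_pos_norm_le
  obtain ⟨a, ha, q, hq⟩ := exists_closedBall_subset_smul hint hR
  have : Countable L.toAddSubgroup := inferInstanceAs (Countable L)
  have lower {t : ℝ} (hat : a ≤ t) : μ ((t - a) • K) ≤ (t • K ∩ L).encard * μ D :=
    measure_smul_le_encard_mul (L := L.toAddSubgroup) hK hD hDR hq ha.le hat
  have upper {t : ℝ} (hat : a ≤ t) : (t • K ∩ L).encard * μ D ≤ μ ((t + a) • K) :=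
    encard_mul_le_measure_smul (L := L.toAddSubgroup) hK hD hDR hq ha.le (ha.le.trans hat)
  have hcovol : 0 < ZLattice.covolume L μ := ZLattice.covolume_pos L μ
  have toReal_encard_mul {t : ℝ} : ((t • K ∩ L).encard * μ D).toReal =
      (t • K ∩ L).ncard * ZLattice.covolume L μ := by
    rw [ENNReal.toReal_mul, ZLattice.covolume_eq_measure_fundamentalDomain L μ hD]
    cases h : (t • K ∩ L).encard <;> simp [Set.ncard, h, Measure.real]
  have measure_smul {r : ℝ} (hr : 0 ≤ r) :
      (μ (r • K)).toReal = μ.real K * r ^ Module.finrank ℝ E := by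
    rw [Measure.addHaar_smul_of_nonneg μ hr, ENNReal.toReal_mul,
      ENNReal.toReal_ofReal (by positivity), mul_comm, Measure.real]
  have measure_ne_top (r : ℝ) : μ (r • K) ≠ ⊤ := (hbdd.smul₀ r).measure_lt_top.ne
  refine ⟨a, by positivity, ha, fun t hat => ?_, fun t hat => ?_⟩
  · rw [div_mul_eq_mul_div, div_le_iff₀ hcovol, ← measure_smul (sub_nonneg.2 hat),
      ← toReal_encard_mul]
    exact ENNReal.toReal_mono (ne_top_of_le_ne_top (measure_ne_top _) (upper hat)) (lower hat)
  · rw [div_mul_eq_mul_div, le_div_iff₀ hcovol, ← measure_smul (by linarith),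
      ← toReal_encard_mul]
    exact ENNReal.toReal_mono (measure_ne_top _) (upper hat)

end LatticePointsInDilates

section SpannedSubspace

variable {E : Type*} [NormedAddCommGroup E] [NormedSpace ℝ E]

lemma span_comap_subtype_eq_top {L : Submodule ℤ E} {S : Set E} (hSL : S ⊆ L) {V : Submodule ℝ E}
    (hS : Submodule.span ℝ S = V) :
    Submodule.span ℝ (ZLattice.comap ℝ L V.subtype : Set V) = ⊤ := by
  subst hS
  rw [eq_top_iff, ← Submodule.span_span_coe_preimage]
  exact Submodule.span_mono (Set.preimage_mono hSL)

variable [FiniteDimensional ℝ E]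

lemma interior_preimage_coe_span_nonempty {Γ : Set E} (hΓ : Convex ℝ Γ) (h0 : 0 ∈ Γ) :
    (interior ((↑) ⁻¹' Γ : Set (Submodule.span ℝ Γ))).Nonempty := by
  have hconv : Convex ℝ ((↑) ⁻¹' Γ : Set (Submodule.span ℝ Γ)) :=
    hΓ.linear_preimage (Submodule.span ℝ Γ).subtype
  rw [hconv.interior_nonempty_iff_affineSpan_eq_top]
  have h := affineSpan_insert_zero (k := ℝ) ((↑) ⁻¹' Γ : Set (Submodule.span ℝ Γ))
  rw [Set.insert_eq_of_mem (by simpa using h0), Submodule.span_span_coe_preimage] at h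
  exact SetLike.coe_injective h

theorem exists_shiftedPowBounds_ncard_smul_of_span_eq {Γ : Set E} (hΓ : Convex ℝ Γ)
    (hbdd : Bornology.IsBounded Γ) (h0 : 0 ∈ Γ) (L : Submodule ℤ E) [DiscreteTopology L]
    {S : Set E} (hSL : S ⊆ L) (hS : Submodule.span ℝ S = Submodule.span ℝ Γ) :
    ∃ v a, ShiftedPowBounds (fun t => ((t • Γ ∩ L).ncard : ℝ)) v a
      (Module.finrank ℝ (Submodule.span ℝ Γ)) := by
  set V := Submodule.span ℝ Γ
  set M := ZLattice.comap ℝ L V.subtype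
  have : DiscreteTopology M := ZLattice.comap_discreteTopology ℝ L
    V.subtype.continuous_of_finiteDimensional V.subtype_injective
  have : IsZLattice ℝ M := ⟨span_comap_subtype_eq_top hSL hS⟩
  have hbddV : Bornology.IsBounded ((↑) ⁻¹' Γ : Set V) :=
    (AntilipschitzWith.subtype_coe _).isBounded_preimage hbdd
  borelize ↥V
  obtain ⟨a, hcount⟩ := exists_shiftedPowBounds_ncard_smul (hΓ.linear_preimage V.subtype) hbddV
    (interior_preimage_coe_span_nonempty hΓ h0) M Measure.addHaar
  refine ⟨_, a, hcount.congr fun t ht => ?_⟩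
  have ht₀ : t ≠ 0 := (hcount.shift_pos.trans_le ht).ne'
  have hrange : t • Γ ∩ L ⊆ Set.range V.subtype := by
    rintro _ ⟨⟨γ, hγ, rfl⟩, -⟩
    simpa using V.smul_mem t (Submodule.subset_span hγ)
  rw [← Set.ncard_preimage_of_injective_subset_range V.subtype_injective hrange]
  congr 2
  ext x
  simp [Set.mem_smul_set_iff_inv_smul_mem₀ ht₀, M, ZLattice.coe_comap]

end SpannedSubspace

section Gauge

variable {E : Type*} [AddCommGroup E] [Module ℝ E] {K : Set E} {x : E} {r t : ℝ}

lemma mem_smul_of_gauge_lt (hK : StarConvex ℝ 0 K) (hr : 0 < r) (hx : x ∈ r • K)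
    (h : gauge K x < t) : x ∈ t • K := by
  have hne : {q : ℝ | 0 < q ∧ x ∈ q • K}.Nonempty := ⟨r, hr, hx⟩
  obtain ⟨q, ⟨hq, hxq⟩, hqt⟩ := exists_lt_of_csInf_lt hne h
  have ht : 0 < t := hq.trans hqt
  rw [Set.mem_smul_set_iff_inv_smul_mem₀ hq.ne'] at hxq
  rw [Set.mem_smul_set_iff_inv_smul_mem₀ ht.ne']
  have := hK.smul_mem hxq (t := q / t) (by positivity) ((div_le_one ht).2 hqt.le)
  rwa [smul_smul, div_mul_eq_mul_div, mul_inv_cancel₀ hq.ne', one_div] at this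

variable [TopologicalSpace E] [ContinuousSMul ℝ E]

lemma mem_smul_iff_gauge_le (hK : StarConvex ℝ 0 K) (hcl : IsClosed K) (hr : 0 < r)
    (hx : x ∈ r • K) (ht : 0 < t) : x ∈ t • K ↔ gauge K x ≤ t := by
  refine ⟨gauge_le_of_mem ht.le, fun h => ?_⟩
  rw [Set.mem_smul_set_iff_inv_smul_mem₀ ht.ne']
  have hlim : Tendsto (fun q : ℝ => q⁻¹ • x) (𝓝[>] t) (𝓝 (t⁻¹ • x)) :=
    ((tendsto_inv₀ ht.ne').mono_left nhdsWithin_le_nhds).smul_const x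
  refine hcl.mem_of_tendsto hlim ?_
  filter_upwards [self_mem_nhdsWithin] with q hq
  rw [← Set.mem_smul_set_iff_inv_smul_mem₀ (ht.trans hq).ne']
  exact mem_smul_of_gauge_lt hK hr hx (h.trans_lt hq)

end Gauge

section IntegralVectors

variable {s : ℕ}

lemma toR_injective : Function.Injective (toR : (Fin s → ℤ) → Fin s → ℝ) :=
  Function.Injective.comp_left Int.cast_injective

lemma coe_span_int_basisFun :
    (Submodule.span ℤ (Set.range (Pi.basisFun ℝ (Fin s))) : Set (Fin s → ℝ)) = Set.range toR := by
  ext x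
  rw [SetLike.mem_coe, Module.Basis.mem_span_iff_repr_mem, Set.mem_range]
  simp only [Pi.basisFun_repr, Set.mem_range, algebraMap_int_eq, eq_intCast, toR, funext_iff]
  exact Classical.skolem

lemma finite_toR_preimage {K : Set (Fin s → ℝ)} (hK : IsCompact K) : (toR ⁻¹' K).Finite := by
  have hemb : IsClosedEmbedding (toR : (Fin s → ℤ) → Fin s → ℝ) :=
    .piMap fun _ => Int.isClosedEmbedding_coe_real
  exact (hemb.isCompact_preimage hK).finite_of_discrete

theorem exists_span_image_toR_eq (T : Set (Fin s → ℚ)) :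
    ∃ S : Set (Fin s → ℤ), Submodule.span ℝ (toR '' S) =
      Submodule.span ℝ ((fun (v : Fin s → ℚ) i => (v i : ℝ)) '' T) := by
  have clear_denominators (v : Fin s → ℚ) :
      ∃ (N : ℝ) (u : Fin s → ℤ), N ≠ 0 ∧ toR u = N • fun i => (v i : ℝ) := by
    obtain ⟨N, hN⟩ := IsLocalization.exist_integer_multiples_of_finite (nonZeroDivisors ℤ) v
    choose u hu using hN
    refine ⟨(N : ℤ), u, by simp, funext fun i => ?_⟩
    have := congr_arg (Rat.cast : ℚ → ℝ) (hu i)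
    simpa [toR] using this
  choose N u hN hu using clear_denominators
  refine ⟨u '' T, le_antisymm (Submodule.span_le.2 ?_) (Submodule.span_le.2 ?_)⟩
  · rintro _ ⟨_, ⟨v, hv, rfl⟩, rfl⟩
    rw [hu]
    exact Submodule.smul_mem _ _ (Submodule.subset_span ⟨v, hv, rfl⟩)
  · rintro _ ⟨v, hv, rfl⟩
    rw [SetLike.mem_coe, ← Submodule.smul_mem_iff _ (hN v), ← hu]
    exact Submodule.subset_span ⟨u v, ⟨v, hv, rfl⟩, rfl⟩

end IntegralVectors

section ConeOverConvexSet

variable {s : ℕ} {Γ : Set (Fin s → ℝ)}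

lemma mem_coneOf_and_gauge_le_iff (hΓ : StarConvex ℝ 0 Γ) (hcl : IsClosed Γ) (h0 : 0 ∈ Γ) {t : ℝ}
    (ht : 0 < t) {x : Fin s → ℝ} : x ∈ coneOf Γ ∧ gauge Γ x ≤ t ↔ x ∈ t • Γ := by
  constructor
  · rintro ⟨⟨r, hr, γ, hγ, rfl⟩, h⟩
    rcases hr.eq_or_lt with rfl | hr
    · exact ⟨0, h0, by simp⟩
    · exact (mem_smul_iff_gauge_le hΓ hcl hr ⟨γ, hγ, rfl⟩ ht).2 h
  · rintro ⟨γ, hγ, rfl⟩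
    exact ⟨⟨t, ht.le, γ, hγ, rfl⟩, gauge_le_of_mem ht.le ⟨γ, hγ, rfl⟩⟩

lemma sublevel_coneOf_gauge (hΓ : StarConvex ℝ 0 Γ) (hcl : IsClosed Γ) (h0 : 0 ∈ Γ) {t : ℝ}
    (ht : 0 < t) :
    sublevel {u | toR u ∈ coneOf Γ} (fun u => gauge Γ (toR u)) t = toR ⁻¹' (t • Γ) :=
  Set.ext fun _ => mem_coneOf_and_gauge_le_iff hΓ hcl h0 ht

lemma finite_sublevel_coneOf_gauge (hΓ : StarConvex ℝ 0 Γ) (hcomp : IsCompact Γ) (h0 : 0 ∈ Γ)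
    (t : ℝ) : (sublevel {u | toR u ∈ coneOf Γ} (fun u => gauge Γ (toR u)) t).Finite := by
  have hmax : 0 < max t 1 := lt_max_of_lt_right one_pos
  refine (finite_toR_preimage (hcomp.smul (max t 1))).subset ?_
  rw [← sublevel_coneOf_gauge hΓ hcomp.isClosed h0 hmax]
  exact fun u hu => ⟨hu.1, hu.2.trans (le_max_left _ _)⟩

lemma exists_shiftedPowBounds_ncard_toR_preimage (hΓ : Convex ℝ Γ) (hbdd : Bornology.IsBounded Γ)
    (h0 : 0 ∈ Γ) {S : Set (Fin s → ℤ)}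
    (hS : Submodule.span ℝ (toR '' S) = Submodule.span ℝ Γ) :
    ∃ a, ShiftedPowBounds (fun t => ((toR ⁻¹' (t • Γ)).ncard : ℝ)) (latticeVol Γ (dimSpan Γ)) a
      (dimSpan Γ) := by
  obtain ⟨v, a, h⟩ := exists_shiftedPowBounds_ncard_smul_of_span_eq hΓ hbdd h0
    (Submodule.span ℤ (Set.range (Pi.basisFun ℝ (Fin s))))
    (coe_span_int_basisFun ▸ Set.image_subset_range _ _) hS
  have hcount : ShiftedPowBounds (fun t => ((toR ⁻¹' (t • Γ)).ncard : ℝ)) v a (dimSpan Γ) := by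
    refine h.congr fun t _ => ?_
    rw [coe_span_int_basisFun, ← Set.preimage_inter_range,
      Set.ncard_preimage_of_injective_subset_range toR_injective Set.inter_subset_right]
  have hvol : latticeVol Γ (dimSpan Γ) = v :=
    (hcount.tendsto_div_pow.comp tendsto_natCast_atTop_atTop).limUnder_eq
  exact ⟨a, hvol ▸ hcount⟩

theorem exists_shiftedPowBounds_weightCount_coneOf_gauge (hΓ : Convex ℝ Γ) (hcomp : IsCompact Γ)
    (h0 : 0 ∈ Γ) {S : Set (Fin s → ℤ)}
    (hS : Submodule.span ℝ (toR '' S) = Submodule.span ℝ Γ) :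
    ∃ a, ShiftedPowBounds (weightCount {u | toR u ∈ coneOf Γ} fun u => gauge Γ (toR u))
      (latticeVol Γ (dimSpan Γ)) a (dimSpan Γ) := by
  obtain ⟨a, h⟩ := exists_shiftedPowBounds_ncard_toR_preimage hΓ hcomp.isBounded h0 hS
  refine ⟨a, h.congr fun t ht => ?_⟩
  rw [weightCount, sublevel_coneOf_gauge (hΓ.starConvex h0) hcomp.isClosed h0
    (h.shift_pos.trans_le ht)]

end ConeOverConvexSet

lemma span_convexHull (𝕜 : Type*) {E : Type*} [Semiring 𝕜] [PartialOrder 𝕜] [AddCommMonoid E]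
    [Module 𝕜 E] (T : Set E) :
    Submodule.span 𝕜 (convexHull 𝕜 T) = Submodule.span 𝕜 T :=
  le_antisymm
    (Submodule.span_le.2 (convexHull_min Submodule.subset_span (Submodule.convex _)))
    (Submodule.span_mono (subset_convexHull 𝕜 T))

theorem weighted_lattice_point_asymptotics_general {s : ℕ} {Γ : Set (Fin s → ℝ)}
    (hconv : Convex ℝ Γ) (hcomp : IsCompact Γ) (h0 : 0 ∈ Γ)
    {S : Set (Fin s → ℤ)} (hS : Submodule.span ℝ (toR '' S) = Submodule.span ℝ Γ)
    {I : Type*} [Fintype I] {b : ℝ} (hb : 0 < b) (c : I → ℝ) :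
    (∀ x : ℝ, {ui : (Fin s → ℤ) × I | toR ui.1 ∈ coneOf Γ ∧
        b * gauge Γ (toR ui.1) + c ui.2 ≤ x}.Finite) ∧
    ∃ C₀ x₀ : ℝ, 0 ≤ C₀ ∧ ∀ x : ℝ, x₀ ≤ x →
      |(∑ᶠ (ui : (Fin s → ℤ) × I) (_ : toR ui.1 ∈ coneOf Γ ∧
            b * gauge Γ (toR ui.1) + c ui.2 ≤ x),
          (x - (b * gauge Γ (toR ui.1) + c ui.2))) -
        (Fintype.card I : ℝ) * latticeVol Γ (dimSpan Γ) /
          (((dimSpan Γ : ℝ) + 1) * b ^ dimSpan Γ) * x ^ (dimSpan Γ + 1)|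
      ≤ C₀ * x ^ dimSpan Γ := by
  have hfin := finite_sublevel_coneOf_gauge (hconv.starConvex h0) hcomp h0
  have hfin_prod := finite_sublevel_prod hb c hfin
  obtain ⟨a, hcount⟩ := exists_shiftedPowBounds_weightCount_coneOf_gauge hconv hcomp h0 hS
  obtain ⟨a', hcount_prod⟩ := exists_shiftedPowBounds_weightCount_prod hb c hfin hcount
  obtain ⟨C₀, hC₀, hbound⟩ := (weightSum_isBigO hfin_prod hcount_prod).exists_nonneg
  obtain ⟨x₀, hx₀⟩ := eventually_atTop.1 hbound.bound
  refine ⟨hfin_prod, C₀, max x₀ 0, hC₀, fun x hx => ?_⟩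
  have hx0 : 0 ≤ x := (le_max_right _ _).trans hx
  have h := hx₀ x ((le_max_left _ _).trans hx)
  rw [Real.norm_eq_abs, Real.norm_of_nonneg (by positivity), div_div, mul_comm (b ^ _)] at h
  exact h

/-- weighted lattice-point asymptotics: as `x → +∞`,
`∑_{b'w(u)+c_i ≤ x} (x - b'w(u) - c_i) = (|I|·vol(Γ)/((s̃+1)·b'^{s̃}))·x^{s̃+1} + O(x^{s̃})`,
the sum being over the (finitely many) `(u,i) ∈ M(Γ) × I` with `b'·w(u) + c_i ≤ x`. -/
theorem weighted_lattice_point_asymptotics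
    (s : ℕ) (hs : 1 ≤ s) (Γ : Set (Fin s → ℝ))
    (hpoly : ∃ Vf : Finset (Fin s → ℚ),
      Γ = convexHull ℝ ((fun v : Fin s → ℚ => fun i => (v i : ℝ)) '' (Vf : Set (Fin s → ℚ))))
    (h0 : (0 : Fin s → ℝ) ∈ Γ) (hne : Γ ≠ {0})
    (I : Type) [Fintype I] [Nonempty I]
    (b' : ℚ) (hb' : 0 < b') (c : I → ℚ) (hc : ∀ i, 0 ≤ c i) :
    (∀ x : ℝ, {ui : (Fin s → ℤ) × I | toR ui.1 ∈ coneOf Γ ∧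
        (b' : ℝ) * gauge Γ (toR ui.1) + (c ui.2 : ℝ) ≤ x}.Finite) ∧
    ∃ C₀ x₀ : ℝ, 0 ≤ C₀ ∧ ∀ x : ℝ, x₀ ≤ x →
      |(∑ᶠ (ui : (Fin s → ℤ) × I) (_ : toR ui.1 ∈ coneOf Γ ∧
            (b' : ℝ) * gauge Γ (toR ui.1) + (c ui.2 : ℝ) ≤ x),
          (x - ((b' : ℝ) * gauge Γ (toR ui.1) + (c ui.2 : ℝ)))) -
        (Fintype.card I : ℝ) * latticeVol Γ (dimSpan Γ) /
          (((dimSpan Γ : ℝ) + 1) * (b' : ℝ) ^ dimSpan Γ) * x ^ (dimSpan Γ + 1)|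
      ≤ C₀ * x ^ dimSpan Γ := by
  obtain ⟨Vf, rfl⟩ := hpoly
  obtain ⟨S, hS⟩ := exists_span_image_toR_eq (Vf : Set (Fin s → ℚ))
  exact weighted_lattice_point_asymptotics_general (convex_convexHull ℝ _)
    ((Vf.finite_toSet.image _).isCompact_convexHull ℝ) h0
    (hS.trans (span_convexHull ℝ _).symm) (Rat.cast_pos.2 hb') fun i => c i

end HS
end
end
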